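/- arXiv:2402.11921 — 3 statements merged into one kernel-verified Lean document; each statement's English description precedes it below -/
import Mathlib

section
/- Let p ∈ (1/2,1], V ∈ C¹((0,1);(0,∞)), ρ ∈ C¹([0,1];(0,1)) and u₀ : (0,1) → [0,1] measurable. If u : (0,∞)×(0,1) → [0,1] is an entropy solution of ∂_t u + ∂_x J(u) + V(x)(u − ρ(x)) = 0 with initial datum u₀, then for every T > 0 one has the energy estimate ∫₀^T ∫₀¹ V(x) (u(t,x) − ρ(x))² dx dt < ∞. -/
/-!
Testing the entropy inequality for the quadratic entropy `u² / 2 + c u` against `ψ(t) χ(x)` and for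
the linear entropy `-u` against `ψ(t) (r(x) + c) χ(x)`, where `r` is smooth and close to `ρ` in `C¹`
and `c` makes `r + c` nonnegative, and adding the results, bounds `∬ V (u - ρ) (u - r) ψ χ`. The
entropy inequality only sees the spatial test function through its `W^{1,1}` norm, so the bound is
uniform in `r`, and `r → ρ` gives `∬ V (u - ρ)² ψ χ ≤ K ‖χ‖_{W^{1,1}}`. Cutoffs `χ` exhausting
`(0, 1)` can be chosen increasing and then decreasing between `0` and `1`, so their `W^{1,1}` norms
are at most `3`.
-/

open MeasureTheory Set Filter Topology

/-- The macroscopic flux `J(u) = (2p-1) u (1-u)`. -/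
noncomputable def fluxJ (p : ℝ) (u : ℝ) : ℝ := (2 * p - 1) * u * (1 - u)

/-- A Lax entropy–flux pair: `f, q ∈ C²(ℝ)`, `f'' ≥ 0` and `q' = J' · f'`. -/
def IsLaxPair (p : ℝ) (f q : ℝ → ℝ) : Prop :=
  ContDiff ℝ 2 f ∧ ContDiff ℝ 2 q ∧ (∀ u : ℝ, 0 ≤ deriv (deriv f) u) ∧
    ∀ u : ℝ, deriv q u = deriv (fluxJ p) u * deriv f u

/-- `u : (0,∞)×(0,1) → [0,1]` is an entropy solution of
`∂ₜ u + ∂ₓ J(u) + V(x)(u - ρ(x)) = 0` with initial datum `u₀` and boundary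
conditions `u(·,0) = ρ(0)`, `u(·,1) = ρ(1)`:  for every Lax entropy–flux pair
`(f,q)` and every nonnegative `φ ∈ C_c²(ℝ × (0,1))`,
`∫₀¹ f(u₀)φ(0,·) + ∬ [f(u)∂ₜφ + q(u)∂ₓφ] ≥ ∬ f'(u) V(x)(u-ρ(x)) φ`. -/
def IsEntropySolution (p : ℝ) (V ρ : ℝ → ℝ) (u₀ : ℝ → ℝ) (u : ℝ × ℝ → ℝ) : Prop :=
  Measurable u ∧ (∀ z : ℝ × ℝ, u z ∈ Icc (0 : ℝ) 1) ∧
    ∀ f q : ℝ → ℝ, IsLaxPair p f q →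
      ∀ φ : ℝ × ℝ → ℝ, ContDiff ℝ 2 φ → HasCompactSupport φ →
        (∀ z : ℝ × ℝ, 0 ≤ φ z) → (∀ z : ℝ × ℝ, z.2 ∉ Ioo (0 : ℝ) 1 → φ z = 0) →
        (∫ x in Ioo (0 : ℝ) 1, f (u₀ x) * φ (0, x))
            + (∫ z in Ioi (0 : ℝ) ×ˢ Ioo (0 : ℝ) 1,
                (f (u z) * deriv (fun s => φ (s, z.2)) z.1
                  + q (u z) * deriv (fun y => φ (z.1, y)) z.2))
          ≥ ∫ z in Ioi (0 : ℝ) ×ˢ Ioo (0 : ℝ) 1,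
              deriv f (u z) * (V z.2 * (u z - ρ z.2)) * φ z

open scoped ContDiff

/-- The `W^{1,1}(s)` norm `∫ₛ |g| + ∫ₛ |g'|` of a differentiable function `g`, the only quantity
through which the entropy inequality depends on a spatial test function. -/
noncomputable def w11Norm (s : Set ℝ) (g : ℝ → ℝ) : ℝ :=
  (∫ x in s, |g x|) + ∫ x in s, |deriv g x|

/-- The entropy `α y² / 2 + β y`. -/
noncomputable def quadEntropy (α β y : ℝ) : ℝ := α * (y ^ 2 / 2) + β * y

/-- The entropy flux associated with `quadEntropy α β`. -/
noncomputable def quadEntropyFlux (p α β y : ℝ) : ℝ :=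
  α * ((2 * p - 1) * (y ^ 2 / 2 - 2 * y ^ 3 / 3)) + β * fluxJ p y

section Integration

lemma integral_mul_le_of_abs_le {α : Type*} [MeasurableSpace α] {μ : Measure α} {h g : α → ℝ}
    {C : ℝ} (hg : Integrable g μ) (hC : ∀ᵐ x ∂μ, |h x| ≤ C) :
    ∫ x, h x * g x ∂μ ≤ C * ∫ x, |g x| ∂μ := by
  rw [← integral_const_mul]
  refine (Real.le_norm_self _).trans (norm_integral_le_of_norm_le (hg.abs.const_mul C) ?_)
  filter_upwards [hC] with x hx
  rw [norm_mul]
  exact mul_le_mul_of_nonneg_right hx (abs_nonneg _)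

lemma integrableOn_prod_mul {s t : Set ℝ} {f g : ℝ → ℝ} (hf : IntegrableOn f s)
    (hg : IntegrableOn g t) : IntegrableOn (fun z : ℝ × ℝ => f z.1 * g z.2) (s ×ˢ t) := by
  rw [IntegrableOn, Measure.volume_eq_prod, ← Measure.prod_restrict]
  exact Integrable.mul_prod hf hg

lemma setLIntegral_ofReal_le_ofReal_setIntegral {α : Type*} [MeasurableSpace α] {μ : Measure α}
    {s t : Set α} {f g : α → ℝ} (hs : MeasurableSet s) (ht : MeasurableSet t) (hst : s ⊆ t)
    (hg : IntegrableOn g t μ) (hg0 : ∀ x ∈ t, 0 ≤ g x) (hfg : ∀ x ∈ s, f x ≤ g x) :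
    ∫⁻ x in s, ENNReal.ofReal (f x) ∂μ ≤ ENNReal.ofReal (∫ x in t, g x ∂μ) :=
  calc ∫⁻ x in s, ENNReal.ofReal (f x) ∂μ
      ≤ ∫⁻ x in s, ENNReal.ofReal (g x) ∂μ :=
        setLIntegral_mono' hs fun x hx => ENNReal.ofReal_le_ofReal (hfg x hx)
    _ ≤ ∫⁻ x in t, ENNReal.ofReal (g x) ∂μ := lintegral_mono_set hst
    _ = ENNReal.ofReal (∫ x in t, g x ∂μ) :=
        (ofReal_integral_eq_lintegral_ofReal hg (ae_restrict_of_forall_mem ht hg0)).symm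

lemma setLIntegral_prod_Ioo_le_of_forall_Icc {α : Type*} [MeasurableSpace α]
    {μ : Measure (α × ℝ)} {s : Set α} {a b : ℝ} {f : α × ℝ → ENNReal} {K : ENNReal}
    (h : ∀ c d, a < c → d < b → ∫⁻ z in s ×ˢ Icc c d, f z ∂μ ≤ K) :
    ∫⁻ z in s ×ˢ Ioo a b, f z ∂μ ≤ K := by
  obtain ⟨c, hc_anti, hac, hc⟩ := exists_seq_strictAnti_tendsto a
  obtain ⟨d, hd_mono, hdb, hd⟩ := exists_seq_strictMono_tendsto b
  have hIci : Monotone fun n => Ici (c n) := fun _ _ hmn => Ici_subset_Ici.2 (hc_anti.antitone hmn)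
  have hIic : Monotone fun n => Iic (d n) := fun _ _ hmn => Iic_subset_Iic.2 (hd_mono.monotone hmn)
  have hIcc : ⋃ n, Icc (c n) (d n) = Ioo a b := by
    simp only [← Ici_inter_Iic, ← Ioi_inter_Iio]
    rw [iUnion_inter_of_monotone hIci hIic, iUnion_Ici_eq_Ioi_of_lt_of_tendsto hac hc,
      iUnion_Iic_eq_Iio_of_lt_of_tendsto hdb hd]
  have hdir : Monotone fun n => s ×ˢ Icc (c n) (d n) := fun _ _ hmn =>
    prod_mono_right (inter_subset_inter (hIci hmn) (hIic hmn))
  rw [← hIcc, prod_iUnion, setLIntegral_iUnion_of_directed _ hdir.directed_le]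
  exact iSup_le fun n => h _ _ (hac n) (hdb n)

end Integration

section TestFunctions

lemma w11Norm_nonneg (s : Set ℝ) (g : ℝ → ℝ) : 0 ≤ w11Norm s g := by
  unfold w11Norm
  positivity

lemma w11Norm_mul_le {s : Set ℝ} {w g : ℝ → ℝ} {A : ℝ} (hs : MeasurableSet s)
    (hw : Differentiable ℝ w) (hg : Differentiable ℝ g) (hgi : IntegrableOn g s)
    (hgi' : IntegrableOn (deriv g) s) (hwA : ∀ x ∈ s, |w x| ≤ A)
    (hwA' : ∀ x ∈ s, |deriv w x| ≤ A) :
    w11Norm s (fun x => w x * g x) ≤ 2 * A * w11Norm s g := by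
  have hmul : ∫ x in s, |w x * g x| ≤ ∫ x in s, A * |g x| := by
    refine integral_mono_of_nonneg (.of_forall fun _ => abs_nonneg _) (hgi.abs.const_mul A)
      (ae_restrict_of_forall_mem hs fun x hx => ?_)
    exact (abs_mul _ _).trans_le (mul_le_mul_of_nonneg_right (hwA x hx) (abs_nonneg _))
  have hderiv : ∫ x in s, |deriv (fun x => w x * g x) x|
      ≤ ∫ x in s, (A * |g x| + A * |deriv g x|) := by
    refine integral_mono_of_nonneg (.of_forall fun _ => abs_nonneg _)
      ((hgi.abs.const_mul A).add (hgi'.abs.const_mul A))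
      (ae_restrict_of_forall_mem hs fun x hx => ?_)
    calc |deriv (fun x => w x * g x) x|
        = |deriv w x * g x + w x * deriv g x| := by rw [deriv_fun_mul (hw x) (hg x)]
      _ ≤ |deriv w x| * |g x| + |w x| * |deriv g x| := by
          rw [← abs_mul, ← abs_mul]
          exact abs_add_le _ _
      _ ≤ A * |g x| + A * |deriv g x| := by gcongr; exacts [hwA' x hx, hwA x hx]
  have hg'0 : 0 ≤ A * ∫ x in s, |deriv g x| := by
    rw [← integral_const_mul]
    exact setIntegral_nonneg hs fun x hx =>
      mul_nonneg ((abs_nonneg _).trans (hwA x hx)) (abs_nonneg _)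
  rw [integral_add (hgi.abs.const_mul A) (hgi'.abs.const_mul A)] at hderiv
  simp only [integral_const_mul] at hmul hderiv
  unfold w11Norm
  linarith

lemma setIntegral_abs_deriv_mul_le_two {A B : ℝ → ℝ} {a b : ℝ} (hab : a ≤ b)
    (hA : ContDiff ℝ 1 A) (hB : ContDiff ℝ 1 B) (hA_mono : Monotone A) (hB_anti : Antitone B)
    (hA_mem : ∀ x, A x ∈ Icc (0 : ℝ) 1) (hB_mem : ∀ x, B x ∈ Icc (0 : ℝ) 1) :
    ∫ x in Ioo a b, |deriv (fun x => A x * B x) x| ≤ 2 := by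
  have hdA := hA.differentiable one_ne_zero
  have hdB := hB.differentiable one_ne_zero
  have hA' := (hA.continuous_deriv le_rfl).intervalIntegrable (μ := volume) a b
  have hB' := (hB.continuous_deriv le_rfl).intervalIntegrable (μ := volume) a b
  have hpt : ∀ x, |deriv (fun x => A x * B x) x| ≤ deriv A x - deriv B x := fun x => by
    rw [deriv_fun_mul (hdA x) (hdB x), sub_eq_add_neg]
    refine (abs_add_le _ _).trans (add_le_add ?_ ?_)
    · rw [abs_of_nonneg (mul_nonneg hA_mono.deriv_nonneg (hB_mem x).1)]
      exact mul_le_of_le_one_right hA_mono.deriv_nonneg (hB_mem x).2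
    · rw [abs_of_nonpos (mul_nonpos_of_nonneg_of_nonpos (hA_mem x).1 hB_anti.deriv_nonpos),
        ← mul_neg]
      exact mul_le_of_le_one_left (neg_nonneg.2 hB_anti.deriv_nonpos) (hA_mem x).2
  have hcont : Continuous (deriv fun x => A x * B x) := (hA.mul hB).continuous_deriv le_rfl
  rw [← integral_Ioc_eq_integral_Ioo, ← intervalIntegral.integral_of_le hab]
  calc ∫ x in a..b, |deriv (fun x => A x * B x) x|
      ≤ ∫ x in a..b, (deriv A x - deriv B x) :=
        intervalIntegral.integral_mono_on hab (hcont.abs.intervalIntegrable a b) (hA'.sub hB')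
          fun x _ => hpt x
    _ = (A b - A a) - (B b - B a) := by
        rw [intervalIntegral.integral_sub hA' hB',
          intervalIntegral.integral_deriv_eq_sub (fun x _ => hdA x) hA',
          intervalIntegral.integral_deriv_eq_sub (fun x _ => hdB x) hB']
    _ ≤ 2 := by linarith [(hA_mem a).1, (hA_mem b).2, (hB_mem a).2, (hB_mem b).1]

lemma w11Norm_mul_le_of_monotone_of_antitone {A B : ℝ → ℝ} {a b : ℝ} (hab : a ≤ b)
    (hA : ContDiff ℝ 1 A) (hB : ContDiff ℝ 1 B) (hA_mono : Monotone A) (hB_anti : Antitone B)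
    (hA_mem : ∀ x, A x ∈ Icc (0 : ℝ) 1) (hB_mem : ∀ x, B x ∈ Icc (0 : ℝ) 1) :
    w11Norm (Ioo a b) (fun x => A x * B x) ≤ (b - a) + 2 := by
  refine add_le_add ?_ (setIntegral_abs_deriv_mul_le_two hab hA hB hA_mono hB_anti hA_mem hB_mem)
  have hle := norm_setIntegral_le_of_norm_le_const (μ := volume) (s := Ioo a b) (C := 1)
    (f := fun x => |A x * B x|) measure_Ioo_lt_top fun x _ => by
      rw [Real.norm_eq_abs, abs_abs, abs_of_nonneg (mul_nonneg (hA_mem x).1 (hB_mem x).1)]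
      exact mul_le_one₀ (hA_mem x).2 (hB_mem x).1 (hB_mem x).2
  rw [Real.volume_real_Ioo_of_le hab, one_mul] at hle
  exact (Real.le_norm_self _).trans hle

lemma exists_contDiff_monotone_step {a b : ℝ} (hab : a < b) :
    ∃ S : ℝ → ℝ, ContDiff ℝ ∞ S ∧ Monotone S ∧ (∀ x, S x ∈ Icc (0 : ℝ) 1) ∧
      (∀ x ≤ a, S x = 0) ∧ ∀ x ≥ b, S x = 1 := by
  have hba : 0 < b - a := sub_pos.2 hab
  refine ⟨fun x => Real.smoothTransition ((x - a) / (b - a)),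
    Real.smoothTransition.contDiff.comp (by fun_prop),
    fun x y hxy => Real.smoothTransition.monotone (by gcongr),
    fun _ => ⟨Real.smoothTransition.nonneg _, Real.smoothTransition.le_one _⟩, fun x hx => ?_,
    fun x hx => ?_⟩
  · exact Real.smoothTransition.zero_of_nonpos
      (div_nonpos_of_nonpos_of_nonneg (sub_nonpos.2 hx) hba.le)
  · exact Real.smoothTransition.one_of_one_le ((one_le_div hba).2 (sub_le_sub_right hx a))

lemma exists_contDiff_cutoff {a b c d : ℝ} (hab : a ≤ b) (hac : a < c) (hdb : d < b) :
    ∃ χ : ℝ → ℝ, ContDiff ℝ ∞ χ ∧ tsupport χ ⊆ Ioo a b ∧ (∀ x, 0 ≤ χ x) ∧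
      (∀ x ∈ Icc c d, χ x = 1) ∧ w11Norm (Ioo a b) χ ≤ (b - a) + 2 := by
  obtain ⟨a', haa', ha'c⟩ := exists_between hac
  obtain ⟨b', hdb', hb'b⟩ := exists_between hdb
  obtain ⟨A, hA, hA_mono, hA_mem, hA_zero, hA_one⟩ := exists_contDiff_monotone_step ha'c
  obtain ⟨S, hS, hS_mono, hS_mem, hS_zero, hS_one⟩ := exists_contDiff_monotone_step hdb'
  have hB_mem : ∀ x, 1 - S x ∈ Icc (0 : ℝ) 1 := fun x =>
    ⟨sub_nonneg.2 (hS_mem x).2, sub_le_self 1 (hS_mem x).1⟩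
  have hsupp : Function.support (fun x => A x * (1 - S x)) ⊆ Icc a' b' := fun x hx => by
    obtain ⟨hAx, hBx⟩ := mul_ne_zero_iff.1 hx
    exact ⟨le_of_not_ge fun h => hAx (hA_zero x h),
      le_of_not_ge fun h => hBx (sub_eq_zero.2 (hS_one x h).symm)⟩
  refine ⟨fun x => A x * (1 - S x), hA.mul (contDiff_const.sub hS),
    (closure_minimal hsupp isClosed_Icc).trans (Icc_subset_Ioo haa' hb'b),
    fun x => mul_nonneg (hA_mem x).1 (hB_mem x).1, fun x hx => ?_, ?_⟩
  · simp only [hA_one x hx.1, hS_zero x hx.2, sub_zero, mul_one]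
  · exact w11Norm_mul_le_of_monotone_of_antitone hab (hA.of_le ENat.LEInfty.out)
      ((contDiff_const.sub hS).of_le ENat.LEInfty.out) hA_mono
      (fun x y hxy => sub_le_sub_left (hS_mono hxy) 1) hA_mem hB_mem

lemma exists_contDiff_near_of_contDiffOn_Icc {f : ℝ → ℝ} {a b : ℝ} (hab : a < b)
    (hf : ContDiffOn ℝ 1 f (Icc a b)) {ε : ℝ} (hε : 0 < ε) :
    ∃ g : ℝ → ℝ, ContDiff ℝ ∞ g ∧ ∀ x ∈ Icc a b,
      |g x - f x| ≤ ε ∧ |deriv g x - derivWithin f (Icc a b) x| ≤ ε := by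
  have hba : 0 < b - a := sub_pos.2 hab
  obtain ⟨P, hP⟩ := exists_polynomial_near_of_continuousOn a b _
    (hf.continuousOn_derivWithin (uniqueDiffOn_Icc hab) le_rfl) (min ε (ε / (b - a)))
    (lt_min hε (div_pos hε hba))
  let g : ℝ → ℝ := fun x => f a + ∫ y in a..x, P.eval y
  have hg : ∀ x, HasDerivAt g (P.eval x) x := fun x =>
    (P.continuous.integral_hasStrictDerivAt a x).hasDerivAt.const_add _
  have hg' : deriv g = fun x => P.eval x := funext fun x => (hg x).deriv
  refine ⟨g, contDiff_infty_iff_deriv.2 ⟨fun x => (hg x).differentiableAt, ?_⟩,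
    fun x hx => ⟨?_, ?_⟩⟩
  · rw [hg']
    simpa using P.contDiff_aeval (𝕜 := ℝ) (n := ∞)
  · have hmvt := (convex_Icc a b).norm_image_sub_le_of_norm_hasDerivWithin_le
      (fun y hy => (hg y).hasDerivWithinAt.sub
        (hf.differentiableOn one_ne_zero y hy).hasDerivWithinAt)
      (fun y hy => ((hP y hy).trans_le (min_le_right _ _)).le) (left_mem_Icc.2 hab.le) hx
    have hga : (g - f) a = 0 := by simp [g]
    rw [hga, sub_zero, Real.norm_of_nonneg (sub_nonneg.2 hx.1)] at hmvt
    calc |g x - f x| ≤ ε / (b - a) * (x - a) := hmvt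
      _ ≤ ε / (b - a) * (b - a) := by gcongr; exact hx.2
      _ = ε := div_mul_cancel₀ ε hba.ne'
  · rw [hg']
    exact ((hP x hx).trans_le (min_le_left _ _)).le

lemma exists_nonneg_contDiff_near_add_const {f : ℝ → ℝ} {a b : ℝ} (hab : a < b)
    (hf : ContDiffOn ℝ 1 f (Icc a b)) :
    ∃ c A : ℝ, ∀ ε > 0, ∃ w : ℝ → ℝ, ContDiff ℝ ∞ w ∧ ∀ x ∈ Icc a b,
      0 ≤ w x ∧ |w x| ≤ A ∧ |deriv w x| ≤ A ∧ |w x - c - f x| ≤ ε := by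
  obtain ⟨M, hM⟩ := isCompact_Icc.exists_bound_of_continuousOn hf.continuousOn
  obtain ⟨M', hM'⟩ := isCompact_Icc.exists_bound_of_continuousOn
    (hf.continuousOn_derivWithin (uniqueDiffOn_Icc hab) le_rfl)
  refine ⟨M + 1, max (2 * (M + 1)) (M' + 1), fun ε hε => ?_⟩
  obtain ⟨g, hg, hgf⟩ :=
    exists_contDiff_near_of_contDiffOn_Icc hab hf (lt_min hε one_pos)
  refine ⟨fun x => g x + (M + 1), hg.add contDiff_const, fun x hx => ?_⟩
  obtain ⟨hgx, hgx'⟩ := hgf x hx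
  have hfx := abs_le.1 (hM x hx)
  have hfx' := abs_le.1 (hM' x hx)
  have hgx1 := abs_le.1 (hgx.trans (min_le_right _ _))
  have hgx1' := abs_le.1 (hgx'.trans (min_le_right _ _))
  refine ⟨by linarith, ?_, ?_, ?_⟩
  · exact le_max_of_le_left (abs_le.2 ⟨by linarith, by linarith⟩)
  · rw [deriv_add_const]
    exact le_max_of_le_right (abs_le.2 ⟨by linarith, by linarith⟩)
  · rw [add_sub_cancel_right]
    exact hgx.trans (min_le_left _ _)

end TestFunctions

section Entropy

lemma hasDerivAt_fluxJ (p y : ℝ) : HasDerivAt (fluxJ p) ((2 * p - 1) * (1 - 2 * y)) y :=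
  (((hasDerivAt_id y).const_mul (2 * p - 1)).mul ((hasDerivAt_id y).const_sub 1)).congr_deriv
    (by simp only [id]; ring)

lemma hasDerivAt_quadEntropy (α β y : ℝ) : HasDerivAt (quadEntropy α β) (α * y + β) y :=
  ((((hasDerivAt_pow 2 y).div_const 2).const_mul α).add
    ((hasDerivAt_id y).const_mul β)).congr_deriv (by push_cast; ring)

lemma hasDerivAt_quadEntropyFlux (p α β y : ℝ) :
    HasDerivAt (quadEntropyFlux p α β) ((2 * p - 1) * (1 - 2 * y) * (α * y + β)) y :=
  ((((((hasDerivAt_pow 2 y).div_const 2).sub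
    (((hasDerivAt_pow 3 y).const_mul 2).div_const 3)).const_mul (2 * p - 1)).const_mul α).add
      ((hasDerivAt_fluxJ p y).const_mul β)).congr_deriv (by push_cast; ring)

lemma deriv_quadEntropy (α β : ℝ) : deriv (quadEntropy α β) = fun y => α * y + β :=
  funext fun y => (hasDerivAt_quadEntropy α β y).deriv

lemma isLaxPair_quadEntropy (p : ℝ) {α : ℝ} (hα : 0 ≤ α) (β : ℝ) :
    IsLaxPair p (quadEntropy α β) (quadEntropyFlux p α β) := by
  refine ⟨?_, ?_, fun y => ?_, fun y => ?_⟩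
  · unfold quadEntropy
    fun_prop
  · unfold quadEntropyFlux fluxJ
    fun_prop
  · rw [deriv_quadEntropy]
    simpa using hα
  · rw [(hasDerivAt_quadEntropyFlux p α β y).deriv, (hasDerivAt_fluxJ p y).deriv, deriv_quadEntropy]

end Entropy

section EntropySolution

lemma setIntegral_mul_deriv_add_mul_deriv_le {s t : Set ℝ} {F G : ℝ × ℝ → ℝ} {ψ g : ℝ → ℝ}
    {C : ℝ} (hF : ∀ z, |F z| ≤ C) (hG : ∀ z, |G z| ≤ C) (hψ : IntegrableOn ψ s)
    (hψ' : IntegrableOn (deriv ψ) s) (hg : IntegrableOn g t) (hg' : IntegrableOn (deriv g) t) :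
    ∫ z in s ×ˢ t, (F z * deriv (fun τ => ψ τ * g z.2) z.1
      + G z * deriv (fun y => ψ z.1 * g y) z.2) ≤ C * (w11Norm s ψ * w11Norm t g) := by
  have hC : 0 ≤ C := (abs_nonneg _).trans (hF 0)
  have hψ'g := integrableOn_prod_mul hψ'.abs hg.abs
  have hψg' := integrableOn_prod_mul hψ.abs hg'.abs
  have hpt : ∀ z : ℝ × ℝ, ‖F z * deriv (fun τ => ψ τ * g z.2) z.1
      + G z * deriv (fun y => ψ z.1 * g y) z.2‖
      ≤ C * (|deriv ψ z.1| * |g z.2| + |ψ z.1| * |deriv g z.2|) := fun z => by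
    rw [deriv_mul_const_field, deriv_const_mul_field, mul_add, ← abs_mul, ← abs_mul]
    exact (norm_add_le _ _).trans <| add_le_add
      ((norm_mul _ _).trans_le (mul_le_mul_of_nonneg_right (hF z) (norm_nonneg _)))
      ((norm_mul _ _).trans_le (mul_le_mul_of_nonneg_right (hG z) (norm_nonneg _)))
  calc ∫ z in s ×ˢ t, (F z * deriv (fun τ => ψ τ * g z.2) z.1
        + G z * deriv (fun y => ψ z.1 * g y) z.2)
      ≤ ∫ z in s ×ˢ t, C * (|deriv ψ z.1| * |g z.2| + |ψ z.1| * |deriv g z.2|) :=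
        (Real.le_norm_self _).trans <|
          norm_integral_le_of_norm_le ((hψ'g.add hψg').const_mul C) (.of_forall hpt)
    _ = C * ((∫ τ in s, |deriv ψ τ|) * (∫ x in t, |g x|)
          + (∫ τ in s, |ψ τ|) * ∫ x in t, |deriv g x|) := by
        rw [integral_const_mul, integral_add hψ'g hψg', Measure.volume_eq_prod,
          setIntegral_prod_mul (fun τ => |deriv ψ τ|) (fun x => |g x|),
          setIntegral_prod_mul (fun τ => |ψ τ|) (fun x => |deriv g x|)]
    _ ≤ C * (w11Norm s ψ * w11Norm t g) := by
        have hψg : 0 ≤ (∫ τ in s, |ψ τ|) * ∫ x in t, |g x| := by positivity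
        have hψg'' : 0 ≤ (∫ τ in s, |deriv ψ τ|) * ∫ x in t, |deriv g x| := by positivity
        unfold w11Norm
        gcongr
        linarith

lemma integrable_mul_of_tsupport_subset {X : Type*} [TopologicalSpace X] [T2Space X]
    [MeasurableSpace X] [OpensMeasurableSpace X] {μ : Measure X} {s : Set X} {V g : X → ℝ}
    (hV : LocallyIntegrableOn V s μ) (hg : Continuous g) (hgc : HasCompactSupport g)
    (hgs : tsupport g ⊆ s) : Integrable (fun x => V x * g x) μ := by
  refine (integrableOn_iff_integrable_of_support_subset fun x hx => ?_).1 <|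
    (hV.integrableOn_compact_subset hgs hgc).mul_continuousOn hg.continuousOn hgc
  exact subset_tsupport g (right_ne_zero_of_mul hx)

lemma integrableOn_comp_snd_mul {s : Set ℝ} {a b : ℝ} {f : ℝ → ℝ} {W : ℝ × ℝ → ℝ}
    (hs : MeasurableSet s) (hf : ContinuousOn f (Icc a b)) (hW : IntegrableOn W (s ×ˢ Ioo a b)) :
    IntegrableOn (fun z => f z.2 * W z) (s ×ˢ Ioo a b) := by
  obtain ⟨M, hM⟩ := isCompact_Icc.exists_bound_of_continuousOn hf
  have hmeas : MeasurableSet (s ×ˢ Ioo a b) := hs.prod measurableSet_Ioo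
  have hmaps : MapsTo Prod.snd (s ×ˢ Ioo a b) (Icc a b) := fun z hz => Ioo_subset_Icc_self hz.2
  exact Integrable.bdd_mul hW
    ((hf.comp continuous_snd.continuousOn hmaps).aestronglyMeasurable hmeas)
    (ae_restrict_of_forall_mem hmeas fun z hz => hM z.2 (hmaps hz))

lemma hasCompactSupport_of_tsupport_subset_Ioo {g : ℝ → ℝ} {a b : ℝ}
    (hg : tsupport g ⊆ Ioo a b) : HasCompactSupport g :=
  isCompact_Icc.of_isClosed_subset (isClosed_tsupport g) (hg.trans Ioo_subset_Icc_self)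

lemma integrable_and_integrable_deriv {g : ℝ → ℝ} (hg : ContDiff ℝ 1 g)
    (hgc : HasCompactSupport g) : Integrable g ∧ Integrable (deriv g) :=
  ⟨hg.continuous.integrable_of_hasCompactSupport hgc,
    (hg.continuous_deriv le_rfl).integrable_of_hasCompactSupport hgc.deriv⟩

namespace IsEntropySolution

variable {p : ℝ} {V ρ u₀ : ℝ → ℝ} {u : ℝ × ℝ → ℝ} {ψ χ : ℝ → ℝ}

lemma setIntegral_source_le {f q g : ℝ → ℝ} {C : ℝ} (hu : IsEntropySolution p V ρ u₀ u)
    (hu₀ : ∀ x, u₀ x ∈ Icc (0 : ℝ) 1) (hfq : IsLaxPair p f q)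
    (hf : ∀ y ∈ Icc (0 : ℝ) 1, |f y| ≤ C) (hq : ∀ y ∈ Icc (0 : ℝ) 1, |q y| ≤ C)
    (hψ : ContDiff ℝ 2 ψ) (hψc : HasCompactSupport ψ) (hψ0 : ∀ t, 0 ≤ ψ t)
    (hg : ContDiff ℝ 2 g) (hgs : tsupport g ⊆ Ioo 0 1) (hg0 : ∀ x, 0 ≤ g x) :
    ∫ z in Ioi (0 : ℝ) ×ˢ Ioo (0 : ℝ) 1,
        deriv f (u z) * (V z.2 * (u z - ρ z.2) * (ψ z.1 * g z.2))
      ≤ C * (ψ 0 + w11Norm (Ioi 0) ψ) * w11Norm (Ioo 0 1) g := by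
  have hgc := hasCompactSupport_of_tsupport_subset_Ioo hgs
  obtain ⟨hψi, hψi'⟩ := integrable_and_integrable_deriv (hψ.of_le one_le_two) hψc
  obtain ⟨hgi, hgi'⟩ := integrable_and_integrable_deriv (hg.of_le one_le_two) hgc
  have hφc : HasCompactSupport fun z : ℝ × ℝ => ψ z.1 * g z.2 :=
    HasCompactSupport.intro (hψc.prod hgc) fun z hz => by
      by_contra h
      obtain ⟨hψz, hgz⟩ := mul_ne_zero_iff.1 h
      exact hz ⟨subset_tsupport ψ hψz, subset_tsupport g hgz⟩
  have hentropy := hu.2.2 f q hfq (fun z => ψ z.1 * g z.2)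
    ((hψ.comp contDiff_fst).mul (hg.comp contDiff_snd)) hφc
    (fun z => mul_nonneg (hψ0 _) (hg0 _))
    (fun z hz => by rw [image_eq_zero_of_notMem_tsupport fun h => hz (hgs h), mul_zero])
  have hinit : ∫ x in Ioo (0 : ℝ) 1, f (u₀ x) * (ψ 0 * g x)
      ≤ C * ∫ x in Ioo (0 : ℝ) 1, |ψ 0 * g x| :=
    integral_mul_le_of_abs_le (hgi.integrableOn.const_mul (ψ 0)) (.of_forall fun x => hf _ (hu₀ x))
  have hflux := setIntegral_mul_deriv_add_mul_deriv_le (s := Ioi 0) (t := Ioo 0 1)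
    (fun z => hf _ (hu.2.1 z)) (fun z => hq _ (hu.2.1 z))
    hψi.integrableOn hψi'.integrableOn hgi.integrableOn hgi'.integrableOn
  have hC : 0 ≤ C * ψ 0 * ∫ x in Ioo (0 : ℝ) 1, |deriv g x| :=
    mul_nonneg (mul_nonneg ((abs_nonneg _).trans (hf _ (hu₀ 0))) (hψ0 0)) (by positivity)
  simp only [abs_mul, abs_of_nonneg (hψ0 0), integral_const_mul] at hinit
  simp only [mul_assoc] at hentropy hflux ⊢
  simp only [w11Norm] at hflux ⊢
  linarith

lemma exists_setIntegral_source_le {f q : ℝ → ℝ} (hu : IsEntropySolution p V ρ u₀ u)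
    (hu₀ : ∀ x, u₀ x ∈ Icc (0 : ℝ) 1) (hfq : IsLaxPair p f q) (hψ : ContDiff ℝ 2 ψ)
    (hψc : HasCompactSupport ψ) (hψ0 : ∀ t, 0 ≤ ψ t) :
    ∃ C, 0 ≤ C ∧ ∀ g : ℝ → ℝ, ContDiff ℝ 2 g → tsupport g ⊆ Ioo 0 1 → (∀ x, 0 ≤ g x) →
      ∫ z in Ioi (0 : ℝ) ×ˢ Ioo (0 : ℝ) 1,
        deriv f (u z) * (V z.2 * (u z - ρ z.2) * (ψ z.1 * g z.2)) ≤ C * w11Norm (Ioo 0 1) g := by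
  obtain ⟨Cf, hCf⟩ := isCompact_Icc.exists_bound_of_continuousOn hfq.1.continuous.continuousOn
  obtain ⟨Cq, hCq⟩ := isCompact_Icc.exists_bound_of_continuousOn hfq.2.1.continuous.continuousOn
  refine ⟨max Cf Cq * (ψ 0 + w11Norm (Ioi 0) ψ), ?_, fun g hg hgs hg0 =>
    hu.setIntegral_source_le hu₀ hfq (fun y hy => le_max_of_le_left (hCf y hy))
      (fun y hy => le_max_of_le_right (hCq y hy)) hψ hψc hψ0 hg hgs hg0⟩
  exact mul_nonneg (le_max_of_le_left ((norm_nonneg _).trans (hCf _ (hu₀ 0))))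
    (add_nonneg (hψ0 0) (w11Norm_nonneg _ _))

lemma integrableOn_mul (hu : IsEntropySolution p V ρ u₀ u) {s : Set (ℝ × ℝ)} {W : ℝ × ℝ → ℝ}
    (hW : IntegrableOn W s) : IntegrableOn (fun z => u z * W z) s :=
  Integrable.bdd_mul (c := 1) hW hu.1.aestronglyMeasurable <| .of_forall fun z => by
    rw [Real.norm_of_nonneg (hu.2.1 z).1]
    exact (hu.2.1 z).2

lemma integrableOn_sub_mul (hu : IsEntropySolution p V ρ u₀ u) {r : ℝ → ℝ}
    (hr : ContinuousOn r (Icc 0 1)) {W : ℝ × ℝ → ℝ}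
    (hW : IntegrableOn W (Ioi (0 : ℝ) ×ˢ Ioo (0 : ℝ) 1)) :
    IntegrableOn (fun z => (u z - r z.2) * W z) (Ioi (0 : ℝ) ×ˢ Ioo (0 : ℝ) 1) := by
  simp only [sub_mul]
  exact (hu.integrableOn_mul hW).sub (integrableOn_comp_snd_mul measurableSet_Ioi hr hW)

lemma integrableOn_source (hu : IsEntropySolution p V ρ u₀ u)
    (hV : LocallyIntegrableOn V (Ioo 0 1)) (hρ : ContinuousOn ρ (Icc 0 1)) (hψ : Continuous ψ)
    (hψc : HasCompactSupport ψ) (hχ : Continuous χ) (hχs : tsupport χ ⊆ Ioo 0 1) :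
    IntegrableOn (fun z => V z.2 * (u z - ρ z.2) * (ψ z.1 * χ z.2))
      (Ioi (0 : ℝ) ×ˢ Ioo (0 : ℝ) 1) := by
  have hψVχ : IntegrableOn (fun z : ℝ × ℝ => ψ z.1 * (V z.2 * χ z.2)) (Ioi 0 ×ˢ Ioo 0 1) :=
    integrableOn_prod_mul (hψ.integrable_of_hasCompactSupport hψc).integrableOn
      (integrable_mul_of_tsupport_subset hV hχ (hasCompactSupport_of_tsupport_subset_Ioo hχs)
        hχs).integrableOn
  refine (hu.integrableOn_sub_mul hρ hψVχ).congr_fun (fun z _ => ?_)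
    (measurableSet_Ioi.prod measurableSet_Ioo)
  ring

lemma exists_setIntegral_neg_mul_source_le (hu : IsEntropySolution p V ρ u₀ u)
    (hu₀ : ∀ x, u₀ x ∈ Icc (0 : ℝ) 1) (hψ : ContDiff ℝ 2 ψ) (hψc : HasCompactSupport ψ)
    (hψ0 : ∀ t, 0 ≤ ψ t) (A : ℝ) :
    ∃ K, ∀ w χ : ℝ → ℝ, ContDiff ℝ 2 w →
      (∀ x ∈ Icc (0 : ℝ) 1, 0 ≤ w x ∧ |w x| ≤ A ∧ |deriv w x| ≤ A) →
      ContDiff ℝ 2 χ → tsupport χ ⊆ Ioo 0 1 → (∀ x, 0 ≤ χ x) →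
      ∫ z in Ioi (0 : ℝ) ×ˢ Ioo (0 : ℝ) 1,
        -(w z.2 * (V z.2 * (u z - ρ z.2) * (ψ z.1 * χ z.2))) ≤ K * w11Norm (Ioo 0 1) χ := by
  obtain ⟨C, hC0, hC⟩ := hu.exists_setIntegral_source_le hu₀
    (isLaxPair_quadEntropy p le_rfl (-1)) hψ hψc hψ0
  refine ⟨C * (2 * A), fun w χ hw hwA hχ hχs hχ0 => ?_⟩
  have hIoo : Ioo (0 : ℝ) 1 ⊆ Icc 0 1 := Ioo_subset_Icc_self
  obtain ⟨hχi, hχi'⟩ := integrable_and_integrable_deriv (hχ.of_le one_le_two)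
    (hasCompactSupport_of_tsupport_subset_Ioo hχs)
  have hwχ0 : ∀ x, 0 ≤ w x * χ x := fun x => by
    by_cases hx : x ∈ tsupport χ
    · exact mul_nonneg (hwA x (hIoo (hχs hx))).1 (hχ0 x)
    · rw [image_eq_zero_of_notMem_tsupport hx, mul_zero]
  have hlin := hC (fun x => w x * χ x) (hw.mul hχ)
    ((closure_mono (Function.support_mul_subset_right w χ)).trans hχs) hwχ0
  have hnorm := w11Norm_mul_le measurableSet_Ioo (hw.differentiable two_ne_zero)
    (hχ.differentiable two_ne_zero) hχi.integrableOn hχi'.integrableOn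
    (fun x hx => (hwA x (hIoo hx)).2.1) (fun x hx => (hwA x (hIoo hx)).2.2)
  simp only [deriv_quadEntropy] at hlin
  calc _ = ∫ z in Ioi (0 : ℝ) ×ˢ Ioo (0 : ℝ) 1,
            (0 * u z + -1) * (V z.2 * (u z - ρ z.2) * (ψ z.1 * (w z.2 * χ z.2))) := by
        congr with z
        ring
    _ ≤ C * (2 * A * w11Norm (Ioo 0 1) χ) := hlin.trans (mul_le_mul_of_nonneg_left hnorm hC0)
    _ = C * (2 * A) * w11Norm (Ioo 0 1) χ := (mul_assoc _ _ _).symm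

lemma exists_setIntegral_sub_mul_source_le (hu : IsEntropySolution p V ρ u₀ u)
    (hu₀ : ∀ x, u₀ x ∈ Icc (0 : ℝ) 1) (hV : LocallyIntegrableOn V (Ioo 0 1))
    (hρ : ContinuousOn ρ (Icc 0 1)) (hψ : ContDiff ℝ 2 ψ) (hψc : HasCompactSupport ψ)
    (hψ0 : ∀ t, 0 ≤ ψ t) (c A : ℝ) :
    ∃ K, ∀ w χ : ℝ → ℝ, ContDiff ℝ 2 w →
      (∀ x ∈ Icc (0 : ℝ) 1, 0 ≤ w x ∧ |w x| ≤ A ∧ |deriv w x| ≤ A) →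
      ContDiff ℝ 2 χ → tsupport χ ⊆ Ioo 0 1 → (∀ x, 0 ≤ χ x) →
      ∫ z in Ioi (0 : ℝ) ×ˢ Ioo (0 : ℝ) 1,
        (u z - (w z.2 - c)) * (V z.2 * (u z - ρ z.2) * (ψ z.1 * χ z.2))
          ≤ K * w11Norm (Ioo 0 1) χ := by
  obtain ⟨C₁, -, hC₁⟩ := hu.exists_setIntegral_source_le hu₀
    (isLaxPair_quadEntropy p zero_le_one c) hψ hψc hψ0
  obtain ⟨C₂, hC₂⟩ := hu.exists_setIntegral_neg_mul_source_le hu₀ hψ hψc hψ0 A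
  refine ⟨C₁ + C₂, fun w χ hw hwA hχ hχs hχ0 => ?_⟩
  have hW := hu.integrableOn_source hV hρ hψ.continuous hψc hχ.continuous hχs
  have hwW : IntegrableOn (fun z => -(w z.2 * (V z.2 * (u z - ρ z.2) * (ψ z.1 * χ z.2))))
      (Ioi (0 : ℝ) ×ˢ Ioo (0 : ℝ) 1) :=
    (integrableOn_comp_snd_mul measurableSet_Ioi hw.continuous.continuousOn hW).neg
  have hquadW : IntegrableOn (fun z => (1 * u z + c) * (V z.2 * (u z - ρ z.2) * (ψ z.1 * χ z.2)))
      (Ioi (0 : ℝ) ×ˢ Ioo (0 : ℝ) 1) := by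
    simp only [one_mul, add_mul]
    exact (hu.integrableOn_mul hW).add (hW.const_mul c)
  have hquad := hC₁ χ hχ hχs hχ0
  simp only [deriv_quadEntropy] at hquad
  rw [add_mul]
  refine le_of_eq_of_le ?_ (add_le_add hquad (hC₂ w χ hw hwA hχ hχs hχ0))
  rw [← integral_add hquadW hwW]
  congr with z
  ring

lemma setIntegral_sub_mul_le_of_near (hu : IsEntropySolution p V ρ u₀ u)
    (hρ : ContinuousOn ρ (Icc 0 1)) {r : ℝ → ℝ} {ε : ℝ} (hr : ContinuousOn r (Icc 0 1))
    (hrρ : ∀ x ∈ Icc (0 : ℝ) 1, |r x - ρ x| ≤ ε) {W : ℝ × ℝ → ℝ}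
    (hW : IntegrableOn W (Ioi (0 : ℝ) ×ˢ Ioo (0 : ℝ) 1)) :
    ∫ z in Ioi (0 : ℝ) ×ˢ Ioo (0 : ℝ) 1, (u z - ρ z.2) * W z
      ≤ (∫ z in Ioi (0 : ℝ) ×ˢ Ioo (0 : ℝ) 1, (u z - r z.2) * W z)
        + ε * ∫ z in Ioi (0 : ℝ) ×ˢ Ioo (0 : ℝ) 1, |W z| := by
  have herr := integral_mul_le_of_abs_le (h := fun z => (r - ρ) z.2) hW <|
    ae_restrict_of_forall_mem (measurableSet_Ioi.prod measurableSet_Ioo) fun z hz =>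
      hrρ z.2 (Ioo_subset_Icc_self hz.2)
  refine le_of_eq_of_le ?_ (add_le_add_right herr _)
  rw [← integral_add (hu.integrableOn_sub_mul hr hW)
    (integrableOn_comp_snd_mul measurableSet_Ioi (hr.sub hρ) hW)]
  congr with z
  simp only [Pi.sub_apply]
  ring

lemma exists_weighted_energy_le (hu : IsEntropySolution p V ρ u₀ u)
    (hu₀ : ∀ x, u₀ x ∈ Icc (0 : ℝ) 1) (hV : LocallyIntegrableOn V (Ioo 0 1))
    (hρ : ContDiffOn ℝ 1 ρ (Icc 0 1)) (hψ : ContDiff ℝ 2 ψ) (hψc : HasCompactSupport ψ)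
    (hψ0 : ∀ t, 0 ≤ ψ t) :
    ∃ K, ∀ χ : ℝ → ℝ, ContDiff ℝ 2 χ → tsupport χ ⊆ Ioo 0 1 → (∀ x, 0 ≤ χ x) →
      ∫ z in Ioi (0 : ℝ) ×ˢ Ioo (0 : ℝ) 1,
        (u z - ρ z.2) * (V z.2 * (u z - ρ z.2) * (ψ z.1 * χ z.2)) ≤ K * w11Norm (Ioo 0 1) χ := by
  obtain ⟨c, A, happrox⟩ := exists_nonneg_contDiff_near_add_const zero_lt_one hρ
  obtain ⟨K, hK⟩ :=
    hu.exists_setIntegral_sub_mul_source_le hu₀ hV hρ.continuousOn hψ hψc hψ0 c A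
  refine ⟨K, fun χ hχ hχs hχ0 => ?_⟩
  have hW := hu.integrableOn_source hV hρ.continuousOn hψ.continuous hψc hχ.continuous hχs
  set I : ℝ := ∫ z in Ioi (0 : ℝ) ×ˢ Ioo (0 : ℝ) 1, |V z.2 * (u z - ρ z.2) * (ψ z.1 * χ z.2)|
  have hlim : Tendsto (fun ε : ℝ => K * w11Norm (Ioo 0 1) χ + ε * I) (𝓝[>] 0)
      (𝓝 (K * w11Norm (Ioo 0 1) χ)) := by
    refine tendsto_nhdsWithin_of_tendsto_nhds (Continuous.tendsto' (by fun_prop) _ _ ?_)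
    rw [zero_mul, add_zero]
  refine ge_of_tendsto hlim (eventually_mem_nhdsWithin.mono fun ε hε => ?_)
  obtain ⟨w, hw, hwA⟩ := happrox ε hε
  have hwχ := hK w χ (hw.of_le ENat.LEInfty.out)
    (fun x hx => ⟨(hwA x hx).1, (hwA x hx).2.1, (hwA x hx).2.2.1⟩) hχ hχs hχ0
  exact (hu.setIntegral_sub_mul_le_of_near hρ.continuousOn
    (hw.continuous.sub continuous_const).continuousOn (fun x hx => (hwA x hx).2.2.2) hW).trans
    (add_le_add_left hwχ _)

end IsEntropySolution

end EntropySolution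

theorem energy_estimate_general (p : ℝ) (V ρ : ℝ → ℝ)
    (hV : LocallyIntegrableOn V (Ioo 0 1)) (hV0 : ∀ x ∈ Ioo (0 : ℝ) 1, 0 ≤ V x)
    (hρ : ContDiffOn ℝ 1 ρ (Icc 0 1))
    (u₀ : ℝ → ℝ) (_hu₀ : Measurable u₀) (hu₀mem : ∀ x, u₀ x ∈ Icc (0 : ℝ) 1)
    (u : ℝ × ℝ → ℝ) (hu : IsEntropySolution p V ρ u₀ u) :
    ∀ T > 0, (∫⁻ z in Ioo (0 : ℝ) T ×ˢ Ioo (0 : ℝ) 1,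
      ENNReal.ofReal (V z.2 * (u z - ρ z.2) ^ 2)) < ⊤ := by
  intro T hT
  obtain ⟨ψ, hψ, hψs, hψ0, hψ1, -⟩ :=
    exists_contDiff_cutoff (a := -1) (b := T + 1) (c := 0) (d := T) (by linarith) (by linarith)
      (by linarith)
  have hψc := hasCompactSupport_of_tsupport_subset_Ioo hψs
  obtain ⟨K, hK⟩ := hu.exists_weighted_energy_le hu₀mem hV hρ (hψ.of_le ENat.LEInfty.out) hψc hψ0
  refine (setLIntegral_prod_Ioo_le_of_forall_Icc (K := ENNReal.ofReal (|K| * 3))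
    fun c d hc hd => ?_).trans_lt ENNReal.ofReal_lt_top
  obtain ⟨χ, hχ, hχs, hχ0, hχ1, hχ3⟩ := exists_contDiff_cutoff zero_le_one hc hd
  have hW := hu.integrableOn_source hV hρ.continuousOn hψ.continuous hψc hχ.continuous hχs
  refine (setLIntegral_ofReal_le_ofReal_setIntegral (measurableSet_Ioo.prod measurableSet_Icc)
    (measurableSet_Ioi.prod measurableSet_Ioo)
    (prod_mono Ioo_subset_Ioi_self (Icc_subset_Ioo hc hd))
    (hu.integrableOn_sub_mul hρ.continuousOn hW) (fun z hz => ?_) fun z hz => ?_).trans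
    (ENNReal.ofReal_le_ofReal ((hK χ (hχ.of_le ENat.LEInfty.out) hχs hχ0).trans ?_))
  · exact (mul_nonneg (mul_nonneg (hV0 z.2 hz.2) (sq_nonneg (u z - ρ z.2)))
      (mul_nonneg (hψ0 z.1) (hχ0 z.2))).trans_eq (by ring)
  · rw [hψ1 z.1 (Ioo_subset_Icc_self hz.1), hχ1 z.2 hz.2]
    exact le_of_eq (by ring)
  · exact mul_le_mul (le_abs_self K) (hχ3.trans_eq (by norm_num)) (w11Norm_nonneg _ _)
      (abs_nonneg K)

/-- every entropy solution satisfies the energy estimate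
`∫₀ᵀ ∫₀¹ V(x) (u(t,x) - ρ(x))² dx dt < ∞` for every `T > 0`. -/
theorem energy_estimate (p : ℝ) (hp : p ∈ Ioc (1 / 2 : ℝ) 1)
    (V ρ : ℝ → ℝ)
    (hV : ContDiffOn ℝ 1 V (Ioo 0 1)) (hVpos : ∀ x ∈ Ioo (0 : ℝ) 1, 0 < V x)
    (hρ : ContDiffOn ℝ 1 ρ (Icc 0 1)) (hρmem : ∀ x ∈ Icc (0 : ℝ) 1, ρ x ∈ Ioo (0 : ℝ) 1)
    (u₀ : ℝ → ℝ) (hu₀ : Measurable u₀) (hu₀mem : ∀ x, u₀ x ∈ Icc (0 : ℝ) 1)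
    (u : ℝ × ℝ → ℝ) (hu : IsEntropySolution p V ρ u₀ u) :
    ∀ T > 0, (∫⁻ z in Ioo (0 : ℝ) T ×ˢ Ioo (0 : ℝ) 1,
      ENNReal.ofReal (V z.2 * (u z - ρ z.2) ^ 2)) < ⊤ := by
  exact energy_estimate_general p V ρ (hV.continuousOn.locallyIntegrableOn measurableSet_Ioo)
    (fun x hx => (hVpos x hx).le) hρ u₀ hu₀ hu₀mem u hu
end

section
/- Assume V ∈ C¹((0,1);(0,∞)) satisfies Condition (V1) and ρ ∈ C¹([0,1];(0,1)) satisfies Condition (V2). Then for any measurable u₀ : (0,1) → [0,1] there exists at most one entropy solution: if u₁, u₂ : (0,∞)×(0,1) → [0,1] are both entropy solutions of ∂_t u + ∂_x J(u) + V(x)(u − ρ(x)) = 0 with the same initial datum u₀, then u₁ = u₂ almost everywhere on (0,∞)×(0,1). -/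
open MeasureTheory Set Filter Topology

/-- Condition (V1): `limsup_{y→0+} y⁻² ∫₀^y [1/V(x) + 1/V(1−x)] dx < ∞`. -/
def CondV1 (V : ℝ → ℝ) : Prop :=
  Filter.limsup
    (fun y : ℝ => ENNReal.ofReal (1 / y ^ 2) *
      ∫⁻ x in Ioo (0 : ℝ) y, ENNReal.ofReal (1 / V x + 1 / V (1 - x)))
    (𝓝[>] (0 : ℝ)) < ⊤

/-- Condition (V2):
`lim_{y→0+} [∫₀^y V(x)(ρ(x)−ρ(0))² dx + ∫_{1−y}^1 V(x)(ρ(x)−ρ(1))² dx] = 0`. -/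
def CondV2 (V ρ : ℝ → ℝ) : Prop :=
  Filter.Tendsto
    (fun y : ℝ =>
      (∫⁻ x in Ioo (0 : ℝ) y, ENNReal.ofReal (V x * (ρ x - ρ 0) ^ 2)) +
      ∫⁻ x in Ioo (1 - y) (1 : ℝ), ENNReal.ofReal (V x * (ρ x - ρ 1) ^ 2))
    (𝓝[>] (0 : ℝ)) (𝓝 0)

/-!
An entropy solution, continued by its initial datum to negative times, satisfies the entropy
inequality for all test functions of `ℝ × (0, 1)`, so that the initial condition needs no separate
treatment. Doubling the variables with Kružkov entropies, the source `V (u - ρ)` helps as `V ≥ 0`,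
and the distance of two solutions on `(0, T) × [2ε, 1 - 2ε]` is bounded by
`K ε⁻¹ ∫ |u₁ - u₂|` over layers of width `ε` near the two ends of the interval.

No traces are available there. Instead, the boundary condition is encoded in the weight: testing
with the quadratic entropies centred at `ρ(0)` and at `ρ(1)`, condition (V2) yields that
`V (u - ρ)²` is integrable on bounded time intervals. By Cauchy–Schwarz,
`(ε⁻¹ ∫ |u₁ - u₂|)² ≤ (ε⁻² ∫ V⁻¹) (∫ V (u₁ - u₂)²)` over the layers; the first factor stays
bounded by (V1), and the second tends to zero because `V (u₁ - u₂)²` is integrable.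
-/

/-! ### Test functions -/

/-- A nonnegative `C²` test function of one variable with compact support inside `s`. Admissible
test functions on the strip are products of one with `s = univ` in time and one with `s = (0, 1)` in
space. -/
structure IsTestFun (s : Set ℝ) (g : ℝ → ℝ) : Prop where
  contDiff : ContDiff ℝ 2 g
  hasCompactSupport : HasCompactSupport g
  nonneg : ∀ x, 0 ≤ g x
  tsupport_subset : tsupport g ⊆ s

namespace IsTestFun

variable {s : Set ℝ} {g : ℝ → ℝ}

lemma of_eq_zero_off_Icc {a b : ℝ} (hg : ContDiff ℝ 2 g) (h₀ : ∀ x, 0 ≤ g x) (hs : Icc a b ⊆ s)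
    (h : ∀ x ∉ Icc a b, g x = 0) : IsTestFun s g where
  contDiff := hg
  hasCompactSupport := HasCompactSupport.intro isCompact_Icc h
  nonneg := h₀
  tsupport_subset :=
    (closure_minimal (Function.support_subset_iff'.2 h) isClosed_Icc).trans hs

lemma continuous (hg : IsTestFun s g) : Continuous g := hg.contDiff.continuous

lemma continuous_deriv (hg : IsTestFun s g) : Continuous (deriv g) :=
  hg.contDiff.continuous_deriv one_le_two

lemma integrable (hg : IsTestFun s g) : Integrable g :=
  hg.continuous.integrable_of_hasCompactSupport hg.hasCompactSupport

lemma integrable_deriv (hg : IsTestFun s g) : Integrable (deriv g) :=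
  hg.continuous_deriv.integrable_of_hasCompactSupport hg.hasCompactSupport.deriv

lemma integrable_mul_left (hg : IsTestFun s g) (hs : IsOpen s) {c : ℝ → ℝ}
    (hc : ContinuousOn c s) : Integrable fun x => c x * g x := by
  have hsub : tsupport (fun x => c x * g x) ⊆ tsupport g :=
    closure_mono fun x hx => right_ne_zero_of_mul hx
  refine Continuous.integrable_of_hasCompactSupport ?_ (hg.hasCompactSupport.mul_left (f := c))
  exact (hc.mul hg.continuous.continuousOn).continuous_of_tsupport_subset hs
    (hsub.trans hg.tsupport_subset)

lemma exists_bound (hg : IsTestFun s g) : ∃ M, 0 < M ∧ (∀ x, |g x| ≤ M) ∧ ∀ x, |deriv g x| ≤ M := by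
  obtain ⟨M, hM⟩ := hg.hasCompactSupport.exists_bound_of_continuous hg.continuous
  obtain ⟨N, hN⟩ := hg.hasCompactSupport.deriv.exists_bound_of_continuous hg.continuous_deriv
  exact ⟨max 1 (max M N), by positivity, fun x => (hM x).trans (by simp),
    fun x => (hN x).trans (by simp)⟩

lemma eq_zero (hg : IsTestFun s g) {x : ℝ} (hx : x ∉ s) : g x = 0 :=
  image_eq_zero_of_notMem_tsupport fun h => hx (hg.tsupport_subset h)

lemma deriv_eq_zero (hg : IsTestFun s g) {x : ℝ} (hx : x ∉ s) : deriv g x = 0 :=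
  image_eq_zero_of_notMem_tsupport fun h => hx (hg.tsupport_subset (tsupport_deriv_subset h))

lemma subset {t : Set ℝ} (hg : IsTestFun s g) (hst : tsupport g ⊆ t) : IsTestFun t g :=
  ⟨hg.contDiff, hg.hasCompactSupport, hg.nonneg, hst⟩

lemma mul (hg : IsTestFun s g) {h : ℝ → ℝ} (hh : ContDiff ℝ 2 h) (h₀ : ∀ x, 0 ≤ h x) :
    IsTestFun s fun x => g x * h x where
  contDiff := hg.contDiff.mul hh
  hasCompactSupport := hg.hasCompactSupport.mul_right
  nonneg x := mul_nonneg (hg.nonneg x) (h₀ x)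
  tsupport_subset :=
    (closure_mono fun _ hx => left_ne_zero_of_mul hx).trans hg.tsupport_subset

lemma const_mul (hg : IsTestFun s g) {c : ℝ} (hc : 0 ≤ c) : IsTestFun s fun x => c * g x := by
  simpa only [mul_comm c] using hg.mul contDiff_const fun _ => hc

end IsTestFun

/-! ### Integrability and limits of bounded multiples -/

section BoundedMultiples

variable {X : Type*} [MeasurableSpace X] {μ : Measure X}

lemma integrable_bdd_mul {A G : X → ℝ} {C : ℝ} (mA : Measurable A) (hA : ∀ z, |A z| ≤ C)
    (hG : Integrable G μ) : Integrable (fun z => A z * G z) μ :=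
  hG.bdd_mul (c := C) mA.aestronglyMeasurable (Eventually.of_forall hA)

lemma tendsto_integral_bdd_mul {A : ℕ → X → ℝ} {A' G : X → ℝ} {C : ℝ} (mA : ∀ n, Measurable (A n))
    (hA : ∀ n z, |A n z| ≤ C) (hG : Integrable G μ)
    (hlim : ∀ z, Tendsto (fun n => A n z) atTop (𝓝 (A' z))) :
    Tendsto (fun n => ∫ z, A n z * G z ∂μ) atTop (𝓝 (∫ z, A' z * G z ∂μ)) :=
  tendsto_integral_of_dominated_convergence (fun z => C * ‖G z‖)
    (fun n => (mA n).aestronglyMeasurable.mul hG.aestronglyMeasurable) (hG.norm.const_mul C)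
    (fun n => Eventually.of_forall fun z => by
      rw [norm_mul]; exact mul_le_mul_of_nonneg_right (hA n z) (norm_nonneg _))
    (Eventually.of_forall fun z => (hlim z).mul_const _)

end BoundedMultiples

/-! ### The entropy inequality on the whole plane -/

/-- The Heaviside function, with value `0` at `0`. -/
noncomputable def heaviside (t : ℝ) : ℝ := if 0 < t then 1 else 0

lemma heaviside_of_pos {t : ℝ} (ht : 0 < t) : heaviside t = 1 := if_pos ht

lemma heaviside_of_nonpos {t : ℝ} (ht : t ≤ 0) : heaviside t = 0 := if_neg ht.not_gt

lemma abs_heaviside_le_one (t : ℝ) : |heaviside t| ≤ 1 := by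
  unfold heaviside; split_ifs <;> simp

lemma abs_heaviside_mul_le (t x : ℝ) : |heaviside t * x| ≤ |x| := by
  rw [abs_mul]; exact mul_le_of_le_one_left (abs_nonneg x) (abs_heaviside_le_one t)

@[fun_prop]
lemma measurable_heaviside : Measurable heaviside :=
  Measurable.ite measurableSet_Ioi measurable_const measurable_const

/-- The function equal to `u` for positive times and to the initial datum `u₀` for all other times.
With this extension the initial condition becomes part of an inequality on the whole plane. -/
noncomputable def extendByDatum (u₀ : ℝ → ℝ) (u : ℝ × ℝ → ℝ) (z : ℝ × ℝ) : ℝ :=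
  if 0 < z.1 then u z else u₀ z.2

section ExtendByDatum

variable {u₀ : ℝ → ℝ} {u : ℝ × ℝ → ℝ}

lemma extendByDatum_of_pos {z : ℝ × ℝ} (hz : 0 < z.1) : extendByDatum u₀ u z = u z := if_pos hz

lemma extendByDatum_of_nonpos {z : ℝ × ℝ} (hz : z.1 ≤ 0) : extendByDatum u₀ u z = u₀ z.2 :=
  if_neg hz.not_gt

lemma measurable_extendByDatum (hu₀ : Measurable u₀) (hu : Measurable u) :
    Measurable (extendByDatum u₀ u) :=
  Measurable.ite (measurable_fst measurableSet_Ioi) hu (hu₀.comp measurable_snd)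

lemma extendByDatum_mem {s : Set ℝ} (hu₀ : ∀ x, u₀ x ∈ s) (hu : ∀ z, u z ∈ s) (z : ℝ × ℝ) :
    extendByDatum u₀ u z ∈ s := by
  unfold extendByDatum; split_ifs
  exacts [hu z, hu₀ z.2]

lemma integral_heaviside_mul {F : ℝ × ℝ → ℝ} (hF : ∀ z : ℝ × ℝ, z.2 ∉ Ioo (0 : ℝ) 1 → F z = 0) :
    ∫ z, heaviside z.1 * F z = ∫ z in Ioi (0 : ℝ) ×ˢ Ioo (0 : ℝ) 1, F z := by
  rw [← integral_indicator (measurableSet_Ioi.prod measurableSet_Ioo)]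
  refine integral_congr_ae (Eventually.of_forall fun z => ?_)
  by_cases ht : 0 < z.1 <;> by_cases hx : z.2 ∈ Ioo (0 : ℝ) 1 <;>
    simp [indicator, heaviside, ht, hx, hF]

lemma integral_extendByDatum_mul_deriv {f g h : ℝ → ℝ} (hg : IsTestFun univ g)
    (hh : IsTestFun (Ioo 0 1) h)
    (h_int : Integrable fun z : ℝ × ℝ => f (extendByDatum u₀ u z) * (deriv g z.1 * h z.2)) :
    ∫ z : ℝ × ℝ, f (extendByDatum u₀ u z) * (deriv g z.1 * h z.2) =
      (∫ x in Ioo (0 : ℝ) 1, f (u₀ x) * (g 0 * h x)) +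
        ∫ z in Ioi (0 : ℝ) ×ˢ Ioo (0 : ℝ) 1, f (u z) * (deriv g z.1 * h z.2) := by
  have hm : MeasurableSet (Iic (0 : ℝ) ×ˢ (univ : Set ℝ)) := measurableSet_Iic.prod .univ
  rw [← integral_add_compl hm h_int]
  congr 1
  · calc ∫ z in Iic (0 : ℝ) ×ˢ (univ : Set ℝ), f (extendByDatum u₀ u z) * (deriv g z.1 * h z.2)
        = ∫ z in Iic (0 : ℝ) ×ˢ (univ : Set ℝ), deriv g z.1 * (f (u₀ z.2) * h z.2) :=
          setIntegral_congr_fun hm fun z hz => by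
            simp only [extendByDatum_of_nonpos (mem_prod.1 hz).1]; ring
      _ = g 0 * ∫ x, f (u₀ x) * h x := by
          rw [Measure.volume_eq_prod, setIntegral_prod_mul (deriv g) (fun x => f (u₀ x) * h x),
            HasCompactSupport.integral_Iic_deriv_eq (hg.contDiff.of_le one_le_two)
              hg.hasCompactSupport 0, setIntegral_univ]
      _ = ∫ x in Ioo (0 : ℝ) 1, f (u₀ x) * (g 0 * h x) := by
          rw [← integral_const_mul, setIntegral_eq_integral_of_forall_compl_eq_zero
            fun x hx => by simp [hh.eq_zero hx]]
          exact integral_congr_ae (Eventually.of_forall fun x => by ring)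
  · rw [← integral_heaviside_mul fun z hz => by simp [hh.eq_zero hz],
      ← integral_indicator hm.compl]
    refine integral_congr_ae (Eventually.of_forall fun z => ?_)
    by_cases ht : 0 < z.1 <;> simp [indicator, heaviside, extendByDatum, ht]

end ExtendByDatum

@[fun_prop]
lemma contDiff_fluxJ (p : ℝ) : ContDiff ℝ 2 (fluxJ p) := by unfold fluxJ; fun_prop

lemma deriv_fluxJ (p v : ℝ) : deriv (fluxJ p) v = (2 * p - 1) * (1 - 2 * v) := by
  have h := ((hasDerivAt_id v).const_mul (2 * p - 1)).mul ((hasDerivAt_id v).const_sub 1)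
  exact (h.congr_deriv (by simp; ring)).deriv

lemma continuous_deriv_fluxJ (p : ℝ) : Continuous (deriv (fluxJ p)) :=
  (contDiff_fluxJ p).continuous_deriv one_le_two

lemma abs_deriv_fluxJ_le {v : ℝ} (p : ℝ) (hv : v ∈ Icc (0 : ℝ) 1) :
    |deriv (fluxJ p) v| ≤ |2 * p - 1| := by
  rw [deriv_fluxJ, abs_mul]
  exact mul_le_of_le_one_right (abs_nonneg _)
    (abs_le.2 ⟨by linarith [hv.2], by linarith [hv.1]⟩)

lemma abs_intervalIntegral_le {k u C : ℝ} (hk : k ∈ Icc (0 : ℝ) 1) (hu : u ∈ Icc (0 : ℝ) 1)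
    {r : ℝ → ℝ} (hr : ∀ v ∈ Icc (0 : ℝ) 1, |r v| ≤ C) : |∫ v in k..u, r v| ≤ C := by
  have hC : 0 ≤ C := (abs_nonneg _).trans (hr k hk)
  have h : |u - k| ≤ 1 := abs_le.2 ⟨by linarith [hk.2, hu.1], by linarith [hk.1, hu.2]⟩
  exact (intervalIntegral.norm_integral_le_of_norm_le_const (f := r) fun v hv =>
    hr v (uIcc_subset_Icc hk hu (uIoc_subset_uIcc hv))).trans (mul_le_of_le_one_right hC h)

section Primitive

variable {s : ℝ → ℝ} (k : ℝ)

lemma deriv_primitive (hs : Continuous s) : deriv (fun u => ∫ v in k..u, s v) = s :=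
  funext fun u => hs.deriv_integral s k u

lemma contDiff_primitive (hs : ContDiff ℝ 1 s) : ContDiff ℝ 2 fun u => ∫ v in k..u, s v := by
  refine (contDiff_succ_iff_deriv (n := 1)).2 ⟨fun u => ?_, by simp, ?_⟩
  · exact (intervalIntegral.integral_hasDerivAt_right (hs.continuous.intervalIntegrable _ _)
      (hs.continuous.stronglyMeasurableAtFilter _ _) hs.continuous.continuousAt).differentiableAt
  · rwa [deriv_primitive k hs.continuous]

lemma isLaxPair_primitive (p : ℝ) (hs : ContDiff ℝ 1 s) (hmono : Monotone s) :
    IsLaxPair p (fun u => ∫ v in k..u, s v) (fun u => ∫ v in k..u, deriv (fluxJ p) v * s v) := by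
  have hJ : ContDiff ℝ 1 fun v => deriv (fluxJ p) v * s v :=
    ((contDiff_succ_iff_deriv (n := 1)).1 (contDiff_fluxJ p)).2.2.mul hs
  refine ⟨contDiff_primitive k hs, contDiff_primitive k hJ, fun u => ?_, fun u => ?_⟩
  · rw [deriv_primitive k hs.continuous]; exact hmono.deriv_nonneg
  · rw [deriv_primitive k hJ.continuous, deriv_primitive k hs.continuous]

end Primitive

lemma exists_bound_comp_of_mem_Icc {X : Type*} {f : ℝ → ℝ} (hf : Continuous f) {w : X → ℝ}
    (hw : ∀ z, w z ∈ Icc (0 : ℝ) 1) : ∃ C, ∀ z, |f (w z)| ≤ C := by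
  obtain ⟨C, hC⟩ := isCompact_Icc.exists_bound_of_continuousOn (hf.continuousOn (s := Icc 0 1))
  exact ⟨C, fun z => hC _ (hw z)⟩

section Solution

variable {p : ℝ} {V ρ u₀ : ℝ → ℝ} {u : ℝ × ℝ → ℝ} {g h : ℝ → ℝ}

lemma IsEntropySolution.inequality_mul (hu : IsEntropySolution p V ρ u₀ u)
    (hg : IsTestFun univ g) (hh : IsTestFun (Ioo 0 1) h) {f q : ℝ → ℝ} (hfq : IsLaxPair p f q) :
    0 ≤ (∫ x in Ioo (0 : ℝ) 1, f (u₀ x) * (g 0 * h x)) +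
      (∫ z in Ioi (0 : ℝ) ×ˢ Ioo (0 : ℝ) 1,
        (f (u z) * (deriv g z.1 * h z.2) + q (u z) * (g z.1 * deriv h z.2))) -
      ∫ z in Ioi (0 : ℝ) ×ˢ Ioo (0 : ℝ) 1,
        deriv f (u z) * (V z.2 * (u z - ρ z.2)) * (g z.1 * h z.2) := by
  have hcs : HasCompactSupport fun z : ℝ × ℝ => g z.1 * h z.2 := by
    refine HasCompactSupport.intro
      (hg.hasCompactSupport.isCompact.prod hh.hasCompactSupport.isCompact) fun z hz => ?_
    rcases not_and_or.1 hz with hz | hz <;> simp [image_eq_zero_of_notMem_tsupport hz]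
  have key := hu.2.2 f q hfq (fun z => g z.1 * h z.2)
    ((hg.contDiff.comp contDiff_fst).mul (hh.contDiff.comp contDiff_snd)) hcs
    (fun z => mul_nonneg (hg.nonneg _) (hh.nonneg _)) fun z hz => by simp [hh.eq_zero hz]
  simp only [deriv_mul_const_field, deriv_const_mul_field] at key
  exact sub_nonneg.2 key

lemma IsEntropySolution.inequality_extendByDatum (hu : IsEntropySolution p V ρ u₀ u)
    (hu₀ : Measurable u₀) (hu₀_mem : ∀ x, u₀ x ∈ Icc (0 : ℝ) 1) (hg : IsTestFun univ g)
    (hh : IsTestFun (Ioo 0 1) h) {f q : ℝ → ℝ} (hfq : IsLaxPair p f q) :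
    0 ≤ (∫ z : ℝ × ℝ, f (extendByDatum u₀ u z) * (deriv g z.1 * h z.2)) +
      (∫ z : ℝ × ℝ, heaviside z.1 * q (extendByDatum u₀ u z) * (g z.1 * deriv h z.2)) -
      ∫ z : ℝ × ℝ, heaviside z.1 * (deriv f (extendByDatum u₀ u z) *
        (V z.2 * (extendByDatum u₀ u z - ρ z.2)) * (g z.1 * h z.2)) := by
  set w := extendByDatum u₀ u
  have hD : MeasurableSet (Ioi (0 : ℝ) ×ˢ Ioo (0 : ℝ) 1) := measurableSet_Ioi.prod measurableSet_Ioo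
  have hwu : ∀ z ∈ Ioi (0 : ℝ) ×ˢ Ioo (0 : ℝ) 1, w z = u z :=
    fun z hz => extendByDatum_of_pos hz.1
  have mw : Measurable w := measurable_extendByDatum hu₀ hu.1
  have bw : ∀ z, w z ∈ Icc (0 : ℝ) 1 := extendByDatum_mem hu₀_mem hu.2.1
  have mf := hfq.1.continuous
  have mq := hfq.2.1.continuous
  obtain ⟨A, hA⟩ := exists_bound_comp_of_mem_Icc mf bw
  obtain ⟨B, hB⟩ := exists_bound_comp_of_mem_Icc mq bw
  have If : Integrable fun z : ℝ × ℝ => f (w z) * (deriv g z.1 * h z.2) :=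
    integrable_bdd_mul (mf.measurable.comp mw) hA (hg.integrable_deriv.mul_prod hh.integrable)
  have Iq : Integrable fun z : ℝ × ℝ => q (w z) * (g z.1 * deriv h z.2) :=
    integrable_bdd_mul (mq.measurable.comp mw) hB (hg.integrable.mul_prod hh.integrable_deriv)
  have key := hu.inequality_mul hg hh hfq
  rw [integral_add (If.integrableOn.congr_fun (fun z hz => by simp only [hwu z hz]) hD)
    (Iq.integrableOn.congr_fun (fun z hz => by simp only [hwu z hz]) hD), ← add_assoc,
    ← integral_extendByDatum_mul_deriv hg hh If] at key
  simp only [mul_assoc (heaviside _)]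
  rw [integral_heaviside_mul fun z hz => by simp [hh.deriv_eq_zero hz],
    integral_heaviside_mul fun z hz => by simp [hh.eq_zero hz]]
  convert key using 2
  · congr 1
    exact setIntegral_congr_fun hD fun z hz => by simp only [hwu z hz]
  · exact setIntegral_congr_fun hD fun z hz => by simp only [hwu z hz]

end Solution

/-! ### Kružkov's inequality -/

/-- The entropy flux `sign (a - b) (J a - J b)` of Kružkov's entropy `a ↦ |a - b|`, written in a
form that is visibly continuous and symmetric. -/
noncomputable def kruzhkovFlux (p a b : ℝ) : ℝ := fluxJ p (max a b) - fluxJ p (min a b)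

lemma kruzhkovFlux_comm (p a b : ℝ) : kruzhkovFlux p a b = kruzhkovFlux p b a := by
  unfold kruzhkovFlux; rw [max_comm, min_comm]

lemma measurable_kruzhkovFlux {X : Type*} [MeasurableSpace X] (p : ℝ) {a b : X → ℝ}
    (ha : Measurable a) (hb : Measurable b) : Measurable fun z => kruzhkovFlux p (a z) (b z) :=
  have hJ := (contDiff_fluxJ p).continuous.measurable
  (hJ.comp (ha.max hb)).sub (hJ.comp (ha.min hb))

lemma abs_sub_le_one_of_mem_Icc {a b : ℝ} (ha : a ∈ Icc (0 : ℝ) 1) (hb : b ∈ Icc (0 : ℝ) 1) :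
    |a - b| ≤ 1 :=
  abs_le.2 ⟨by linarith [ha.1, hb.2], by linarith [ha.2, hb.1]⟩

section KruzhkovFlux

variable (p : ℝ) {a b c : ℝ} (ha : a ∈ Icc (0 : ℝ) 1) (hb : b ∈ Icc (0 : ℝ) 1)
include ha hb

lemma max_mem_Icc_zero_one : max a b ∈ Icc (0 : ℝ) 1 := ⟨le_max_of_le_left ha.1, max_le ha.2 hb.2⟩

lemma min_mem_Icc_zero_one : min a b ∈ Icc (0 : ℝ) 1 := ⟨le_min ha.1 hb.1, min_le_of_left_le ha.2⟩

lemma abs_fluxJ_sub_le : |fluxJ p a - fluxJ p b| ≤ |2 * p - 1| * |a - b| := by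
  have e : fluxJ p a - fluxJ p b = (2 * p - 1) * (1 - a - b) * (a - b) := by unfold fluxJ; ring
  rw [e, abs_mul, abs_mul]
  gcongr
  exact mul_le_of_le_one_right (abs_nonneg _)
    (abs_le.2 ⟨by linarith [ha.2, hb.2], by linarith [ha.1, hb.1]⟩)

lemma abs_kruzhkovFlux_le : |kruzhkovFlux p a b| ≤ |2 * p - 1| * |a - b| := by
  refine (abs_fluxJ_sub_le p (max_mem_Icc_zero_one ha hb) (min_mem_Icc_zero_one ha hb)).trans_eq ?_
  rw [max_sub_min_eq_abs', abs_abs]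

lemma abs_kruzhkovFlux_le_const : |kruzhkovFlux p a b| ≤ |2 * p - 1| :=
  (abs_kruzhkovFlux_le p ha hb).trans
    (mul_le_of_le_one_right (abs_nonneg _) (abs_sub_le_one_of_mem_Icc ha hb))

lemma abs_kruzhkovFlux_sub_le (hc : c ∈ Icc (0 : ℝ) 1) :
    |kruzhkovFlux p a b - kruzhkovFlux p a c| ≤ |2 * p - 1| * (2 * |b - c|) := by
  have hmax : |max a b - max a c| ≤ |b - c| := by simpa using abs_max_sub_max_le_max a b a c
  have hmin : |min a b - min a c| ≤ |b - c| := by simpa using abs_min_sub_min_le_max a b a c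
  calc |kruzhkovFlux p a b - kruzhkovFlux p a c|
      = |(fluxJ p (max a b) - fluxJ p (max a c)) - (fluxJ p (min a b) - fluxJ p (min a c))| := by
        unfold kruzhkovFlux; ring_nf
    _ ≤ |2 * p - 1| * |max a b - max a c| + |2 * p - 1| * |min a b - min a c| :=
        (abs_sub _ _).trans (add_le_add
          (abs_fluxJ_sub_le p (max_mem_Icc_zero_one ha hb) (max_mem_Icc_zero_one ha hc))
          (abs_fluxJ_sub_le p (min_mem_Icc_zero_one ha hb) (min_mem_Icc_zero_one ha hc)))
    _ ≤ |2 * p - 1| * |b - c| + |2 * p - 1| * |b - c| := by gcongr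
    _ = |2 * p - 1| * (2 * |b - c|) := by ring

end KruzhkovFlux

lemma measurable_realSign : Measurable Real.sign :=
  Measurable.ite measurableSet_Iio measurable_const
    (Measurable.ite measurableSet_Ioi measurable_const measurable_const)

lemma abs_realSign_le_one (r : ℝ) : |Real.sign r| ≤ 1 := by
  rcases Real.sign_apply_eq r with h | h | h <;> simp [h]

/-- The `n`-th member of a family of smooth increasing functions bounded by `1` which converges
pointwise to `v ↦ sign (v - k)`. -/
noncomputable def smoothSign (k : ℝ) (n : ℕ) (v : ℝ) : ℝ :=
  2 / Real.pi * Real.arctan (n * (v - k))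

section SmoothSign

variable (k : ℝ) (n : ℕ)

lemma contDiff_smoothSign : ContDiff ℝ 1 (smoothSign k n) :=
  contDiff_const.mul (Real.contDiff_arctan.comp (by fun_prop))

lemma monotone_smoothSign : Monotone (smoothSign k n) := fun a b hab => by
  unfold smoothSign
  gcongr

lemma abs_smoothSign_le_one (v : ℝ) : |smoothSign k n v| ≤ 1 := by
  have h : |Real.arctan (n * (v - k))| ≤ Real.pi / 2 :=
    abs_le.2 ⟨(Real.neg_pi_div_two_lt_arctan _).le, (Real.arctan_lt_pi_div_two _).le⟩
  calc |smoothSign k n v| = 2 / Real.pi * |Real.arctan (n * (v - k))| := by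
        rw [smoothSign, abs_mul, abs_of_pos (by positivity : 0 < 2 / Real.pi)]
    _ ≤ 2 / Real.pi * (Real.pi / 2) := by gcongr
    _ = 1 := by field_simp

lemma tendsto_smoothSign (v : ℝ) :
    Tendsto (fun n => smoothSign k n v) atTop (𝓝 (Real.sign (v - k))) := by
  have hlim {l : ℝ} {F : Filter ℝ} (hF : Tendsto Real.arctan F (𝓝 (l * (Real.pi / 2))))
      (h : Tendsto (fun n : ℕ => (n : ℝ) * (v - k)) atTop F) :
      Tendsto (fun n => smoothSign k n v) atTop (𝓝 l) := by
    have e : 2 / Real.pi * (l * (Real.pi / 2)) = l := by field_simp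
    exact e ▸ (hF.comp h).const_mul (2 / Real.pi)
  rcases lt_trichotomy (v - k) 0 with h | h | h
  · rw [Real.sign_of_neg h]
    refine hlim ?_ (tendsto_natCast_atTop_atTop.atTop_mul_const_of_neg h)
    simpa using Real.tendsto_arctan_atBot.mono_right nhdsWithin_le_nhds
  · simp [smoothSign, h]
  · rw [Real.sign_of_pos h]
    refine hlim ?_ (tendsto_natCast_atTop_atTop.atTop_mul_const h)
    simpa using Real.tendsto_arctan_atTop.mono_right nhdsWithin_le_nhds

lemma intervalIntegral_mul_sign (u : ℝ) (r : ℝ → ℝ) :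
    ∫ v in k..u, r v * Real.sign (v - k) = ∫ v in (min u k)..(max u k), r v := by
  rcases le_total k u with h | h
  · rw [min_eq_right h, max_eq_left h, intervalIntegral.integral_of_le h,
      intervalIntegral.integral_of_le h]
    exact setIntegral_congr_fun measurableSet_Ioc fun v hv => by
      simp [Real.sign_of_pos (sub_pos.2 hv.1)]
  · rw [min_eq_left h, max_eq_right h, intervalIntegral.integral_symm,
      intervalIntegral.integral_of_le h, intervalIntegral.integral_of_le h, ← integral_neg,
      integral_Ioc_eq_integral_Ioo, integral_Ioc_eq_integral_Ioo]
    exact setIntegral_congr_fun measurableSet_Ioo fun v hv => by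
      simp [Real.sign_of_neg (sub_neg.2 hv.2)]

lemma tendsto_intervalIntegral_mul_smoothSign (u : ℝ) {r : ℝ → ℝ} (hr : Continuous r) :
    Tendsto (fun n => ∫ v in k..u, r v * smoothSign k n v) atTop
      (𝓝 (∫ v in (min u k)..(max u k), r v)) := by
  rw [← intervalIntegral_mul_sign]
  refine intervalIntegral.tendsto_integral_filter_of_dominated_convergence (fun v => |r v|)
    (Eventually.of_forall fun n => ?_) (Eventually.of_forall fun n => ?_)
    (hr.abs.intervalIntegrable _ _)
    (Eventually.of_forall fun v _ => (tendsto_smoothSign k v).const_mul _)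
  · exact (hr.mul (contDiff_smoothSign k n).continuous).aestronglyMeasurable
  · refine Eventually.of_forall fun v _ => ?_
    rw [Real.norm_eq_abs, abs_mul]
    exact mul_le_of_le_one_right (abs_nonneg _) (abs_smoothSign_le_one _ _ _)

lemma tendsto_intervalIntegral_smoothSign (u : ℝ) :
    Tendsto (fun n => ∫ v in k..u, smoothSign k n v) atTop (𝓝 |u - k|) := by
  simpa [max_sub_min_eq_abs'] using
    tendsto_intervalIntegral_mul_smoothSign k u (r := fun _ => 1) continuous_const

lemma tendsto_intervalIntegral_deriv_fluxJ_mul_smoothSign (p u : ℝ) :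
    Tendsto (fun n => ∫ v in k..u, deriv (fluxJ p) v * smoothSign k n v) atTop
      (𝓝 (kruzhkovFlux p u k)) := by
  have h := tendsto_intervalIntegral_mul_smoothSign k u (continuous_deriv_fluxJ p)
  rwa [intervalIntegral.integral_deriv_eq_sub
    (fun x _ => (contDiff_fluxJ p).differentiable two_ne_zero x)
    ((continuous_deriv_fluxJ p).intervalIntegrable _ _)] at h

lemma abs_intervalIntegral_deriv_fluxJ_mul_smoothSign_le (p : ℝ) {u : ℝ}
    (hk : k ∈ Icc (0 : ℝ) 1) (hu : u ∈ Icc (0 : ℝ) 1) :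
    |∫ v in k..u, deriv (fluxJ p) v * smoothSign k n v| ≤ |2 * p - 1| :=
  abs_intervalIntegral_le hk hu fun v hv => by
    rw [abs_mul]
    exact (mul_le_of_le_one_right (abs_nonneg _) (abs_smoothSign_le_one k n v)).trans
      (abs_deriv_fluxJ_le p hv)

end SmoothSign

/-- `w` takes values in `[0, 1]` and satisfies Kružkov's entropy inequalities for
`∂ₜ w + H(t) (∂ₓ J(w) + V (w - ρ)) = 0` on `ℝ × s`, where `H` is the Heaviside function. -/
structure IsKruzhkovOn (s : Set ℝ) (p : ℝ) (V ρ : ℝ → ℝ) (w : ℝ × ℝ → ℝ) : Prop where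
  measurable : Measurable w
  mem_Icc : ∀ z, w z ∈ Icc (0 : ℝ) 1
  inequality : ∀ k ∈ Icc (0 : ℝ) 1, ∀ g h, IsTestFun univ g → IsTestFun s h →
    0 ≤ ∫ z : ℝ × ℝ, (|w z - k| * (deriv g z.1 * h z.2) +
      heaviside z.1 * (kruzhkovFlux p (w z) k * (g z.1 * deriv h z.2) -
        Real.sign (w z - k) * (V z.2 * (w z - ρ z.2)) * (g z.1 * h z.2)))

lemma integrable_source {s : Set ℝ} (hs : IsOpen s) {V ρ : ℝ → ℝ} (hV : ContinuousOn V s)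
    (hρ : ContinuousOn ρ s) {w : ℝ × ℝ → ℝ} (mw : Measurable w) {C : ℝ} (bw : ∀ z, |w z| ≤ C)
    {g h : ℝ → ℝ} (hg : Integrable g) (hh : IsTestFun s h) :
    Integrable fun z : ℝ × ℝ => V z.2 * (w z - ρ z.2) * (g z.1 * h z.2) := by
  have h₁ := integrable_bdd_mul mw bw (hg.mul_prod (hh.integrable_mul_left hs hV))
  have h₂ := hg.mul_prod (hh.integrable_mul_left hs (hV.mul hρ))
  refine (h₁.sub h₂).congr (Eventually.of_forall fun z => ?_)
  simp only [Pi.sub_apply, Pi.mul_apply]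
  ring

lemma abs_le_one_of_mem_Icc {a : ℝ} (ha : a ∈ Icc (0 : ℝ) 1) : |a| ≤ 1 :=
  abs_le.2 ⟨by linarith [ha.1], ha.2⟩

lemma IsEntropySolution.isKruzhkovOn {p : ℝ} {V ρ u₀ : ℝ → ℝ} {u : ℝ × ℝ → ℝ}
    (hu : IsEntropySolution p V ρ u₀ u) (hV : ContinuousOn V (Ioo 0 1))
    (hρ : ContinuousOn ρ (Ioo 0 1)) (hu₀ : Measurable u₀) (hu₀_mem : ∀ x, u₀ x ∈ Icc (0 : ℝ) 1) :
    IsKruzhkovOn (Ioo 0 1) p V ρ (extendByDatum u₀ u) := by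
  have mw := measurable_extendByDatum hu₀ hu.1
  have bw := extendByDatum_mem hu₀_mem hu.2.1
  refine ⟨mw, bw, fun k hk g h hg hh => ?_⟩
  have key n := hu.inequality_extendByDatum hu₀ hu₀_mem hg hh
    (isLaxPair_primitive k p (contDiff_smoothSign k n) (monotone_smoothSign k n))
  simp only [deriv_primitive k (contDiff_smoothSign k _).continuous] at key
  set w := extendByDatum u₀ u
  have mH : Measurable fun z : ℝ × ℝ => heaviside z.1 := by fun_prop
  have I₁ : Integrable fun z : ℝ × ℝ => deriv g z.1 * h z.2 :=
    hg.integrable_deriv.mul_prod hh.integrable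
  have I₂ : Integrable fun z : ℝ × ℝ => g z.1 * deriv h z.2 :=
    hg.integrable.mul_prod hh.integrable_deriv
  have I₃ := integrable_bdd_mul mH (fun z => abs_heaviside_le_one z.1)
    (integrable_source isOpen_Ioo hV hρ mw (fun z => abs_le_one_of_mem_Icc (bw z)) hg.integrable hh)
  have J₁ := integrable_bdd_mul (mw.sub_const k).abs (fun z => (abs_abs _).trans_le
    (abs_sub_le_one_of_mem_Icc (bw z) hk)) I₁
  have J₂ := integrable_bdd_mul (A := fun z => heaviside z.1 * kruzhkovFlux p (w z) k)
    (mH.mul (measurable_kruzhkovFlux p mw measurable_const))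
    (fun z => (abs_heaviside_mul_le _ _).trans (abs_kruzhkovFlux_le_const p (bw z) hk)) I₂
  have J₃ := integrable_bdd_mul (A := fun z => Real.sign (w z - k))
    (measurable_realSign.comp (mw.sub_const k)) (fun z => abs_realSign_le_one _) I₃
  have lim₁ := tendsto_integral_bdd_mul (A := fun n z => ∫ v in k..w z, smoothSign k n v)
    (fun n => (contDiff_primitive k (contDiff_smoothSign k n)).continuous.measurable.comp mw)
    (fun n z => abs_intervalIntegral_le hk (bw z) fun v _ => abs_smoothSign_le_one k n v) I₁
    fun z => tendsto_intervalIntegral_smoothSign k (w z)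
  have lim₂ := tendsto_integral_bdd_mul
    (A := fun n z => heaviside z.1 * ∫ v in k..w z, deriv (fluxJ p) v * smoothSign k n v)
    (fun n => mH.mul ((isLaxPair_primitive k p (contDiff_smoothSign k n)
      (monotone_smoothSign k n)).2.1.continuous.measurable.comp mw))
    (fun n z => (abs_heaviside_mul_le _ _).trans
      (abs_intervalIntegral_deriv_fluxJ_mul_smoothSign_le k n p hk (bw z))) I₂
    fun z => (tendsto_intervalIntegral_deriv_fluxJ_mul_smoothSign k p (w z)).const_mul _
  have lim₃ := tendsto_integral_bdd_mul (A := fun n z => smoothSign k n (w z))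
    (fun n => (contDiff_smoothSign k n).continuous.measurable.comp mw)
    (fun n z => abs_smoothSign_le_one k n (w z)) I₃ fun z => tendsto_smoothSign k (w z)
  have nonneg := ge_of_tendsto' ((lim₁.add lim₂).sub lim₃) fun n => (key n).trans_eq (by
    congr 2; ext z; ring)
  have split := integral_sub (J₁.add J₂) J₃
  rw [integral_add' J₁ J₂] at split
  exact (nonneg.trans_eq split.symm).trans_eq (by congr 1; ext z; simp only [Pi.add_apply]; ring)

/-! ### Convolution kernels and moduli of continuity -/

section ConvolutionKernel

variable {X : Type*} [MeasurableSpace X] [AddCommGroup X] [MeasurableAdd₂ X] [MeasurableNeg X]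
  {μ : Measure X} [SFinite μ] [μ.IsAddLeftInvariant] {G k : X → ℝ}

lemma integrable_snd_mul_sub (hG : Integrable G μ) (hk : Integrable k μ) :
    Integrable (fun q : X × X => G q.2 * k (q.1 - q.2)) (μ.prod μ) :=
  hG.convolution_integrand (ContinuousLinearMap.mul ℝ ℝ) hk

lemma integral_snd_mul_sub (hG : Integrable G μ) (hk : Integrable k μ) :
    ∫ q, G q.2 * k (q.1 - q.2) ∂μ.prod μ = (∫ z, G z ∂μ) * ∫ z, k z ∂μ := by
  rw [integral_prod_symm _ (integrable_snd_mul_sub hG hk)]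
  simp only [integral_const_mul, integral_sub_right_eq_self k, integral_mul_const]

variable [μ.IsNegInvariant]

lemma integrable_fst_mul_sub (hG : Integrable G μ) (hk : Integrable k μ) :
    Integrable (fun q : X × X => G q.1 * k (q.1 - q.2)) (μ.prod μ) := by
  simpa [Function.comp_def] using
    (hG.convolution_integrand (ContinuousLinearMap.mul ℝ ℝ) hk.comp_neg).swap

lemma integral_fst_mul_sub (hG : Integrable G μ) (hk : Integrable k μ) :
    ∫ q, G q.1 * k (q.1 - q.2) ∂μ.prod μ = (∫ z, G z ∂μ) * ∫ z, k z ∂μ := by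
  rw [integral_prod _ (integrable_fst_mul_sub hG hk)]
  simp only [integral_const_mul, integral_sub_left_eq_self k, integral_mul_const]

lemma integral_nonneg_of_le_mul_sub {e G' k' : X → ℝ} {D : X × X → ℝ} (hD : Integrable D (μ.prod μ))
    (hD₀ : 0 ≤ ∫ q, D q ∂μ.prod μ) (hG : Integrable G μ) (he : Integrable e μ)
    (hG' : Integrable G' μ) (hk : Integrable k μ) (hk' : Integrable k' μ) (hk₁ : ∫ z, k z ∂μ = 1)
    (hle : ∀ q, D q ≤ G q.1 * k (q.1 - q.2)
      + (e q.1 * k (q.1 - q.2) + e q.2 * k (q.1 - q.2)) + G' q.1 * k' (q.1 - q.2)) :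
    0 ≤ ∫ z, G z ∂μ + 2 * ∫ z, e z ∂μ + (∫ z, G' z ∂μ) * ∫ z, k' z ∂μ := by
  have iG := integrable_fst_mul_sub hG hk
  have ie₁ := integrable_fst_mul_sub he hk
  have ie₂ := integrable_snd_mul_sub he hk
  have iG' := integrable_fst_mul_sub hG' hk'
  refine (hD₀.trans (integral_mono hD ((iG.add (ie₁.add ie₂)).add iG') hle)).trans_eq
    ((integral_add (iG.add (ie₁.add ie₂)) iG').trans ?_)
  rw [integral_add' iG (ie₁.add ie₂), integral_add' ie₁ ie₂, integral_fst_mul_sub hG hk,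
    integral_fst_mul_sub he hk, integral_snd_mul_sub he hk, integral_fst_mul_sub hG' hk', hk₁]
  ring

end ConvolutionKernel

lemma exists_integrable_modulus {X F : Type*} [MetricSpace X] [ProperSpace X] [MeasurableSpace X]
    [BorelSpace X] [NormedAddCommGroup F] [NormedSpace ℝ F] {μ : Measure X} [μ.Regular]
    {v : X → F} (hv : LocallyIntegrable v μ) {K : Set X} (hK : IsCompact K) {η : ℝ} (hη : 0 < η) :
    ∃ e : X → ℝ, Integrable e μ ∧ (∀ z, 0 ≤ e z) ∧ ∫ z, e z ∂μ ≤ η ∧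
      ∃ δ > 0, ∀ z ∈ K, ∀ w, dist z w < δ → ‖v z - v w‖ ≤ e z + e w := by
  have hK' : IsCompact (Metric.cthickening 1 K) := hK.cthickening
  set K' := Metric.cthickening 1 K
  have hsub {z w} (hz : z ∈ K) (hzw : dist z w < 1) : w ∈ K' :=
    Metric.mem_cthickening_of_dist_le w z 1 K hz (by rw [dist_comm]; exact hzw.le)
  have iv : Integrable (K'.indicator v) μ :=
    (hv.integrableOn_isCompact hK').integrable_indicator hK'.measurableSet
  obtain ⟨c, hc_supp, hc_int, hc, ic⟩ := iv.exists_hasCompactSupport_integral_sub_le (half_pos hη)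
  set ζ := η / 2 / (μ.real K' + 1)
  have hζ : 0 < ζ := by positivity
  obtain ⟨δ, hδ, hcδ⟩ :=
    Metric.uniformContinuous_iff.1 (hc_supp.uniformContinuous_of_continuous hc) ζ hζ
  have iζ : Integrable (K'.indicator fun _ => ζ) μ :=
    (integrableOn_const hK'.measure_ne_top).integrable_indicator hK'.measurableSet
  refine ⟨fun z => ‖K'.indicator v z - c z‖ + K'.indicator (fun _ => ζ) z, (iv.sub ic).norm.add iζ,
    fun z => add_nonneg (norm_nonneg _) (indicator_nonneg (fun _ _ => hζ.le) _), ?_, min 1 δ,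
    lt_min one_pos hδ, fun z hz w hzw => ?_⟩
  · have hζ_int : ∫ z, K'.indicator (fun _ => ζ) z ∂μ ≤ η / 2 := by
      rw [integral_indicator_const _ hK'.measurableSet, smul_eq_mul, mul_div_assoc',
        div_le_iff₀ (by positivity)]
      nlinarith [measureReal_nonneg (μ := μ) (s := K')]
    exact (integral_add (iv.sub ic).norm iζ).trans_le
      ((add_le_add hc_int hζ_int).trans_eq (add_halves η))
  · have hzK := hsub hz (by simp : dist z z < 1)
    have hwK := hsub hz (hzw.trans_le (min_le_left _ _))
    have hczw : ‖c z - c w‖ < ζ := by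
      rw [← dist_eq_norm]; exact hcδ (hzw.trans_le (min_le_right _ _))
    simp only [indicator_of_mem hzK, indicator_of_mem hwK]
    calc ‖v z - v w‖ = ‖(v z - c z) - (v w - c w) + (c z - c w)‖ := by congr 1; abel
      _ ≤ ‖v z - c z‖ + ‖v w - c w‖ + ζ :=
        (norm_add_le _ _).trans (add_le_add (norm_sub_le _ _) hczw.le)
      _ ≤ ‖v z - c z‖ + ζ + (‖v w - c w‖ + ζ) := by linarith

lemma exists_mollifier {δ : ℝ} (hδ : 0 < δ) :
    ∃ α, IsTestFun (Metric.ball 0 δ) α ∧ ∫ t, α t = 1 := by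
  let f : ContDiffBump (0 : ℝ) := ⟨δ / 4, δ / 2, by positivity, by linarith⟩
  refine ⟨f.normed volume, ⟨f.contDiff_normed, f.hasCompactSupport_normed, f.nonneg_normed, ?_⟩,
    f.integral_normed⟩
  rw [f.tsupport_normed_eq]
  exact Metric.closedBall_subset_ball (half_lt_self hδ)

/-! ### Doubling of variables -/

lemma IsTestFun.differentiable {s : Set ℝ} {g : ℝ → ℝ} (hg : IsTestFun s g) :
    Differentiable ℝ g :=
  hg.contDiff.differentiable two_ne_zero

lemma IsTestFun.comp_const_sub {s : Set ℝ} {g : ℝ → ℝ} (hg : IsTestFun s g) (a : ℝ) :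
    IsTestFun ((fun x => a - x) ⁻¹' s) fun x => g (a - x) where
  contDiff := hg.contDiff.comp (by fun_prop)
  hasCompactSupport := hg.hasCompactSupport.comp_homeomorph (Homeomorph.subLeft a)
  nonneg x := hg.nonneg (a - x)
  tsupport_subset := (tsupport_comp_eq_preimage g (Homeomorph.subLeft a)).trans_subset
    (preimage_mono hg.tsupport_subset)

lemma deriv_mul_comp_sub_const {f g : ℝ → ℝ} (hf : Differentiable ℝ f) (hg : Differentiable ℝ g)
    (a x : ℝ) :
    deriv (fun x => f x * g (x - a)) x = deriv f x * g (x - a) + f x * deriv g (x - a) := by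
  rw [deriv_fun_mul (hf x) (by fun_prop), deriv_comp_sub_const]

/-- The function of two points `q.1`, `q.2` of the `(t, x)`-plane from which the doubled test
functions are made: `ψ ⊗ χ` at `q.1` times the kernel `α ⊗ β` at `q.1 - q.2`. -/
def doubledTest (ψ χ α β : ℝ → ℝ) (q : (ℝ × ℝ) × (ℝ × ℝ)) : ℝ :=
  ψ q.1.1 * χ q.1.2 * (α (q.1.1 - q.2.1) * β (q.1.2 - q.2.2))

/-- The sum of the integrands of the two Kružkov inequalities for `w₁` and `w₂`, each taken with the
value of the other solution as constant and tested with `doubledTest ψ χ α β`. The derivatives of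
the kernel `α ⊗ β` cancel, except for the term with the factor `H(t) - H(s)`. -/
noncomputable def doubledIntegrand (p : ℝ) (V ρ : ℝ → ℝ) (w₁ w₂ : ℝ × ℝ → ℝ) (ψ χ α β : ℝ → ℝ)
    (q : (ℝ × ℝ) × (ℝ × ℝ)) : ℝ :=
  |w₁ q.1 - w₂ q.2| * doubledTest (deriv ψ) χ α β q
    + heaviside q.1.1 * kruzhkovFlux p (w₁ q.1) (w₂ q.2) * doubledTest ψ (deriv χ) α β q
    + (heaviside q.1.1 - heaviside q.2.1) * kruzhkovFlux p (w₁ q.1) (w₂ q.2)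
      * doubledTest ψ χ α (deriv β) q
    - Real.sign (w₁ q.1 - w₂ q.2) * (heaviside q.1.1 * (V q.1.2 * (w₁ q.1 - ρ q.1.2))
      - heaviside q.2.1 * (V q.2.2 * (w₂ q.2 - ρ q.2.2))) * doubledTest ψ χ α β q

lemma integrable_bdd_mul_doubledTest {A : (ℝ × ℝ) × (ℝ × ℝ) → ℝ} {C : ℝ} (mA : Measurable A)
    (hA : ∀ q, |A q| ≤ C) {ψ χ α β : ℝ → ℝ} (hψ : Integrable ψ) (hχ : Integrable χ)
    (hα : Integrable α) (hβ : Integrable β) :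
    Integrable fun q => A q * doubledTest ψ χ α β q :=
  integrable_bdd_mul mA hA (integrable_fst_mul_sub (hψ.mul_prod hχ) (hα.mul_prod hβ))

section Doubling

variable {p N : ℝ} {V ρ : ℝ → ℝ} {w₁ w₂ : ℝ × ℝ → ℝ} {s : Set ℝ} {ψ χ α β : ℝ → ℝ}
  (h₁ : IsKruzhkovOn s p V ρ w₁) (h₂ : IsKruzhkovOn s p V ρ w₂)

include h₁ h₂

lemma integrable_abs_sub_mul_doubledTest (hψ : Integrable ψ) (hχ : Integrable χ)
    (hα : Integrable α) (hβ : Integrable β) :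
    Integrable fun q => |w₁ q.1 - w₂ q.2| * doubledTest ψ χ α β q := by
  have m₁ := h₁.measurable
  have m₂ := h₂.measurable
  exact integrable_bdd_mul_doubledTest (by fun_prop) (fun q => (abs_abs _).trans_le
    (abs_sub_le_one_of_mem_Icc (h₁.mem_Icc q.1) (h₂.mem_Icc q.2))) hψ hχ hα hβ

lemma integrable_kruzhkovFlux_mul_doubledTest {H : (ℝ × ℝ) × (ℝ × ℝ) → ℝ} (mH : Measurable H)
    (hH : ∀ q, |H q| ≤ 1) (hψ : Integrable ψ) (hχ : Integrable χ) (hα : Integrable α)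
    (hβ : Integrable β) :
    Integrable fun q => H q * kruzhkovFlux p (w₁ q.1) (w₂ q.2) * doubledTest ψ χ α β q := by
  refine integrable_bdd_mul_doubledTest (C := |2 * p - 1|)
    (mH.mul (measurable_kruzhkovFlux p (h₁.measurable.comp measurable_fst)
      (h₂.measurable.comp measurable_snd))) (fun q => ?_) hψ hχ hα hβ
  rw [Pi.mul_apply, abs_mul]
  exact (mul_le_of_le_one_left (abs_nonneg _) (hH q)).trans
    (abs_kruzhkovFlux_le_const p (h₁.mem_Icc _) (h₂.mem_Icc _))

lemma integrable_source_mul_doubledTest {H B : (ℝ × ℝ) × (ℝ × ℝ) → ℝ} (mH : Measurable H)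
    (hH : ∀ q, |H q| ≤ 1) (mB : Measurable B) (hB : ∀ q, |B q| ≤ N)
    (hψ : Integrable ψ) (hχ : Integrable χ) (hα : Integrable α) (hβ : Integrable β) :
    Integrable fun q => Real.sign (w₁ q.1 - w₂ q.2) * (H q * B q) * doubledTest ψ χ α β q := by
  have m₁ := h₁.measurable
  have m₂ := h₂.measurable
  refine integrable_bdd_mul_doubledTest (C := N)
    ((measurable_realSign.comp (by fun_prop)).mul (mH.mul mB)) (fun q => ?_) hψ hχ hα hβ
  rw [Pi.mul_apply, Pi.mul_apply, abs_mul, abs_mul]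
  exact (mul_le_of_le_one_left (by positivity) (abs_realSign_le_one _)).trans
    ((mul_le_of_le_one_left (abs_nonneg _) (hH q)).trans (hB q))

variable (hV : Measurable V) (hρ : Measurable ρ)
  (hN : ∀ x, ∀ b ∈ Icc (0 : ℝ) 1, |V x * (b - ρ x)| ≤ N)
  (hψ : IsTestFun univ ψ) (hχ : IsTestFun s χ) (hα : IsTestFun univ α) (hβ : IsTestFun univ β)

include hV hρ hN hψ hχ hα hβ

lemma doubled_inequality_fst (hχβ : ∀ y, IsTestFun s fun x => χ x * β (x - y)) :
    let F := fun q => |w₁ q.1 - w₂ q.2| * doubledTest (deriv ψ) χ α β q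
      + |w₁ q.1 - w₂ q.2| * doubledTest ψ χ (deriv α) β q
      + heaviside q.1.1 * kruzhkovFlux p (w₁ q.1) (w₂ q.2) * doubledTest ψ (deriv χ) α β q
      + heaviside q.1.1 * kruzhkovFlux p (w₁ q.1) (w₂ q.2) * doubledTest ψ χ α (deriv β) q
      - Real.sign (w₁ q.1 - w₂ q.2) * (heaviside q.1.1 * (V q.1.2 * (w₁ q.1 - ρ q.1.2)))
        * doubledTest ψ χ α β q
    Integrable F ∧ 0 ≤ ∫ q, F q := by
  intro F
  have m₁ := h₁.measurable
  have mH : Measurable fun q : (ℝ × ℝ) × (ℝ × ℝ) => heaviside q.1.1 := by fun_prop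
  have hH (q : (ℝ × ℝ) × (ℝ × ℝ)) : |heaviside q.1.1| ≤ 1 := abs_heaviside_le_one _
  have hF : Integrable F :=
    ((((integrable_abs_sub_mul_doubledTest h₁ h₂ hψ.integrable_deriv hχ.integrable hα.integrable
      hβ.integrable).add (integrable_abs_sub_mul_doubledTest h₁ h₂ hψ.integrable hχ.integrable
      hα.integrable_deriv hβ.integrable)).add (integrable_kruzhkovFlux_mul_doubledTest h₁ h₂ mH hH
      hψ.integrable hχ.integrable_deriv hα.integrable hβ.integrable)).add
      (integrable_kruzhkovFlux_mul_doubledTest h₁ h₂ mH hH hψ.integrable hχ.integrable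
      hα.integrable hβ.integrable_deriv)).sub (integrable_source_mul_doubledTest h₁ h₂ mH hH
      (by fun_prop) (fun q => hN _ _ (h₁.mem_Icc q.1)) hψ.integrable hχ.integrable hα.integrable
      hβ.integrable)
  refine ⟨hF, ?_⟩
  rw [Measure.volume_eq_prod, integral_prod_symm _ hF]
  refine integral_nonneg fun z' => ?_
  have key := h₁.inequality (w₂ z') (h₂.mem_Icc z') (fun t => ψ t * α (t - z'.1))
    (fun x => χ x * β (x - z'.2))
    (hψ.mul (hα.contDiff.comp (by fun_prop)) fun t => hα.nonneg _) (hχβ z'.2)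
  refine key.trans_eq (integral_congr_ae (Eventually.of_forall fun z => ?_))
  simp only [F, deriv_mul_comp_sub_const hψ.differentiable hα.differentiable,
    deriv_mul_comp_sub_const hχ.differentiable hβ.differentiable, doubledTest]
  ring

lemma doubled_inequality_snd (hχβ : ∀ x, IsTestFun s fun y => χ x * β (x - y)) :
    let F := fun q => - (|w₁ q.1 - w₂ q.2| * doubledTest ψ χ (deriv α) β q)
      - heaviside q.2.1 * kruzhkovFlux p (w₁ q.1) (w₂ q.2) * doubledTest ψ χ α (deriv β) q
      + Real.sign (w₁ q.1 - w₂ q.2) * (heaviside q.2.1 * (V q.2.2 * (w₂ q.2 - ρ q.2.2)))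
        * doubledTest ψ χ α β q
    Integrable F ∧ 0 ≤ ∫ q, F q := by
  intro F
  have m₂ := h₂.measurable
  have mH : Measurable fun q : (ℝ × ℝ) × (ℝ × ℝ) => heaviside q.2.1 := by fun_prop
  have hH (q : (ℝ × ℝ) × (ℝ × ℝ)) : |heaviside q.2.1| ≤ 1 := abs_heaviside_le_one _
  have hF : Integrable F :=
    ((integrable_abs_sub_mul_doubledTest h₁ h₂ hψ.integrable hχ.integrable hα.integrable_deriv
      hβ.integrable).neg.sub (integrable_kruzhkovFlux_mul_doubledTest h₁ h₂ mH hH hψ.integrable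
      hχ.integrable hα.integrable hβ.integrable_deriv)).add (integrable_source_mul_doubledTest
      h₁ h₂ mH hH (by fun_prop) (fun q => hN _ _ (h₂.mem_Icc q.2)) hψ.integrable hχ.integrable
      hα.integrable hβ.integrable)
  refine ⟨hF, ?_⟩
  rw [Measure.volume_eq_prod, integral_prod _ hF]
  refine integral_nonneg fun z => ?_
  have key := h₂.inequality (w₁ z) (h₁.mem_Icc z) (fun t => ψ z.1 * α (z.1 - t))
    (fun y => χ z.2 * β (z.2 - y)) ((hα.comp_const_sub z.1).const_mul (hψ.nonneg _)) (hχβ z.2)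
  have dα (t : ℝ) : deriv (fun t => ψ z.1 * α (z.1 - t)) t = ψ z.1 * -deriv α (z.1 - t) := by
    rw [deriv_const_mul_field, deriv_comp_const_sub]
  have dβ (y : ℝ) : deriv (fun y => χ z.2 * β (z.2 - y)) y = χ z.2 * -deriv β (z.2 - y) := by
    rw [deriv_const_mul_field, deriv_comp_const_sub]
  have sign_swap (b : ℝ) : Real.sign (b - w₁ z) = -Real.sign (w₁ z - b) := by
    rw [← Real.sign_neg, neg_sub]
  refine key.trans_eq (integral_congr_ae (Eventually.of_forall fun z' => ?_))
  simp only [F, dα, dβ, doubledTest, kruzhkovFlux_comm p (w₂ z'), abs_sub_comm (w₂ z'), sign_swap]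
  ring

lemma integral_doubledIntegrand_nonneg (hχβ : ∀ y, IsTestFun s fun x => χ x * β (x - y))
    (hχβ' : ∀ x, IsTestFun s fun y => χ x * β (x - y)) :
    Integrable (doubledIntegrand p V ρ w₁ w₂ ψ χ α β) ∧
      0 ≤ ∫ q, doubledIntegrand p V ρ w₁ w₂ ψ χ α β q := by
  obtain ⟨int_fst, nonneg_fst⟩ := doubled_inequality_fst h₁ h₂ hV hρ hN hψ hχ hα hβ hχβ
  obtain ⟨int_snd, nonneg_snd⟩ := doubled_inequality_snd h₁ h₂ hV hρ hN hψ hχ hα hβ hχβ'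
  have nonneg := (add_nonneg nonneg_fst nonneg_snd).trans_eq (integral_add int_fst int_snd).symm
  refine ⟨(int_fst.add int_snd).congr (Eventually.of_forall fun q => ?_),
    nonneg.trans_eq (integral_congr_ae (Eventually.of_forall fun q => ?_))⟩ <;>
  · simp only [Pi.add_apply, doubledIntegrand]
    ring

end Doubling

/-- The integrand of Kato's inequality for `|w₁ - w₂|` tested with `ψ ⊗ χ`, which is what remains of
`doubledIntegrand` on the diagonal. -/
noncomputable def katoIntegrand (p : ℝ) (w₁ w₂ : ℝ × ℝ → ℝ) (ψ χ : ℝ → ℝ) (z : ℝ × ℝ) : ℝ :=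
  |w₁ z - w₂ z| * (deriv ψ z.1 * χ z.2)
    + heaviside z.1 * kruzhkovFlux p (w₁ z) (w₂ z) * (ψ z.1 * deriv χ z.2)

lemma heaviside_mem_Icc (t : ℝ) : heaviside t ∈ Icc (0 : ℝ) 1 := by
  unfold heaviside; split_ifs <;> simp

lemma abs_heaviside_sub_le {ε t s : ℝ} (h : |t - s| < ε) :
    |heaviside t - heaviside s| ≤ (Icc (-ε) ε).indicator 1 t := by
  by_cases ht : t ∈ Icc (-ε) ε
  · rw [indicator_of_mem ht]
    exact abs_sub_le_one_of_mem_Icc (heaviside_mem_Icc t) (heaviside_mem_Icc s)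
  · have hts := abs_lt.1 h
    rw [indicator_of_notMem ht, abs_nonpos_iff, sub_eq_zero]
    rcases lt_or_ge ε t with hεt | hεt
    · rw [heaviside_of_pos (by linarith), heaviside_of_pos (by linarith)]
    · have hεt' : t < -ε := by by_contra! hn; exact ht ⟨hn, hεt⟩
      rw [heaviside_of_nonpos (by linarith), heaviside_of_nonpos (by linarith)]

lemma mul_le_mul_add_abs_sub_mul_abs (x y c : ℝ) : x * c ≤ y * c + |x - y| * |c| := by
  rw [← abs_mul]; linarith [le_abs_self ((x - y) * c)]

lemma realSign_mul_self (r : ℝ) : Real.sign r * r = |r| := by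
  rcases lt_trichotomy r 0 with h | h | h
  · rw [Real.sign_of_neg h, abs_of_neg h]; ring
  · simp [h]
  · rw [Real.sign_of_pos h, abs_of_pos h]; ring

/- The dissipation `-Vx * |a - b|` has a sign; only the errors from evaluating `V`, `ρ` and `H` at
different points remain. -/
lemma neg_sign_mul_source_sub_le {a b Ht Hs Vx Vy rx ry : ℝ} (hHt : Ht ∈ Icc (0 : ℝ) 1)
    (hVx : 0 ≤ Vx) :
    -(Real.sign (a - b) * (Ht * (Vx * (a - rx)) - Hs * (Vy * (b - ry)))) ≤
      |Vx * (b - rx) - Vy * (b - ry)| + |Ht - Hs| * |Vy * (b - ry)| := by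
  set D := Ht * (Vx * (b - rx) - Vy * (b - ry)) + (Ht - Hs) * (Vy * (b - ry)) with hD
  have hsplit : Real.sign (a - b) * (Ht * (Vx * (a - rx)) - Hs * (Vy * (b - ry)))
      = Ht * Vx * |a - b| + Real.sign (a - b) * D := by rw [← realSign_mul_self, hD]; ring
  have hdiss : 0 ≤ Ht * Vx * |a - b| := by have := hHt.1; positivity
  calc _ ≤ |Real.sign (a - b) * D| := by
        rw [hsplit]; linarith [neg_le_abs (Real.sign (a - b) * D)]
    _ ≤ |D| := by
        rw [abs_mul]; exact mul_le_of_le_one_left (abs_nonneg _) (abs_realSign_le_one _)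
    _ ≤ |Ht| * |Vx * (b - rx) - Vy * (b - ry)| + |Ht - Hs| * |Vy * (b - ry)| := by
        rw [hD, ← abs_mul, ← abs_mul]; exact abs_add_le _ _
    _ ≤ _ := by
        gcongr
        exact mul_le_of_le_one_left (abs_nonneg _) (abs_le_one_of_mem_Icc hHt)

lemma abs_source_sub_le {b Vx Vy rx ry E : ℝ} (hb : b ∈ Icc (0 : ℝ) 1) (hEV : |Vx - Vy| ≤ E)
    (hEVρ : |Vx * rx - Vy * ry| ≤ E) : |Vx * (b - rx) - Vy * (b - ry)| ≤ 2 * E :=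
  calc _ = |b * (Vx - Vy) - (Vx * rx - Vy * ry)| := by ring_nf
    _ ≤ |b * (Vx - Vy)| + |Vx * rx - Vy * ry| := abs_sub _ _
    _ ≤ E + E := by
      rw [abs_mul]
      gcongr
      exact (mul_le_of_le_one_left (abs_nonneg _) (abs_le_one_of_mem_Icc hb)).trans hEV
    _ = 2 * E := by ring

lemma heaviside_mul_kruzhkovFlux_le {p t a b b' E : ℝ} (ha : a ∈ Icc (0 : ℝ) 1)
    (hb : b ∈ Icc (0 : ℝ) 1) (hb' : b' ∈ Icc (0 : ℝ) 1) (hE : |b' - b| ≤ E) (c : ℝ) :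
    heaviside t * kruzhkovFlux p a b * c ≤
      heaviside t * kruzhkovFlux p a b' * c + |2 * p - 1| * (2 * E) * |c| := by
  refine (mul_le_mul_add_abs_sub_mul_abs _ (heaviside t * kruzhkovFlux p a b') c).trans ?_
  gcongr
  rw [← mul_sub]
  refine (abs_heaviside_mul_le _ _).trans ((abs_kruzhkovFlux_sub_le p ha hb hb').trans ?_)
  exact mul_le_mul_of_nonneg_left
    (mul_le_mul_of_nonneg_left (by rwa [abs_sub_comm]) zero_le_two) (abs_nonneg _)

lemma abs_sub_mul_le {a b b' E : ℝ} (hE : |b' - b| ≤ E) (c : ℝ) :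
    |a - b| * c ≤ |a - b'| * c + E * |c| := by
  refine (mul_le_mul_add_abs_sub_mul_abs _ |a - b'| c).trans ?_
  gcongr
  refine (abs_abs_sub_abs_le _ _).trans ?_
  rwa [sub_sub_sub_cancel_left]

lemma heaviside_sub_mul_kruzhkovFlux_le {p t s a b : ℝ} (ha : a ∈ Icc (0 : ℝ) 1)
    (hb : b ∈ Icc (0 : ℝ) 1) (c : ℝ) :
    (heaviside t - heaviside s) * kruzhkovFlux p a b * c ≤
      |heaviside t - heaviside s| * (|2 * p - 1| * |c|) := by
  refine (le_abs_self _).trans ?_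
  rw [abs_mul, abs_mul, mul_assoc]
  exact mul_le_mul_of_nonneg_left (mul_le_mul_of_nonneg_right
    (abs_kruzhkovFlux_le_const p ha hb) (abs_nonneg _)) (abs_nonneg _)

lemma doubledIntegrand_le {p N E : ℝ} {V ρ : ℝ → ℝ} {w₁ w₂ : ℝ × ℝ → ℝ} {ψ χ α β : ℝ → ℝ}
    {q : (ℝ × ℝ) × (ℝ × ℝ)} (h₁ : w₁ q.1 ∈ Icc (0 : ℝ) 1) (h₂ : ∀ z, w₂ z ∈ Icc (0 : ℝ) 1)
    (hV : 0 ≤ V q.1.2) (hN : |V q.2.2 * (w₂ q.2 - ρ q.2.2)| ≤ N) (htest : 0 ≤ doubledTest ψ χ α β q)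
    (hEw : |w₂ q.1 - w₂ q.2| ≤ E) (hEV : |V q.1.2 - V q.2.2| ≤ E)
    (hEVρ : |V q.1.2 * ρ q.1.2 - V q.2.2 * ρ q.2.2| ≤ E) :
    doubledIntegrand p V ρ w₁ w₂ ψ χ α β q ≤
      katoIntegrand p w₁ w₂ ψ χ q.1 * (α (q.1.1 - q.2.1) * β (q.1.2 - q.2.2))
      + E * (|doubledTest (deriv ψ) χ α β q|
        + 2 * |2 * p - 1| * |doubledTest ψ (deriv χ) α β q| + 2 * doubledTest ψ χ α β q)
      + |heaviside q.1.1 - heaviside q.2.1|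
        * (|2 * p - 1| * |doubledTest ψ χ α (deriv β) q| + N * doubledTest ψ χ α β q) := by
  have hb := h₂ q.2
  have time_term := abs_sub_mul_le (a := w₁ q.1) hEw (doubledTest (deriv ψ) χ α β q)
  have space_term := heaviside_mul_kruzhkovFlux_le (p := p) (t := q.1.1) h₁ hb (h₂ q.1) hEw
    (doubledTest ψ (deriv χ) α β q)
  have heaviside_term := heaviside_sub_mul_kruzhkovFlux_le (p := p) (t := q.1.1) (s := q.2.1) h₁ hb
    (doubledTest ψ χ α (deriv β) q)
  have source_term := mul_le_mul_of_nonneg_right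
    ((neg_sign_mul_source_sub_le (a := w₁ q.1) (Hs := heaviside q.2.1)
      (heaviside_mem_Icc q.1.1) hV).trans (add_le_add (abs_source_sub_le hb hEV hEVρ)
        (mul_le_mul_of_nonneg_left hN (abs_nonneg _)))) htest
  have hkato : katoIntegrand p w₁ w₂ ψ χ q.1 * (α (q.1.1 - q.2.1) * β (q.1.2 - q.2.2))
      = |w₁ q.1 - w₂ q.1| * doubledTest (deriv ψ) χ α β q + heaviside q.1.1
        * kruzhkovFlux p (w₁ q.1) (w₂ q.1) * doubledTest ψ (deriv χ) α β q := by
    unfold katoIntegrand doubledTest; ring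
  rw [hkato]
  unfold doubledIntegrand
  linarith

lemma IsTestFun.mul_comp_sub {s : Set ℝ} {δ : ℝ} {χ β : ℝ → ℝ} (hχ : IsTestFun s χ)
    (hβ : IsTestFun (Metric.ball 0 δ) β) (hs : Metric.thickening δ (tsupport χ) ⊆ s) (x : ℝ) :
    IsTestFun s fun y => χ x * β (x - y) := by
  refine ((hβ.comp_const_sub x).const_mul (hχ.nonneg x)).subset ?_
  by_cases hx : x ∈ tsupport χ
  · refine ((hβ.comp_const_sub x).const_mul (hχ.nonneg x)).tsupport_subset.trans fun y hy => hs ?_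
    refine Metric.mem_thickening_iff.2 ⟨x, hx, ?_⟩
    rwa [dist_comm, dist_eq_norm, ← mem_ball_zero_iff]
  · simp [image_eq_zero_of_notMem_tsupport hx, tsupport]

lemma abs_doubledTest_le {M : ℝ} {ψ χ α β : ℝ → ℝ} (hψ : ∀ t, |ψ t| ≤ M) (hχ : ∀ x, |χ x| ≤ M)
    (hα : ∀ t, 0 ≤ α t) (hβ : ∀ x, 0 ≤ β x) (q : (ℝ × ℝ) × (ℝ × ℝ)) :
    |doubledTest ψ χ α β q| ≤ M ^ 2 * (α (q.1.1 - q.2.1) * β (q.1.2 - q.2.2)) := by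
  have hk := mul_nonneg (hα (q.1.1 - q.2.1)) (hβ (q.1.2 - q.2.2))
  rw [doubledTest, abs_mul, abs_of_nonneg hk, abs_mul, sq]
  exact mul_le_mul_of_nonneg_right (mul_le_mul (hψ _) (hχ _) (abs_nonneg _)
    ((abs_nonneg _).trans (hψ 0))) hk

lemma abs_heaviside_sub_mul_le {ε t s : ℝ} {α : ℝ → ℝ} (hα : IsTestFun (Metric.ball 0 ε) α) :
    |heaviside t - heaviside s| * α (t - s) ≤ (Icc (-ε) ε).indicator 1 t * α (t - s) := by
  by_cases h : t - s ∈ Metric.ball 0 ε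
  · rw [mem_ball_zero_iff, Real.norm_eq_abs] at h
    exact mul_le_mul_of_nonneg_right (abs_heaviside_sub_le h) (hα.nonneg _)
  · simp [hα.eq_zero h]

section Modulus

variable {p N ε δ : ℝ} {V ρ : ℝ → ℝ} {w₁ w₂ : ℝ × ℝ → ℝ} {s : Set ℝ} {ψ χ α β : ℝ → ℝ}

lemma doubledIntegrand_eq_zero (hα : IsTestFun (Metric.ball 0 ε) α)
    (hβ : IsTestFun (Metric.ball 0 δ) β) (hεδ : ε ≤ δ) {q : (ℝ × ℝ) × (ℝ × ℝ)}
    (hq : ¬ (q.1 ∈ tsupport ψ ×ˢ tsupport χ ∧ dist q.1 q.2 < δ)) :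
    doubledIntegrand p V ρ w₁ w₂ ψ χ α β q = 0 ∧
      katoIntegrand p w₁ w₂ ψ χ q.1 * (α (q.1.1 - q.2.1) * β (q.1.2 - q.2.2)) = 0 := by
  unfold doubledIntegrand katoIntegrand doubledTest
  rw [mem_prod, Prod.dist_eq, max_lt_iff, not_and_or, not_and_or, not_and_or] at hq
  rcases hq with (hψ | hχ) | (ht | hx)
  · have hψ' := image_eq_zero_of_notMem_tsupport (mt (fun h => tsupport_deriv_subset h) hψ)
    simp [image_eq_zero_of_notMem_tsupport hψ, hψ']
  · have hχ' := image_eq_zero_of_notMem_tsupport (mt (fun h => tsupport_deriv_subset h) hχ)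
    simp [image_eq_zero_of_notMem_tsupport hχ, hχ']
  · have hα₀ : α (q.1.1 - q.2.1) = 0 := hα.eq_zero fun h => ht (by
      rw [mem_ball_zero_iff] at h; exact h.trans_le hεδ)
    simp [hα₀]
  · have hx' : q.1.2 - q.2.2 ∉ Metric.ball 0 δ := by rwa [mem_ball_zero_iff]
    simp [hβ.eq_zero hx', hβ.deriv_eq_zero hx']

lemma heaviside_error_le {M : ℝ} (hN₀ : 0 ≤ N) (hψ₀ : ∀ t, 0 ≤ ψ t) (hχ₀ : ∀ x, 0 ≤ χ x)
    (hα : IsTestFun (Metric.ball 0 ε) α) (hβ₀ : ∀ x, 0 ≤ β x) (hM : ∀ t, ψ t ≤ M)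
    (q : (ℝ × ℝ) × (ℝ × ℝ)) :
    |heaviside q.1.1 - heaviside q.2.1|
        * (|2 * p - 1| * |doubledTest ψ χ α (deriv β) q| + N * doubledTest ψ χ α β q) ≤
      (Icc (-ε) ε).indicator 1 q.1.1 * (M * χ q.1.2) * (α (q.1.1 - q.2.1)
        * (|2 * p - 1| * |deriv β (q.1.2 - q.2.2)| + N * β (q.1.2 - q.2.2))) := by
  have hα₀ := hα.nonneg (q.1.1 - q.2.1)
  have hχ := hχ₀ q.1.2
  have hind : 0 ≤ (Icc (-ε) ε).indicator (1 : ℝ → ℝ) q.1.1 :=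
    indicator_nonneg (fun _ _ => zero_le_one) _
  set b := |2 * p - 1| * |deriv β (q.1.2 - q.2.2)| + N * β (q.1.2 - q.2.2) with hb
  have hb₀ : 0 ≤ b := add_nonneg (by positivity) (mul_nonneg hN₀ (hβ₀ _))
  calc _ = |heaviside q.1.1 - heaviside q.2.1| * α (q.1.1 - q.2.1) * (ψ q.1.1 * (χ q.1.2 * b)) := by
        rw [doubledTest, doubledTest, abs_mul, abs_mul, abs_mul, abs_of_nonneg (hψ₀ _),
          abs_of_nonneg hχ, abs_of_nonneg hα₀, hb]
        ring
    _ ≤ (Icc (-ε) ε).indicator 1 q.1.1 * α (q.1.1 - q.2.1) * (M * (χ q.1.2 * b)) :=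
        mul_le_mul (abs_heaviside_sub_mul_le hα)
          (mul_le_mul_of_nonneg_right (hM _) (mul_nonneg hχ hb₀))
          (mul_nonneg (hψ₀ _) (mul_nonneg hχ hb₀)) (mul_nonneg hind hα₀)
    _ = _ := by ring

lemma modulus_error_le {M E : ℝ} (hE : 0 ≤ E) (hα₀ : ∀ t, 0 ≤ α t) (hβ₀ : ∀ x, 0 ≤ β x)
    (hMψ : ∀ t, |ψ t| ≤ M) (hMψ' : ∀ t, |deriv ψ t| ≤ M) (hMχ : ∀ x, |χ x| ≤ M)
    (hMχ' : ∀ x, |deriv χ x| ≤ M) (q : (ℝ × ℝ) × (ℝ × ℝ)) :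
    E * (|doubledTest (deriv ψ) χ α β q| + 2 * |2 * p - 1| * |doubledTest ψ (deriv χ) α β q|
        + 2 * doubledTest ψ χ α β q) ≤
      M ^ 2 * (3 + 2 * |2 * p - 1|) * E * (α (q.1.1 - q.2.1) * β (q.1.2 - q.2.2)) := by
  have bψ' := abs_doubledTest_le hMψ' hMχ hα₀ hβ₀ q
  have bχ' := abs_doubledTest_le hMψ hMχ' hα₀ hβ₀ q
  have b := (le_abs_self _).trans (abs_doubledTest_le hMψ hMχ hα₀ hβ₀ q)
  calc _ ≤ E * (M ^ 2 * (α (q.1.1 - q.2.1) * β (q.1.2 - q.2.2))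
          + 2 * |2 * p - 1| * (M ^ 2 * (α (q.1.1 - q.2.1) * β (q.1.2 - q.2.2)))
          + 2 * (M ^ 2 * (α (q.1.1 - q.2.1) * β (q.1.2 - q.2.2)))) := by gcongr
    _ = _ := by ring

lemma doubledIntegrand_le_of_modulus {M : ℝ} {e : ℝ × ℝ → ℝ} (h₁ : ∀ z, w₁ z ∈ Icc (0 : ℝ) 1)
    (h₂ : ∀ z, w₂ z ∈ Icc (0 : ℝ) 1) (hV : ∀ x, 0 ≤ V x)
    (hN : ∀ x, ∀ b ∈ Icc (0 : ℝ) 1, |V x * (b - ρ x)| ≤ N)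
    (hψ₀ : ∀ t, 0 ≤ ψ t) (hχ₀ : ∀ x, 0 ≤ χ x) (hα : IsTestFun (Metric.ball 0 ε) α)
    (hβ : IsTestFun (Metric.ball 0 δ) β) (hεδ : ε ≤ δ)
    (hMψ : ∀ t, |ψ t| ≤ M) (hMψ' : ∀ t, |deriv ψ t| ≤ M) (hMχ : ∀ x, |χ x| ≤ M)
    (hMχ' : ∀ x, |deriv χ x| ≤ M) (he₀ : ∀ z, 0 ≤ e z)
    (he : ∀ z ∈ tsupport ψ ×ˢ tsupport χ, ∀ z', dist z z' < δ →
      |w₂ z - w₂ z'| ≤ e z + e z' ∧ |V z.2 - V z'.2| ≤ e z + e z' ∧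
        |V z.2 * ρ z.2 - V z'.2 * ρ z'.2| ≤ e z + e z')
    (q : (ℝ × ℝ) × (ℝ × ℝ)) :
    doubledIntegrand p V ρ w₁ w₂ ψ χ α β q ≤
      katoIntegrand p w₁ w₂ ψ χ q.1 * (α (q.1.1 - q.2.1) * β (q.1.2 - q.2.2))
      + (M ^ 2 * (3 + 2 * |2 * p - 1|) * e q.1 * (α (q.1.1 - q.2.1) * β (q.1.2 - q.2.2))
        + M ^ 2 * (3 + 2 * |2 * p - 1|) * e q.2 * (α (q.1.1 - q.2.1) * β (q.1.2 - q.2.2)))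
      + (Icc (-ε) ε).indicator 1 q.1.1 * (M * χ q.1.2) * (α (q.1.1 - q.2.1)
        * (|2 * p - 1| * |deriv β (q.1.2 - q.2.2)| + N * β (q.1.2 - q.2.2))) := by
  have hk₀ := mul_nonneg (hα.nonneg (q.1.1 - q.2.1)) (hβ.nonneg (q.1.2 - q.2.2))
  have hN₀ : 0 ≤ N := (abs_nonneg _).trans (hN 0 0 (by simp))
  have hM₀ : 0 ≤ M := (abs_nonneg _).trans (hMψ 0)
  have hkernel₀ : 0 ≤ |2 * p - 1| * |deriv β (q.1.2 - q.2.2)| + N * β (q.1.2 - q.2.2) :=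
    add_nonneg (by positivity) (mul_nonneg hN₀ (hβ.nonneg _))
  have he₁ := he₀ q.1
  have he₂ := he₀ q.2
  by_cases hq : q.1 ∈ tsupport ψ ×ˢ tsupport χ ∧ dist q.1 q.2 < δ
  · obtain ⟨hEw, hEV, hEVρ⟩ := he _ hq.1 _ hq.2
    have htest : 0 ≤ doubledTest ψ χ α β q := mul_nonneg (mul_nonneg (hψ₀ _) (hχ₀ _)) hk₀
    refine (doubledIntegrand_le (h₁ _) h₂ (hV _) (hN _ _ (h₂ _)) htest hEw hEV hEVρ).trans
      (add_le_add ?_ ?_)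
    · rw [add_le_add_iff_left, ← add_mul, ← mul_add]
      exact modulus_error_le (add_nonneg he₁ he₂) hα.nonneg hβ.nonneg hMψ hMψ' hMχ hMχ' q
    · exact heaviside_error_le hN₀ hψ₀ hχ₀ hα hβ.nonneg (fun t => (le_abs_self _).trans (hMψ t)) q
  · obtain ⟨hD, hkato⟩ := doubledIntegrand_eq_zero (p := p) (V := V) (ρ := ρ) (w₁ := w₁) (w₂ := w₂)
      hα hβ hεδ hq
    have hind : 0 ≤ (Icc (-ε) ε).indicator (1 : ℝ → ℝ) q.1.1 :=
      indicator_nonneg (fun _ _ => zero_le_one) _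
    have := hα.nonneg (q.1.1 - q.2.1)
    have := hχ₀ q.1.2
    rw [hD, hkato]
    positivity

end Modulus

section Kato

variable {p N : ℝ} {V ρ : ℝ → ℝ} {w₁ w₂ : ℝ × ℝ → ℝ} {s : Set ℝ} {ψ χ : ℝ → ℝ}

lemma integrable_katoIntegrand (m₁ : Measurable w₁) (m₂ : Measurable w₂)
    (h₁ : ∀ z, w₁ z ∈ Icc (0 : ℝ) 1) (h₂ : ∀ z, w₂ z ∈ Icc (0 : ℝ) 1)
    (hψ : IsTestFun univ ψ) (hχ : IsTestFun s χ) :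
    Integrable (katoIntegrand p w₁ w₂ ψ χ) := by
  refine (integrable_bdd_mul (C := 1) (by fun_prop) (fun z => (abs_abs _).trans_le
    (abs_sub_le_one_of_mem_Icc (h₁ z) (h₂ z))) (hψ.integrable_deriv.mul_prod hχ.integrable)).add
    (integrable_bdd_mul (C := |2 * p - 1|) ?_ (fun z => (abs_heaviside_mul_le _ _).trans
    (abs_kruzhkovFlux_le_const p (h₁ z) (h₂ z))) (hψ.integrable.mul_prod hχ.integrable_deriv))
  exact (measurable_heaviside.comp measurable_fst).mul (measurable_kruzhkovFlux p m₁ m₂)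

lemma exists_modulus (m₂ : Measurable w₂) (h₂ : ∀ z, w₂ z ∈ Icc (0 : ℝ) 1) (mV : Measurable V)
    (mρ : Measurable ρ) (hN : ∀ x, ∀ b ∈ Icc (0 : ℝ) 1, |V x * (b - ρ x)| ≤ N)
    {K : Set (ℝ × ℝ)} (hK : IsCompact K) {η : ℝ} (hη : 0 < η) :
    ∃ e : ℝ × ℝ → ℝ, Integrable e ∧ (∀ z, 0 ≤ e z) ∧ ∫ z, e z ≤ η ∧
      ∃ δ > 0, ∀ z ∈ K, ∀ z', dist z z' < δ →
        |w₂ z - w₂ z'| ≤ e z + e z' ∧ |V z.2 - V z'.2| ≤ e z + e z' ∧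
          |V z.2 * ρ z.2 - V z'.2 * ρ z'.2| ≤ e z + e z' := by
  have bVρ (x : ℝ) : |V x * ρ x| ≤ N := by simpa using hN x 0 (by simp)
  have bV (x : ℝ) : |V x| ≤ N + N :=
    calc |V x| = |V x * (1 - ρ x) + V x * ρ x| := by ring_nf
      _ ≤ N + N := (abs_add_le _ _).trans (add_le_add (hN x 1 (by simp)) (bVρ x))
  have hv : LocallyIntegrable (fun z : ℝ × ℝ => (w₂ z, V z.2, V z.2 * ρ z.2)) := by
    refine (memLp_top_of_bound (C := max 1 (max (N + N) N)) (by fun_prop)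
      (Eventually.of_forall fun z => ?_)).locallyIntegrable le_top
    exact max_le_max (abs_le_one_of_mem_Icc (h₂ z)) (max_le_max (bV _) (bVρ _))
  obtain ⟨e, ie, he₀, he, δ, hδ, hmod⟩ := exists_integrable_modulus hv hK hη
  refine ⟨e, ie, he₀, he, δ, hδ, fun z hz z' hzz' => ?_⟩
  simpa [Prod.norm_def] using hmod z hz z' hzz'

lemma IsKruzhkovOn.integral_katoIntegrand_add_error_nonneg {ε δ M : ℝ} {e : ℝ × ℝ → ℝ} {β : ℝ → ℝ}
    (h₁ : IsKruzhkovOn s p V ρ w₁) (h₂ : IsKruzhkovOn s p V ρ w₂) (mV : Measurable V)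
    (mρ : Measurable ρ) (hV : ∀ x, 0 ≤ V x)
    (hN : ∀ x, ∀ b ∈ Icc (0 : ℝ) 1, |V x * (b - ρ x)| ≤ N) (hψ : IsTestFun univ ψ)
    (hχ : IsTestFun s χ) (hβ : IsTestFun (Metric.ball 0 δ) β) (hβ₁ : ∫ x, β x = 1)
    (hs : Metric.thickening δ (tsupport χ) ⊆ s) (hε : 0 < ε) (hεδ : ε ≤ δ)
    (hMψ : ∀ t, |ψ t| ≤ M) (hMψ' : ∀ t, |deriv ψ t| ≤ M) (hMχ : ∀ x, |χ x| ≤ M)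
    (hMχ' : ∀ x, |deriv χ x| ≤ M) (ie : Integrable e) (he₀ : ∀ z, 0 ≤ e z)
    (he : ∀ z ∈ tsupport ψ ×ˢ tsupport χ, ∀ z', dist z z' < δ →
      |w₂ z - w₂ z'| ≤ e z + e z' ∧ |V z.2 - V z'.2| ≤ e z + e z' ∧
        |V z.2 * ρ z.2 - V z'.2 * ρ z'.2| ≤ e z + e z') :
    0 ≤ (∫ z, katoIntegrand p w₁ w₂ ψ χ z) + 2 * (M ^ 2 * (3 + 2 * |2 * p - 1|) * ∫ z, e z)
      + 2 * ε * (M * ∫ x, χ x) * (|2 * p - 1| * (∫ x, |deriv β x|) + N) := by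
  obtain ⟨α, hα, hα₁⟩ := exists_mollifier hε
  have iβ : Integrable fun x => |2 * p - 1| * |deriv β x| + N * β x :=
    (hβ.integrable_deriv.abs.const_mul _).add (hβ.integrable.const_mul N)
  have iind : Integrable ((Icc (-ε) ε).indicator (1 : ℝ → ℝ)) :=
    (integrableOn_const measure_Icc_lt_top.ne).integrable_indicator measurableSet_Icc
  have hG' : ∫ z : ℝ × ℝ, (Icc (-ε) ε).indicator 1 z.1 * (M * χ z.2) = 2 * ε * (M * ∫ x, χ x) := by
    rw [Measure.volume_eq_prod, integral_prod_mul _ fun x => M * χ x, integral_const_mul,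
      integral_indicator_one measurableSet_Icc, Real.volume_real_Icc_of_le (by linarith)]
    ring
  have hk' : ∫ z : ℝ × ℝ, α z.1 * (|2 * p - 1| * |deriv β z.2| + N * β z.2) =
      |2 * p - 1| * (∫ x, |deriv β x|) + N := by
    rw [Measure.volume_eq_prod, integral_prod_mul α fun x => |2 * p - 1| * |deriv β x| + N * β x,
      hα₁, one_mul, integral_add (hβ.integrable_deriv.abs.const_mul _) (hβ.integrable.const_mul N),
      integral_const_mul, integral_const_mul, hβ₁, mul_one]
  have hk₁ : ∫ z : ℝ × ℝ, α z.1 * β z.2 = 1 := by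
    rw [Measure.volume_eq_prod, integral_prod_mul, hα₁, hβ₁, one_mul]
  obtain ⟨hD, hD₀⟩ := integral_doubledIntegrand_nonneg h₁ h₂ mV mρ hN hψ hχ
    (hα.subset (subset_univ _)) (hβ.subset (subset_univ _))
    (fun y => hχ.mul (hβ.contDiff.comp (by fun_prop)) fun x => hβ.nonneg _)
    (hχ.mul_comp_sub hβ hs)
  have h := integral_nonneg_of_le_mul_sub hD hD₀
    (integrable_katoIntegrand h₁.measurable h₂.measurable h₁.mem_Icc h₂.mem_Icc hψ hχ)
    (ie.const_mul _) (iind.mul_prod (hχ.integrable.const_mul M))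
    (hα.integrable.mul_prod hβ.integrable) (hα.integrable.mul_prod iβ) hk₁
    (doubledIntegrand_le_of_modulus h₁.mem_Icc h₂.mem_Icc hV hN hψ.nonneg hχ.nonneg hα hβ hεδ
      hMψ hMψ' hMχ hMχ' he₀ he)
  rwa [integral_const_mul, hG', hk'] at h

lemma IsKruzhkovOn.integral_katoIntegrand_nonneg_of_bounded (h₁ : IsKruzhkovOn s p V ρ w₁)
    (h₂ : IsKruzhkovOn s p V ρ w₂) (hs : IsOpen s) (mV : Measurable V) (mρ : Measurable ρ)
    (hV : ∀ x, 0 ≤ V x) (hN : ∀ x, ∀ b ∈ Icc (0 : ℝ) 1, |V x * (b - ρ x)| ≤ N)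
    (hψ : IsTestFun univ ψ) (hχ : IsTestFun s χ) :
    0 ≤ ∫ z, katoIntegrand p w₁ w₂ ψ χ z := by
  obtain ⟨M₁, -, hMψ, hMψ'⟩ := hψ.exists_bound
  obtain ⟨M₂, -, hMχ, hMχ'⟩ := hχ.exists_bound
  obtain ⟨δ₀, hδ₀, hδ₀s⟩ := hχ.hasCompactSupport.exists_thickening_subset_open hs hχ.tsupport_subset
  set C := max M₁ M₂ ^ 2 * (3 + 2 * |2 * p - 1|)
  have : 0 ≤ C := by positivity
  have bound_of_modulus (η : ℝ) (hη : η ∈ Ioi (0 : ℝ)) :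
      0 ≤ (∫ z, katoIntegrand p w₁ w₂ ψ χ z) + 2 * (C * η) := by
    obtain ⟨e, ie, he₀, heη, δ, hδ, he⟩ := exists_modulus h₂.measurable h₂.mem_Icc mV mρ hN
      (IsCompact.prod hψ.hasCompactSupport hχ.hasCompactSupport) hη
    obtain ⟨β, hβ, hβ₁⟩ := exists_mollifier (lt_min hδ hδ₀)
    have bound (ε : ℝ) (hε : ε ∈ Ioc 0 (min δ δ₀)) :=
      h₁.integral_katoIntegrand_add_error_nonneg h₂ mV mρ hV hN hψ hχ hβ hβ₁
        ((Metric.thickening_mono (min_le_right _ _) _).trans hδ₀s) hε.1 hε.2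
        (fun t => (hMψ t).trans (le_max_left _ _)) (fun t => (hMψ' t).trans (le_max_left _ _))
        (fun x => (hMχ x).trans (le_max_right _ _)) (fun x => (hMχ' x).trans (le_max_right _ _))
        ie he₀ fun z hz z' hzz' => he z hz z' (hzz'.trans_le (min_le_left _ _))
    have h := ge_of_tendsto (tendsto_nhdsWithin_of_tendsto_nhds (Continuous.tendsto' (by fun_prop) 0
      ((∫ z, katoIntegrand p w₁ w₂ ψ χ z) + 2 * (C * ∫ z, e z)) (by simp [C])))
      (eventually_of_mem (Ioc_mem_nhdsGT (lt_min hδ hδ₀)) bound)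
    exact h.trans (by gcongr)
  exact ge_of_tendsto (tendsto_nhdsWithin_of_tendsto_nhds (Continuous.tendsto' (by fun_prop) 0
    (∫ z, katoIntegrand p w₁ w₂ ψ χ z) (by simp)))
    (eventually_of_mem self_mem_nhdsWithin bound_of_modulus)

lemma IsKruzhkovOn.congr_subset {t : Set ℝ} {V' ρ' : ℝ → ℝ} (h : IsKruzhkovOn s p V ρ w₁)
    (hts : t ⊆ s) (hV : EqOn V V' t) (hρ : EqOn ρ ρ' t) : IsKruzhkovOn t p V' ρ' w₁ where
  measurable := h.measurable
  mem_Icc := h.mem_Icc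
  inequality k hk g f hg hf := by
    refine (h.inequality k hk g f hg (hf.subset (hf.tsupport_subset.trans hts))).trans_eq
      (integral_congr_ae (Eventually.of_forall fun z => ?_))
    by_cases hz : z.2 ∈ t
    · simp only [hV hz, hρ hz]
    · simp only [hf.eq_zero hz, mul_zero]

lemma IsKruzhkovOn.integral_katoIntegrand_nonneg (h₁ : IsKruzhkovOn s p V ρ w₁)
    (h₂ : IsKruzhkovOn s p V ρ w₂) (hs : IsOpen s) (hVc : ContinuousOn V s)
    (hρc : ContinuousOn ρ s) (hV : ∀ x ∈ s, 0 ≤ V x) (hψ : IsTestFun univ ψ)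
    (hχ : IsTestFun s χ) :
    0 ≤ ∫ z, katoIntegrand p w₁ w₂ ψ χ z := by
  obtain ⟨δ, hδ, hδs⟩ := hχ.hasCompactSupport.exists_cthickening_subset_open hs hχ.tsupport_subset
  set K := Metric.cthickening δ (tsupport χ)
  have hK : IsCompact K := IsCompact.cthickening hχ.hasCompactSupport
  have measurable_ext {f : ℝ → ℝ} (hf : ContinuousOn f s) : Measurable (K.indicator f) := by
    classical
    rw [← piecewise_eq_indicator]
    exact (hf.mono hδs).measurable_piecewise continuousOn_const hK.measurableSet
  obtain ⟨N, hN⟩ := (hK.prod isCompact_Icc).exists_bound_of_continuousOn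
    (f := fun q : ℝ × ℝ => V q.1 * (q.2 - ρ q.1)) (s := K ×ˢ Icc (0 : ℝ) 1)
    (((hVc.mono hδs).comp continuousOn_fst fun q hq => hq.1).mul
      (continuousOn_snd.sub ((hρc.mono hδs).comp continuousOn_fst fun q hq => hq.1)))
  have hsub : Metric.thickening δ (tsupport χ) ⊆ K := Metric.thickening_subset_cthickening _ _
  have eqOn_ext (f : ℝ → ℝ) : EqOn f (K.indicator f) (Metric.thickening δ (tsupport χ)) :=
    fun x hx => (indicator_of_mem (hsub hx) f).symm
  refine (h₁.congr_subset (hsub.trans hδs) (eqOn_ext V)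
    (eqOn_ext ρ)).integral_katoIntegrand_nonneg_of_bounded (N := max 0 N)
    (h₂.congr_subset (hsub.trans hδs) (eqOn_ext V) (eqOn_ext ρ)) Metric.isOpen_thickening
    (measurable_ext hVc) (measurable_ext hρc)
    (fun x => indicator_nonneg (fun x hx => hV x (hδs hx)) x) (fun x b hb => ?_) hψ
    (hχ.subset (Metric.self_subset_thickening hδ _))
  by_cases hx : x ∈ K
  · simpa only [indicator_of_mem hx, Real.norm_eq_abs] using
      (hN (x, b) ⟨hx, hb⟩).trans (le_max_right _ _)
  · simpa only [indicator_of_notMem hx, zero_mul, abs_zero] using le_max_left 0 N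

end Kato

/-! ### Cutoff functions -/

/-- A smooth step, equal to `0` for `x ≤ ε` and to `1` for `2ε ≤ x`. -/
noncomputable def ramp (ε x : ℝ) : ℝ := Real.smoothTransition (x / ε - 1)

section Ramp

variable {ε x : ℝ}

lemma ramp_nonneg (ε x : ℝ) : 0 ≤ ramp ε x := Real.smoothTransition.nonneg _

lemma ramp_le_one (ε x : ℝ) : ramp ε x ≤ 1 := Real.smoothTransition.le_one _

lemma ramp_eq_zero (hε : 0 < ε) (hx : x ≤ ε) : ramp ε x = 0 :=
  Real.smoothTransition.zero_of_nonpos (sub_nonpos.2 ((div_le_one hε).2 hx))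

lemma ramp_eq_one (hε : 0 < ε) (hx : 2 * ε ≤ x) : ramp ε x = 1 :=
  Real.smoothTransition.one_of_one_le (by rw [le_sub_iff_add_le, le_div_iff₀ hε]; linarith)

@[fun_prop]
lemma contDiff_ramp (ε : ℝ) : ContDiff ℝ 2 (ramp ε) :=
  Real.smoothTransition.contDiff.comp (by fun_prop)

lemma deriv_ramp_eq_zero (hε : 0 < ε) (hx : x ∉ Icc ε (2 * ε)) : deriv (ramp ε) x = 0 := by
  rcases not_and_or.1 hx with hx | hx
  · have h : ramp ε =ᶠ[𝓝 x] fun _ => 0 := by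
      filter_upwards [Iio_mem_nhds (not_le.1 hx)] with y hy using ramp_eq_zero hε hy.le
    rw [h.deriv_eq, deriv_const]
  · have h : ramp ε =ᶠ[𝓝 x] fun _ => 1 := by
      filter_upwards [Ioi_mem_nhds (not_le.1 hx)] with y hy using ramp_eq_one hε hy.le
    rw [h.deriv_eq, deriv_const]

lemma deriv_ramp (ε x : ℝ) :
    deriv (ramp ε) x = deriv Real.smoothTransition (x / ε - 1) * (1 / ε) := by
  have hd : Differentiable ℝ Real.smoothTransition :=
    (Real.smoothTransition.contDiff (n := 1)).differentiable one_ne_zero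
  have e : HasDerivAt (fun x : ℝ => x / ε - 1) (1 / ε) x :=
    ((hasDerivAt_id x).div_const ε).sub_const 1
  exact ((hd (x / ε - 1)).hasDerivAt.comp x e).deriv

lemma exists_abs_deriv_ramp_le : ∃ M, 0 < M ∧ ∀ ε, 0 < ε → ∀ x,
    |deriv (ramp ε) x| ≤ (Icc ε (2 * ε)).indicator (fun _ => M / ε) x := by
  obtain ⟨M, hM⟩ := (isCompact_Icc (a := (0 : ℝ)) (b := 1)).exists_bound_of_continuousOn
    ((Real.smoothTransition.contDiff (n := 1)).continuous_deriv le_rfl).continuousOn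
  refine ⟨max 1 M, by positivity, fun ε hε x => ?_⟩
  by_cases hx : x ∈ Icc ε (2 * ε)
  · have hmem : x / ε - 1 ∈ Icc (0 : ℝ) 1 :=
      ⟨by rw [sub_nonneg, one_le_div hε]; exact hx.1,
        by rw [sub_le_iff_le_add, div_le_iff₀ hε]; linarith [hx.2]⟩
    rw [indicator_of_mem hx, deriv_ramp, abs_mul, abs_of_pos (one_div_pos.2 hε), mul_one_div]
    gcongr
    exact (hM _ hmem).trans (le_max_right _ _)
  · rw [indicator_of_notMem hx, deriv_ramp_eq_zero hε hx, abs_zero]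

end Ramp

/-- A smooth cutoff function on `(0, 1)`, equal to `1` on `[2ε, 1 - 2δ]` and to `0` outside
`[ε, 1 - δ]`. -/
noncomputable def cutoff (ε δ x : ℝ) : ℝ := ramp ε x * ramp δ (1 - x)

section Cutoff

variable {ε δ x : ℝ}

lemma cutoff_nonneg (ε δ x : ℝ) : 0 ≤ cutoff ε δ x := mul_nonneg (ramp_nonneg _ _) (ramp_nonneg _ _)

lemma cutoff_le_one (ε δ x : ℝ) : cutoff ε δ x ≤ 1 :=
  mul_le_one₀ (ramp_le_one _ _) (ramp_nonneg _ _) (ramp_le_one _ _)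

lemma cutoff_eq_zero (hε : 0 < ε) (hδ : 0 < δ) (hx : x ∉ Icc ε (1 - δ)) : cutoff ε δ x = 0 := by
  rcases not_and_or.1 hx with hx | hx
  · rw [cutoff, ramp_eq_zero hε (not_le.1 hx).le, zero_mul]
  · rw [cutoff, ramp_eq_zero hδ (by linarith [not_le.1 hx]), mul_zero]

lemma cutoff_eq_one (hε : 0 < ε) (hδ : 0 < δ) (hx : x ∈ Icc (2 * ε) (1 - 2 * δ)) :
    cutoff ε δ x = 1 := by
  rw [cutoff, ramp_eq_one hε hx.1, ramp_eq_one hδ (by linarith [hx.2]), one_mul]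

lemma isTestFun_cutoff (hε : 0 < ε) (hδ : 0 < δ) : IsTestFun (Ioo 0 1) (cutoff ε δ) :=
  .of_eq_zero_off_Icc ((contDiff_ramp ε).mul ((contDiff_ramp δ).comp (by fun_prop)))
    (cutoff_nonneg ε δ) (Icc_subset_Ioo hε (by linarith)) fun _ => cutoff_eq_zero hε hδ

lemma exists_abs_deriv_cutoff_le : ∃ M, 0 < M ∧ ∀ ε δ, 0 < ε → 0 < δ → ∀ x,
    |deriv (cutoff ε δ) x| ≤ (Icc ε (2 * ε)).indicator (fun _ => M / ε) x +
      (Icc (1 - 2 * δ) (1 - δ)).indicator (fun _ => M / δ) x := by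
  obtain ⟨M, hM, h⟩ := exists_abs_deriv_ramp_le
  refine ⟨M, hM, fun ε δ hε hδ x => ?_⟩
  have hd (η y : ℝ) : HasDerivAt (ramp η) (deriv (ramp η) y) y :=
    ((contDiff_ramp η).differentiable two_ne_zero y).hasDerivAt
  have hprod : deriv (cutoff ε δ) x =
      deriv (ramp ε) x * ramp δ (1 - x) + ramp ε x * (deriv (ramp δ) (1 - x) * -1) :=
    ((hd ε x).mul ((hd δ (1 - x)).comp x ((hasDerivAt_id x).const_sub 1))).deriv
  have hlayer : (Icc δ (2 * δ)).indicator (fun _ => M / δ) (1 - x) =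
      (Icc (1 - 2 * δ) (1 - δ)).indicator (fun _ => M / δ) x := by
    simp only [indicator_apply, mem_Icc]
    congr 1
    exact propext ⟨fun h => ⟨by linarith, by linarith⟩, fun h => ⟨by linarith, by linarith⟩⟩
  calc |deriv (cutoff ε δ) x|
      ≤ |deriv (ramp ε) x| * ramp δ (1 - x) + ramp ε x * |deriv (ramp δ) (1 - x)| := by
        rw [hprod]
        refine (abs_add_le _ _).trans_eq ?_
        rw [abs_mul, abs_mul, abs_mul, abs_neg, abs_one, mul_one, abs_of_nonneg (ramp_nonneg _ _),
          abs_of_nonneg (ramp_nonneg _ _)]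
    _ ≤ |deriv (ramp ε) x| + |deriv (ramp δ) (1 - x)| :=
        add_le_add (mul_le_of_le_one_right (abs_nonneg _) (ramp_le_one _ _))
          (mul_le_of_le_one_left (abs_nonneg _) (ramp_le_one _ _))
    _ ≤ _ := hlayer ▸ add_le_add (h ε hε x) (h δ hδ (1 - x))

lemma exists_integral_abs_deriv_cutoff_le :
    ∃ B : ℝ, ∀ ε δ, 0 < ε → 0 < δ → ∫ x, |deriv (cutoff ε δ) x| ≤ B := by
  obtain ⟨M, -, hM⟩ := exists_abs_deriv_cutoff_le
  refine ⟨M + M, fun ε δ hε hδ => ?_⟩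
  have h_int (a b c : ℝ) : Integrable ((Icc a b).indicator fun _ : ℝ => c) :=
    (integrable_indicator_iff measurableSet_Icc).2 (integrableOn_const (by simp))
  refine (integral_mono (isTestFun_cutoff hε hδ).integrable_deriv.abs
    ((h_int _ _ _).add (h_int _ _ _)) (hM ε δ hε hδ)).trans_eq ?_
  rw [integral_add' (h_int _ _ _) (h_int _ _ _), integral_indicator_const _ measurableSet_Icc,
    integral_indicator_const _ measurableSet_Icc, Real.volume_real_Icc_of_le (by linarith),
    Real.volume_real_Icc_of_le (by linarith), smul_eq_mul, smul_eq_mul]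
  field_simp
  ring

lemma integral_cutoff_le_one (hε : 0 < ε) (hδ : 0 < δ) : ∫ x, cutoff ε δ x ≤ 1 := by
  have hzero : ∀ x ∉ Icc (0 : ℝ) 1, cutoff ε δ x = 0 := fun x hx =>
    (isTestFun_cutoff hε hδ).eq_zero fun h => hx (Ioo_subset_Icc_self h)
  calc ∫ x, cutoff ε δ x = ∫ x in Icc (0 : ℝ) 1, cutoff ε δ x :=
        (setIntegral_eq_integral_of_forall_compl_eq_zero hzero).symm
    _ ≤ ∫ _ in Icc (0 : ℝ) 1, (1 : ℝ) :=
        integral_mono (isTestFun_cutoff hε hδ).integrable.integrableOn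
          (integrableOn_const (by simp)) (cutoff_le_one ε δ)
    _ = 1 := by simp

end Cutoff

/-- A time weight that for positive times is nonincreasing, has slope `-1` on `(0, T)` and vanishes
from `T + 1` on. -/
noncomputable def timeWeight (T t : ℝ) : ℝ :=
  Real.smoothTransition (t + 2) * ((T + 1 - t) * Real.smoothTransition (T + 1 - t))

section TimeWeight

variable {T t : ℝ}

lemma timeWeight_of_pos (T : ℝ) (ht : 0 < t) :
    timeWeight T t = (T + 1 - t) * Real.smoothTransition (T + 1 - t) := by
  rw [timeWeight, Real.smoothTransition.one_of_one_le (x := t + 2) (by linarith), one_mul]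

lemma timeWeight_eq_zero (ht : T + 1 ≤ t) : timeWeight T t = 0 := by
  rw [timeWeight, Real.smoothTransition.zero_of_nonpos (x := T + 1 - t) (by linarith), mul_zero,
    mul_zero]

lemma timeWeight_of_mem (ht : t ∈ Ioo 0 T) : timeWeight T t = T + 1 - t := by
  rw [timeWeight_of_pos T ht.1, Real.smoothTransition.one_of_one_le (by linarith [ht.2]), mul_one]

lemma isTestFun_timeWeight (T : ℝ) : IsTestFun univ (timeWeight T) := by
  have h : ContDiff ℝ 2 Real.smoothTransition := Real.smoothTransition.contDiff
  refine .of_eq_zero_off_Icc (a := -2) (b := T + 1) ?_ (fun t => ?_) (subset_univ _) fun t ht => ?_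
  · exact (h.comp (by fun_prop)).mul (ContDiff.mul (by fun_prop) (h.comp (by fun_prop)))
  · rcases le_total (T + 1) t with ht | ht
    · rw [timeWeight_eq_zero ht]
    · exact mul_nonneg (Real.smoothTransition.nonneg _)
        (mul_nonneg (by linarith) (Real.smoothTransition.nonneg _))
  · rcases not_and_or.1 ht with ht | ht
    · rw [timeWeight, Real.smoothTransition.zero_of_nonpos (x := t + 2) (by linarith [not_le.1 ht]),
        zero_mul]
    · exact timeWeight_eq_zero (not_le.1 ht).le

lemma monotone_mul_smoothTransition : Monotone fun x : ℝ => x * Real.smoothTransition x := by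
  have e : (fun x : ℝ => x * Real.smoothTransition x) =
      fun x => max x 0 * Real.smoothTransition x := funext fun x => by
    rcases le_total x 0 with hx | hx
    · simp [Real.smoothTransition.zero_of_nonpos hx]
    · rw [max_eq_left hx]
  rw [e]
  exact (monotone_id.max monotone_const).mul Real.smoothTransition.monotone
    (fun _ => le_max_right _ _) Real.smoothTransition.nonneg

lemma deriv_timeWeight_nonpos (T : ℝ) (ht : 0 < t) : deriv (timeWeight T) t ≤ 0 := by
  have h : timeWeight T =ᶠ[𝓝 t] fun t => (T + 1 - t) * Real.smoothTransition (T + 1 - t) := by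
    filter_upwards [Ioi_mem_nhds ht] with s hs using timeWeight_of_pos T hs
  rw [h.deriv_eq]
  exact Antitone.deriv_nonpos fun a b hab => monotone_mul_smoothTransition (by linarith)

lemma deriv_timeWeight_of_mem (ht : t ∈ Ioo 0 T) : deriv (timeWeight T) t = -1 := by
  have h : timeWeight T =ᶠ[𝓝 t] fun t => T + 1 - t := by
    filter_upwards [Ioo_mem_nhds ht.1 ht.2] with s hs using timeWeight_of_mem hs
  rw [h.deriv_eq, deriv_const_sub, deriv_id'']

end TimeWeight

/-! ### The weighted `L²` bound -/

lemma abs_integral_bdd_mul_prod_le {A : ℝ × ℝ → ℝ} {C : ℝ} (hA : ∀ z, |A z| ≤ C) {g h : ℝ → ℝ}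
    (hg : Integrable g) (hh : Integrable h) :
    |∫ z : ℝ × ℝ, A z * (g z.1 * h z.2)| ≤ C * ((∫ t, |g t|) * ∫ x, |h x|) := by
  rw [← integral_prod_mul (fun t => |g t|) fun x => |h x|, ← integral_const_mul,
    ← Measure.volume_eq_prod]
  refine norm_integral_le_of_norm_le (f := fun z : ℝ × ℝ => A z * (g z.1 * h z.2))
    ((hg.abs.mul_prod hh.abs).const_mul C) (Eventually.of_forall fun z => ?_)
  rw [Real.norm_eq_abs, abs_mul, abs_mul]
  exact mul_le_mul_of_nonneg_right (hA z) (by positivity)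

section WeightedSquare

variable {p : ℝ} {V ρ u₀ : ℝ → ℝ} {u w : ℝ × ℝ → ℝ} {g h : ℝ → ℝ}

lemma integrable_source_sq {s : Set ℝ} (hs : IsOpen s) (hV : ContinuousOn V s)
    (hρ : ContinuousOn ρ s) (mw : Measurable w) {C : ℝ} (bw : ∀ z, |w z| ≤ C) (hg : Integrable g)
    (hh : IsTestFun s h) :
    Integrable fun z : ℝ × ℝ => V z.2 * (w z - ρ z.2) ^ 2 * (g z.1 * h z.2) := by
  refine ((integrable_bdd_mul mw bw (integrable_source hs hV hρ mw bw hg hh)).sub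
    (integrable_source hs (hV.mul hρ) hρ mw bw hg hh)).congr (Eventually.of_forall fun z => ?_)
  simp only [Pi.sub_apply, Pi.mul_apply]
  ring

variable (hu : IsEntropySolution p V ρ u₀ u) (hu₀ : Measurable u₀)
  (hu₀_mem : ∀ x, u₀ x ∈ Icc (0 : ℝ) 1)
include hu hu₀ hu₀_mem

lemma IsEntropySolution.integral_sub_mul_source_le (hg : IsTestFun univ g)
    (hh : IsTestFun (Ioo 0 1) h) {c : ℝ} (hc : c ∈ Icc (0 : ℝ) 1) :
    ∫ z : ℝ × ℝ, heaviside z.1 * ((extendByDatum u₀ u z - c) *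
        (V z.2 * (extendByDatum u₀ u z - ρ z.2)) * (g z.1 * h z.2)) ≤
      (∫ t, |deriv g t|) * (∫ x, h x) + |2 * p - 1| * ((∫ t, g t) * ∫ x, |deriv h x|) := by
  have hlin : ContDiff ℝ 1 fun v : ℝ => v - c := by fun_prop
  have key := hu.inequality_extendByDatum hu₀ hu₀_mem hg hh
    (isLaxPair_primitive c p hlin fun a b hab => sub_le_sub_right hab c)
  simp only [deriv_primitive c hlin.continuous] at key
  have bw := extendByDatum_mem hu₀_mem hu.2.1
  set w := extendByDatum u₀ u
  have hf := abs_integral_bdd_mul_prod_le (A := fun z => ∫ v in c..w z, (v - c))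
    (fun z => abs_intervalIntegral_le hc (bw z) fun v hv => abs_sub_le_one_of_mem_Icc hv hc)
    hg.integrable_deriv hh.integrable
  have hq := abs_integral_bdd_mul_prod_le
    (A := fun z => heaviside z.1 * ∫ v in c..w z, deriv (fluxJ p) v * (v - c))
    (fun z => (abs_heaviside_mul_le _ _).trans (abs_intervalIntegral_le hc (bw z)
      fun v hv => (abs_mul _ _).trans_le ((mul_le_of_le_one_right (abs_nonneg _)
        (abs_sub_le_one_of_mem_Icc hv hc)).trans (abs_deriv_fluxJ_le p hv))))
    hg.integrable hh.integrable_deriv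
  simp only [abs_of_nonneg (hg.nonneg _), abs_of_nonneg (hh.nonneg _), one_mul] at hf hq
  linarith [le_of_abs_le hf, le_of_abs_le hq]

variable (hV : ContinuousOn V (Ioo 0 1)) (hρ : ContinuousOn ρ (Ioo 0 1))
  (hVnonneg : ∀ x ∈ Ioo (0 : ℝ) 1, 0 ≤ V x)
include hV hρ hVnonneg

lemma IsEntropySolution.integral_source_sq_le (hg : IsTestFun univ g) (hh : IsTestFun (Ioo 0 1) h)
    {c : ℝ} (hc : c ∈ Icc (0 : ℝ) 1) :
    ∫ z : ℝ × ℝ, heaviside z.1 *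
        (V z.2 * (extendByDatum u₀ u z - ρ z.2) ^ 2 * (g z.1 * h z.2)) ≤
      2 * ((∫ t, |deriv g t|) * (∫ x, h x) + |2 * p - 1| * ((∫ t, g t) * ∫ x, |deriv h x|)) +
        (∫ t, g t) * ∫ x, V x * (ρ x - c) ^ 2 * h x := by
  refine le_trans ?_ (add_le_add_left (mul_le_mul_of_nonneg_left
    (hu.integral_sub_mul_source_le hu₀ hu₀_mem hg hh hc) zero_le_two) _)
  have mw := measurable_extendByDatum hu₀ hu.1
  have bw := extendByDatum_mem hu₀_mem hu.2.1
  set w := extendByDatum u₀ u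
  have hH (z : ℝ × ℝ) : |heaviside z.1| ≤ 1 := abs_heaviside_le_one _
  have mH : Measurable fun z : ℝ × ℝ => heaviside z.1 := by fun_prop
  have bw' (z : ℝ × ℝ) : |w z| ≤ 1 := abs_le_one_of_mem_Icc (bw z)
  have I₁ := integrable_bdd_mul mH hH
    (integrable_source_sq isOpen_Ioo hV hρ mw bw' hg.integrable hh)
  have I₂ : Integrable fun z : ℝ × ℝ =>
      heaviside z.1 * ((w z - c) * (V z.2 * (w z - ρ z.2)) * (g z.1 * h z.2)) := by
    simp only [mul_assoc (_ - c)]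
    exact integrable_bdd_mul mH hH (integrable_bdd_mul (mw.sub_const c)
      (fun z => abs_sub_le_one_of_mem_Icc (bw z) hc)
      (integrable_source isOpen_Ioo hV hρ mw bw' hg.integrable hh))
  have I₃ : Integrable fun z : ℝ × ℝ => g z.1 * (V z.2 * (ρ z.2 - c) ^ 2 * h z.2) :=
    hg.integrable.mul_prod (hh.integrable_mul_left isOpen_Ioo
      (hV.mul ((hρ.sub (continuousOn_const (c := c))).pow 2)))
  rw [← integral_const_mul, ← integral_prod_mul g, ← Measure.volume_eq_prod,
    ← integral_add (I₂.const_mul 2) I₃]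
  refine integral_mono I₁ ((I₂.const_mul 2).add I₃) fun z => ?_
  have hw : 0 ≤ V z.2 * (g z.1 * h z.2) := by
    by_cases hz : z.2 ∈ Ioo (0 : ℝ) 1
    · exact mul_nonneg (hVnonneg _ hz) (mul_nonneg (hg.nonneg _) (hh.nonneg _))
    · simp [hh.eq_zero hz]
  have hsq : heaviside z.1 * (w z - ρ z.2) ^ 2 ≤
      2 * (heaviside z.1 * ((w z - c) * (w z - ρ z.2))) + (ρ z.2 - c) ^ 2 := by
    unfold heaviside
    split_ifs <;> nlinarith [sq_nonneg (w z - c), sq_nonneg (ρ z.2 - c)]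
  calc _ = heaviside z.1 * (w z - ρ z.2) ^ 2 * (V z.2 * (g z.1 * h z.2)) := by ring
    _ ≤ _ := mul_le_mul_of_nonneg_right hsq hw
    _ = _ := by ring

end WeightedSquare

lemma setLIntegral_ofReal_le_ofReal_integral {α : Type*} [MeasurableSpace α] {μ : Measure α}
    {f F : α → ℝ} {s : Set α} (hs : MeasurableSet s) (hF : Integrable F μ) (hF₀ : ∀ x, 0 ≤ F x)
    (hfF : ∀ x ∈ s, f x ≤ F x) :
    ∫⁻ x in s, ENNReal.ofReal (f x) ∂μ ≤ ENNReal.ofReal (∫ x, F x ∂μ) := by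
  rw [ofReal_integral_eq_lintegral_ofReal hF (Eventually.of_forall hF₀)]
  exact (setLIntegral_mono' hs fun x hx => ENNReal.ofReal_le_ofReal (hfF x hx)).trans
    (setLIntegral_le_lintegral _ _)

lemma integral_mul_cutoff_le {f : ℝ → ℝ} {s : Set ℝ} {ε δ : ℝ} (hε : 0 < ε) (hδ : 0 < δ)
    (hs : Icc ε (1 - δ) ⊆ s) (hf₀ : ∀ x ∈ Icc ε (1 - δ), 0 ≤ f x)
    (hf : ∫⁻ x in s, ENNReal.ofReal (f x) < ⊤) :
    ∫ x, f x * cutoff ε δ x ≤ (∫⁻ x in s, ENNReal.ofReal (f x)).toReal := by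
  refine (Real.le_norm_self _).trans ((norm_integral_le_lintegral_norm _).trans
    (ENNReal.toReal_mono hf.ne (le_trans ?_ (lintegral_mono_set hs))))
  rw [← lintegral_indicator measurableSet_Icc]
  refine lintegral_mono fun x => ?_
  by_cases hx : x ∈ Icc ε (1 - δ)
  · rw [indicator_of_mem hx, Real.norm_of_nonneg (mul_nonneg (hf₀ x hx) (cutoff_nonneg _ _ _))]
    exact ENNReal.ofReal_le_ofReal (mul_le_of_le_one_right (hf₀ x hx) (cutoff_le_one _ _ _))
  · simp [cutoff_eq_zero hε hδ hx]

section CondV2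

variable {V ρ : ℝ → ℝ}

lemma setLIntegral_Icc_ofReal_lt_top {f : ℝ → ℝ} (hf : ContinuousOn f (Ioo 0 1)) {a b : ℝ}
    (ha : 0 < a) (hb : b < 1) : ∫⁻ x in Icc a b, ENNReal.ofReal (f x) < ⊤ :=
  (hf.mono (Icc_subset_Ioo ha hb)).integrableOn_Icc.lintegral_lt_top

variable (hV : ContinuousOn V (Ioo 0 1)) (hρ : ContinuousOn ρ (Ioo 0 1)) (hV2 : CondV2 V ρ)
include hV2

lemma CondV2.exists_setLIntegral_lt_top :
    ∃ y ∈ Ioo (0 : ℝ) 1, ∫⁻ x in Ioo 0 y, ENNReal.ofReal (V x * (ρ x - ρ 0) ^ 2) < ⊤ ∧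
      ∫⁻ x in Ioo (1 - y) 1, ENNReal.ofReal (V x * (ρ x - ρ 1) ^ 2) < ⊤ := by
  obtain ⟨y, hy, hy_mem⟩ := ((hV2.eventually_lt_const ENNReal.zero_lt_top).and
    (Ioo_mem_nhdsGT one_pos)).exists
  exact ⟨y, hy_mem, ENNReal.add_lt_top.1 hy⟩

include hV hρ

lemma CondV2.setLIntegral_left_lt_top {b : ℝ} (hb : b < 1) :
    ∫⁻ x in Ioc 0 b, ENNReal.ofReal (V x * (ρ x - ρ 0) ^ 2) < ⊤ := by
  obtain ⟨y, hy, hfin, -⟩ := hV2.exists_setLIntegral_lt_top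
  have hcover : Ioc 0 b ⊆ Ioo 0 y ∪ Icc y b := fun x hx =>
    (lt_or_ge x y).imp (fun h => ⟨hx.1, h⟩) fun h => ⟨h, hx.2⟩
  exact (lintegral_mono_set hcover).trans_lt ((lintegral_union_le _ _ _).trans_lt
    (ENNReal.add_lt_top.2 ⟨hfin, setLIntegral_Icc_ofReal_lt_top
      (hV.mul ((hρ.sub continuousOn_const).pow 2)) hy.1 hb⟩))

lemma CondV2.setLIntegral_right_lt_top {a : ℝ} (ha : 0 < a) :
    ∫⁻ x in Ico a 1, ENNReal.ofReal (V x * (ρ x - ρ 1) ^ 2) < ⊤ := by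
  obtain ⟨y, hy, -, hfin⟩ := hV2.exists_setLIntegral_lt_top
  have hcover : Ico a 1 ⊆ Icc a (1 - y) ∪ Ioo (1 - y) 1 := fun x hx =>
    (le_or_gt x (1 - y)).imp (fun h => ⟨hx.1, h⟩) fun h => ⟨h, hx.2⟩
  exact (lintegral_mono_set hcover).trans_lt ((lintegral_union_le _ _ _).trans_lt
    (ENNReal.add_lt_top.2 ⟨setLIntegral_Icc_ofReal_lt_top
      (hV.mul ((hρ.sub continuousOn_const).pow 2)) ha (sub_lt_self 1 hy.1), hfin⟩))

end CondV2

section WeightedSquareFinite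

variable {p : ℝ} {V ρ u₀ : ℝ → ℝ} {u : ℝ × ℝ → ℝ} (hu : IsEntropySolution p V ρ u₀ u)
  (hu₀ : Measurable u₀) (hu₀_mem : ∀ x, u₀ x ∈ Icc (0 : ℝ) 1) (hV : ContinuousOn V (Ioo 0 1))
  (hρ : ContinuousOn ρ (Ioo 0 1)) (hVnonneg : ∀ x ∈ Ioo (0 : ℝ) 1, 0 ≤ V x)
include hu hu₀ hu₀_mem hV hρ hVnonneg

lemma IsEntropySolution.setLIntegral_source_sq_le (T : ℝ) {ε δ c : ℝ} (hε : 0 < ε) (hδ : 0 < δ)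
    (hc : c ∈ Icc (0 : ℝ) 1) :
    ∫⁻ z in Ioo 0 T ×ˢ Icc (2 * ε) (1 - 2 * δ), ENNReal.ofReal (V z.2 * (u z - ρ z.2) ^ 2) ≤
      ENNReal.ofReal (2 * ((∫ t, |deriv (timeWeight T) t|) * (∫ x, cutoff ε δ x) +
          |2 * p - 1| * ((∫ t, timeWeight T t) * ∫ x, |deriv (cutoff ε δ) x|)) +
        (∫ t, timeWeight T t) * ∫ x, V x * (ρ x - c) ^ 2 * cutoff ε δ x) := by
  have hψ := isTestFun_timeWeight T
  have hχ := isTestFun_cutoff hε hδ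
  have hVχ (x : ℝ) : 0 ≤ V x * cutoff ε δ x := by
    by_cases hx : x ∈ Ioo (0 : ℝ) 1
    · exact mul_nonneg (hVnonneg x hx) (cutoff_nonneg _ _ _)
    · simp [hχ.eq_zero hx]
  refine le_trans (setLIntegral_ofReal_le_ofReal_integral
    (measurableSet_Ioo.prod measurableSet_Icc) (integrable_bdd_mul (by fun_prop)
      (fun z => abs_heaviside_le_one z.1) (integrable_source_sq isOpen_Ioo hV hρ
        (measurable_extendByDatum hu₀ hu.1)
        (fun z => abs_le_one_of_mem_Icc (extendByDatum_mem hu₀_mem hu.2.1 z)) hψ.integrable hχ))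
    (fun z => ?_) fun z hz => ?_) (ENNReal.ofReal_le_ofReal
      (hu.integral_source_sq_le hu₀ hu₀_mem hV hρ hVnonneg hψ hχ hc))
  · rw [show ∀ a b c d : ℝ, a * b * (c * d) = b * c * (a * d) by intros; ring]
    exact mul_nonneg (heaviside_mem_Icc _).1
      (mul_nonneg (mul_nonneg (sq_nonneg _) (hψ.nonneg _)) (hVχ _))
  · have hx : z.2 ∈ Ioo (0 : ℝ) 1 := ⟨by linarith [hz.2.1], by linarith [hz.2.2]⟩
    rw [heaviside_of_pos hz.1.1, extendByDatum_of_pos hz.1.1, cutoff_eq_one hε hδ hz.2,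
      timeWeight_of_mem hz.1, one_mul, mul_one]
    exact le_mul_of_one_le_right (mul_nonneg (hVnonneg _ hx) (sq_nonneg _))
      (by linarith [hz.1.2])

lemma IsEntropySolution.setLIntegral_iUnion_source_sq_lt_top (T : ℝ) {c : ℝ}
    (hc : c ∈ Icc (0 : ℝ) 1) {s : Set ℝ}
    (hfin : ∫⁻ x in s, ENNReal.ofReal (V x * (ρ x - c) ^ 2) < ⊤) {ε δ : ℕ → ℝ}
    (hε : ∀ n, 0 < ε n) (hδ : ∀ n, 0 < δ n) (hε_anti : Antitone ε) (hδ_anti : Antitone δ)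
    (hs : ∀ n, Icc (ε n) (1 - δ n) ⊆ s) :
    ∫⁻ z in ⋃ n, Ioo 0 T ×ˢ Icc (2 * ε n) (1 - 2 * δ n),
      ENNReal.ofReal (V z.2 * (u z - ρ z.2) ^ 2) < ⊤ := by
  obtain ⟨B, hB⟩ := exists_integral_abs_deriv_cutoff_le
  have hψ₀ : 0 ≤ ∫ t, timeWeight T t := integral_nonneg (isTestFun_timeWeight T).nonneg
  rw [setLIntegral_iUnion_of_directed]
  · refine (iSup_le fun n => ?_).trans_lt (ENNReal.ofReal_lt_top (r :=
      2 * ((∫ t, |deriv (timeWeight T) t|) * 1 + |2 * p - 1| * ((∫ t, timeWeight T t) * B)) +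
        (∫ t, timeWeight T t) * (∫⁻ x in s, ENNReal.ofReal (V x * (ρ x - c) ^ 2)).toReal))
    refine (hu.setLIntegral_source_sq_le hu₀ hu₀_mem hV hρ hVnonneg T (hε n) (hδ n) hc).trans
      (ENNReal.ofReal_le_ofReal ?_)
    have hweight := integral_mul_cutoff_le (hε n) (hδ n) (hs n) (fun x hx => mul_nonneg
      (hVnonneg x ⟨(hε n).trans_le hx.1, by linarith [hx.2, hδ n]⟩) (sq_nonneg _)) hfin
    gcongr
    · exact integral_cutoff_le_one (hε n) (hδ n)
    · exact hB _ _ (hε n) (hδ n)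
  · refine Monotone.directed_le fun m n hmn => prod_mono le_rfl (Icc_subset_Icc ?_ ?_)
    · linarith [hε_anti hmn]
    · linarith [hδ_anti hmn]

lemma IsEntropySolution.setLIntegral_source_sq_lt_top (hρ₀ : ρ 0 ∈ Icc (0 : ℝ) 1)
    (hρ₁ : ρ 1 ∈ Icc (0 : ℝ) 1) (hV2 : CondV2 V ρ) (T : ℝ) :
    ∫⁻ z in Ioo 0 T ×ˢ Ioo 0 1, ENNReal.ofReal (V z.2 * (u z - ρ z.2) ^ 2) < ⊤ := by
  let e (n : ℕ) : ℝ := 1 / ((n : ℝ) + 1)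
  have he (n : ℕ) : 0 < e n := Nat.one_div_pos_of_nat
  have he_anti : Antitone e := fun m n hmn => Nat.one_div_le_one_div hmn
  have hquarter (_ : ℕ) : (0 : ℝ) < 1 / 4 := by norm_num
  have hleft := hu.setLIntegral_iUnion_source_sq_lt_top hu₀ hu₀_mem hV hρ hVnonneg T hρ₀
    (hV2.setLIntegral_left_lt_top hV hρ (b := 3 / 4) (by norm_num)) he hquarter he_anti
    antitone_const fun n x hx => ⟨(he n).trans_le hx.1, by linarith [hx.2]⟩
  have hright := hu.setLIntegral_iUnion_source_sq_lt_top hu₀ hu₀_mem hV hρ hVnonneg T hρ₁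
    (hV2.setLIntegral_right_lt_top hV hρ (a := 1 / 4) (by norm_num)) hquarter he antitone_const
    he_anti fun n x hx => ⟨hx.1, by linarith [hx.2, he n]⟩
  refine (lintegral_mono_set fun z hz => ?_).trans_lt
    ((lintegral_union_le _ _ _).trans_lt (ENNReal.add_lt_top.2 ⟨hleft, hright⟩))
  rcases le_total z.2 (1 / 2) with hx | hx
  · obtain ⟨n, hn⟩ := exists_nat_one_div_lt (half_pos hz.2.1)
    exact Or.inl (mem_iUnion.2 ⟨n, hz.1, by linarith, by linarith⟩)
  · obtain ⟨n, hn⟩ := exists_nat_one_div_lt (half_pos (sub_pos.2 hz.2.2))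
    exact Or.inr (mem_iUnion.2 ⟨n, hz.1, by linarith, by linarith⟩)

end WeightedSquareFinite

/-! ### Stability up to boundary layers -/

/-- The two strips of width `ε` at distance `ε` from the endpoints of `(0, 1)`; they carry the
derivative of `cutoff ε ε`. -/
def boundaryLayer (ε : ℝ) : Set ℝ := Icc ε (2 * ε) ∪ Icc (1 - 2 * ε) (1 - ε)

lemma measurableSet_boundaryLayer (ε : ℝ) : MeasurableSet (boundaryLayer ε) :=
  measurableSet_Icc.union measurableSet_Icc

lemma boundaryLayer_subset_Ioo {ε : ℝ} (hε : 0 < ε) (hε' : 2 * ε < 1) :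
    boundaryLayer ε ⊆ Ioo 0 1 :=
  union_subset (Icc_subset_Ioo hε hε') (Icc_subset_Ioo (by linarith) (by linarith))

lemma volume_boundaryLayer_le (ε : ℝ) : volume (boundaryLayer ε) ≤ 2 * ENNReal.ofReal ε := by
  refine (measure_union_le _ _).trans_eq ?_
  rw [Real.volume_Icc, Real.volume_Icc, two_mul]
  ring_nf

lemma exists_abs_deriv_cutoff_self_le : ∃ M : ℝ, 0 < M ∧ ∀ ε : ℝ, 0 < ε → ∀ x,
    |deriv (cutoff ε ε) x| ≤ (boundaryLayer ε).indicator (fun _ => M / ε) x := by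
  obtain ⟨M, hM, h⟩ := exists_abs_deriv_cutoff_le
  refine ⟨2 * M, by positivity, fun ε hε x => (h ε ε hε hε x).trans ?_⟩
  have hMε : 0 ≤ M / ε := by positivity
  have hle (s : Set ℝ) : s.indicator (fun _ => M / ε) x ≤ M / ε :=
    indicator_le_self' (fun _ _ => hMε) x
  by_cases hx : x ∈ boundaryLayer ε
  · rw [indicator_of_mem hx, mul_div_assoc, two_mul (M / ε)]
    exact add_le_add (hle _) (hle _)
  · rw [boundaryLayer, mem_union, not_or] at hx
    rw [indicator_of_notMem hx.1, indicator_of_notMem hx.2, add_zero]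
    exact indicator_nonneg (fun _ _ => by positivity) x

lemma exists_abs_timeWeight_mul_deriv_cutoff_le (T : ℝ) : ∃ K : ℝ, 0 ≤ K ∧ ∀ ε : ℝ, 0 < ε →
    ∀ z : ℝ × ℝ, 0 < z.1 → |timeWeight T z.1 * deriv (cutoff ε ε) z.2| ≤
      (Ioo 0 (T + 1) ×ˢ boundaryLayer ε).indicator (fun _ => K / ε) z := by
  obtain ⟨N, hN, hψ, -⟩ := (isTestFun_timeWeight T).exists_bound
  obtain ⟨M, hM, hχ⟩ := exists_abs_deriv_cutoff_self_le
  refine ⟨N * M, by positivity, fun ε hε z hz => ?_⟩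
  rw [abs_mul]
  by_cases hmem : z ∈ Ioo 0 (T + 1) ×ˢ boundaryLayer ε
  · have hχz := hχ ε hε z.2
    rw [indicator_of_mem hmem.2] at hχz
    rw [indicator_of_mem hmem, mul_div_assoc]
    exact mul_le_mul (hψ _) hχz (abs_nonneg _) hN.le
  · rw [indicator_of_notMem hmem]
    rcases le_or_gt (T + 1) z.1 with ht | ht
    · simp [timeWeight_eq_zero ht]
    · have hχz := hχ ε hε z.2
      rw [indicator_of_notMem fun hx => hmem ⟨⟨hz, ht⟩, hx⟩] at hχz
      exact mul_nonpos_of_nonneg_of_nonpos (abs_nonneg _) hχz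

lemma mul_deriv_timeWeight_mul_cutoff_le {T ε δ : ℝ} (hε : 0 < ε) (hδ : 0 < δ) {d : ℝ × ℝ → ℝ}
    (hd : ∀ z, 0 ≤ d z) {z : ℝ × ℝ} (hz : 0 < z.1) :
    d z * (deriv (timeWeight T) z.1 * cutoff ε δ z.2) ≤
      -(Ioo 0 T ×ˢ Icc (2 * ε) (1 - 2 * δ)).indicator d z := by
  by_cases hmem : z ∈ Ioo 0 T ×ˢ Icc (2 * ε) (1 - 2 * δ)
  · rw [indicator_of_mem hmem, deriv_timeWeight_of_mem hmem.1, cutoff_eq_one hε hδ hmem.2]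
    linarith
  · rw [indicator_of_notMem hmem, neg_zero]
    exact mul_nonpos_of_nonneg_of_nonpos (hd z) (mul_nonpos_of_nonpos_of_nonneg
      (deriv_timeWeight_nonpos T hz) (cutoff_nonneg _ _ _))

section Stability

variable {p : ℝ} {V ρ u₀ : ℝ → ℝ} {u₁ u₂ : ℝ × ℝ → ℝ}

lemma exists_katoIntegrand_extendByDatum_le (hu₁_mem : ∀ z, u₁ z ∈ Icc (0 : ℝ) 1)
    (hu₂_mem : ∀ z, u₂ z ∈ Icc (0 : ℝ) 1) (T : ℝ) : ∃ K : ℝ, 0 ≤ K ∧ ∀ ε : ℝ, 0 < ε → ∀ z,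
    katoIntegrand p (extendByDatum u₀ u₁) (extendByDatum u₀ u₂) (timeWeight T) (cutoff ε ε) z ≤
      (Ioo 0 (T + 1) ×ˢ boundaryLayer ε).indicator (fun z => K * (|u₁ z - u₂ z| / ε)) z -
        (Ioo 0 T ×ˢ Icc (2 * ε) (1 - 2 * ε)).indicator (fun z => |u₁ z - u₂ z|) z := by
  obtain ⟨K, hK, hψχ⟩ := exists_abs_timeWeight_mul_deriv_cutoff_le T
  refine ⟨|2 * p - 1| * K, by positivity, fun ε hε z => ?_⟩
  rw [katoIntegrand]
  rcases le_or_gt z.1 0 with ht | ht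
  · rw [extendByDatum_of_nonpos ht, extendByDatum_of_nonpos ht, heaviside_of_nonpos ht,
      indicator_of_notMem fun hz => hz.1.1.not_ge ht,
      indicator_of_notMem fun hz => hz.1.1.not_ge ht]
    simp
  rw [extendByDatum_of_pos ht, extendByDatum_of_pos ht, heaviside_of_pos ht, one_mul]
  refine (add_le_add ?_ ((le_abs_self _).trans ?_)).trans_eq (neg_add_eq_sub _ _)
  · exact mul_deriv_timeWeight_mul_cutoff_le (d := fun z => |u₁ z - u₂ z|) hε hε
      (fun _ => abs_nonneg _) ht
  · rw [abs_mul]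
    refine (mul_le_mul (abs_kruzhkovFlux_le p (hu₁_mem z) (hu₂_mem z)) (hψχ ε hε z ht)
      (abs_nonneg _) (by positivity)).trans_eq ?_
    by_cases hz : z ∈ Ioo 0 (T + 1) ×ˢ boundaryLayer ε
    · rw [indicator_of_mem hz, indicator_of_mem hz]
      ring
    · rw [indicator_of_notMem hz, indicator_of_notMem hz, mul_zero]

lemma integrableOn_boundaryLayer_mul_abs_sub_div (hu₁ : Measurable u₁)
    (hu₁_mem : ∀ z, u₁ z ∈ Icc (0 : ℝ) 1) (hu₂ : Measurable u₂)
    (hu₂_mem : ∀ z, u₂ z ∈ Icc (0 : ℝ) 1) (K T ε : ℝ) :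
    IntegrableOn (fun z => K * (|u₁ z - u₂ z| / ε)) (Ioo 0 T ×ˢ boundaryLayer ε) := by
  have hvol : volume (Ioo 0 T ×ˢ boundaryLayer ε) ≠ ⊤ := by
    rw [Measure.volume_eq_prod, Measure.prod_prod, Real.volume_Ioo]
    exact ENNReal.mul_ne_top ENNReal.ofReal_ne_top (ne_top_of_le_ne_top
      (ENNReal.mul_ne_top ENNReal.ofNat_ne_top ENNReal.ofReal_ne_top) (volume_boundaryLayer_le ε))
  refine ((Measure.integrableOn_of_bounded (M := 1) hvol
    (hu₁.sub hu₂).aestronglyMeasurable (ae_of_all _ fun z => ?_)).abs.div_const ε).const_mul K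
  exact abs_sub_le_one_of_mem_Icc (hu₁_mem z) (hu₂_mem z)

lemma IsEntropySolution.exists_setLIntegral_abs_sub_le (hV : ContinuousOn V (Ioo 0 1))
    (hρ : ContinuousOn ρ (Ioo 0 1)) (hVnonneg : ∀ x ∈ Ioo (0 : ℝ) 1, 0 ≤ V x)
    (hu₀ : Measurable u₀) (hu₀_mem : ∀ x, u₀ x ∈ Icc (0 : ℝ) 1)
    (h₁ : IsEntropySolution p V ρ u₀ u₁) (h₂ : IsEntropySolution p V ρ u₀ u₂) (T : ℝ) :
    ∃ K : ℝ, 0 ≤ K ∧ ∀ ε : ℝ, 0 < ε →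
      ∫⁻ z in Ioo 0 T ×ˢ Icc (2 * ε) (1 - 2 * ε), ENNReal.ofReal |u₁ z - u₂ z| ≤
        ∫⁻ z in Ioo 0 (T + 1) ×ˢ boundaryLayer ε, ENNReal.ofReal (K * (|u₁ z - u₂ z| / ε)) := by
  obtain ⟨K, hK, hkato⟩ := exists_katoIntegrand_extendByDatum_le (p := p) (u₀ := u₀)
    h₁.2.1 h₂.2.1 T
  refine ⟨K, hK, fun ε hε => ?_⟩
  have k₁ := h₁.isKruzhkovOn hV hρ hu₀ hu₀_mem
  have k₂ := h₂.isKruzhkovOn hV hρ hu₀ hu₀_mem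
  have hψ := isTestFun_timeWeight T
  have hχ := isTestFun_cutoff hε hε
  have hS : MeasurableSet (Ioo 0 T ×ˢ Icc (2 * ε) (1 - 2 * ε)) :=
    measurableSet_Ioo.prod measurableSet_Icc
  have hL : MeasurableSet (Ioo 0 (T + 1) ×ˢ boundaryLayer ε) :=
    measurableSet_Ioo.prod (measurableSet_boundaryLayer ε)
  have iL := integrableOn_boundaryLayer_mul_abs_sub_div h₁.1 h₁.2.1 h₂.1 h₂.2.1 K (T + 1) ε
  have ik := integrable_katoIntegrand (p := p) k₁.measurable k₂.measurable k₁.mem_Icc k₂.mem_Icc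
    hψ hχ
  have hnonneg := k₁.integral_katoIntegrand_nonneg k₂ isOpen_Ioo hV hρ hVnonneg hψ hχ
  refine (setLIntegral_ofReal_le_ofReal_integral hS ((iL.integrable_indicator hL).sub ik)
    (fun z => ?_) fun z hz => ?_).trans ?_
  · have := indicator_nonneg (s := Ioo 0 T ×ˢ Icc (2 * ε) (1 - 2 * ε))
      (f := fun z => |u₁ z - u₂ z|) (fun _ _ => abs_nonneg _) z
    exact sub_nonneg.2 ((hkato ε hε z).trans (sub_le_self _ this))
  · have := hkato ε hε z
    rw [indicator_of_mem hz] at this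
    exact le_sub_comm.1 this
  · rw [integral_sub' (iL.integrable_indicator hL) ik, integral_indicator hL,
      ← ofReal_integral_eq_lintegral_ofReal iL (ae_of_all _ fun z => by positivity)]
    exact ENNReal.ofReal_le_ofReal (sub_le_self _ hnonneg)

end Stability

/-! ### Vanishing of the boundary layers -/

lemma setLIntegral_ofReal_abs_le_rpow_mul_rpow {α : Type*} [MeasurableSpace α] {μ : Measure α}
    {s : Set α} (hs : MeasurableSet s) {v d : α → ℝ} (hv : AEMeasurable v (μ.restrict s))
    (hv_pos : ∀ x ∈ s, 0 < v x) (hd : AEMeasurable d (μ.restrict s)) :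
    ∫⁻ x in s, ENNReal.ofReal |d x| ∂μ ≤
      (∫⁻ x in s, ENNReal.ofReal (1 / v x) ∂μ) ^ (1 / 2 : ℝ) *
        (∫⁻ x in s, ENNReal.ofReal (v x * d x ^ 2) ∂μ) ^ (1 / 2 : ℝ) := by
  have hsq {a b : ℝ} (ha : 0 ≤ a) (hab : a ^ 2 = b) :
      ENNReal.ofReal a ^ (2 : ℝ) = ENNReal.ofReal b := by
    rw [ENNReal.rpow_two, ← ENNReal.ofReal_pow ha, hab]
  calc ∫⁻ x in s, ENNReal.ofReal |d x| ∂μ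
      = ∫⁻ x in s, ENNReal.ofReal (√(v x))⁻¹ * ENNReal.ofReal (√(v x) * |d x|) ∂μ := by
        refine setLIntegral_congr_fun hs fun x hx => ?_
        have := Real.sqrt_pos.2 (hv_pos x hx)
        rw [← ENNReal.ofReal_mul (by positivity), inv_mul_cancel_left₀ this.ne']
    _ ≤ _ := ENNReal.lintegral_mul_le_Lp_mul_Lq _ Real.HolderConjugate.two_two
        (by fun_prop) (by fun_prop)
    _ = _ := by
        congr 2 <;> refine setLIntegral_congr_fun hs fun x hx => hsq (by positivity) ?_
        · rw [inv_pow, Real.sq_sqrt (hv_pos x hx).le, one_div]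
        · rw [mul_pow, Real.sq_sqrt (hv_pos x hx).le, sq_abs]

lemma setLIntegral_boundaryLayer_one_div_le {V : ℝ → ℝ}
    (hVnonneg : ∀ x ∈ Ioo (0 : ℝ) 1, 0 ≤ V x) {ε : ℝ} (hε : 0 < ε) (hε' : 3 * ε ≤ 1) :
    ∫⁻ x in boundaryLayer ε, ENNReal.ofReal (1 / V x) ≤
      ∫⁻ x in Ioo 0 (3 * ε), ENNReal.ofReal (1 / V x + 1 / V (1 - x)) := by
  have hsub : Icc ε (2 * ε) ⊆ Ioo 0 (3 * ε) := Icc_subset_Ioo hε (by linarith)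
  have hreflect : ∫⁻ x in Icc (1 - 2 * ε) (1 - ε), ENNReal.ofReal (1 / V x) =
      ∫⁻ x in Icc ε (2 * ε), ENNReal.ofReal (1 / V (1 - x)) := by
    rw [← lintegral_indicator measurableSet_Icc, ← lintegral_indicator measurableSet_Icc,
      ← lintegral_sub_left_eq_self _ (1 : ℝ)]
    refine lintegral_congr fun x => ?_
    simp only [indicator_apply, mem_Icc, sub_le_sub_iff_left, and_comm]
  calc ∫⁻ x in boundaryLayer ε, ENNReal.ofReal (1 / V x)
      ≤ (∫⁻ x in Icc ε (2 * ε), ENNReal.ofReal (1 / V x)) +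
          ∫⁻ x in Icc ε (2 * ε), ENNReal.ofReal (1 / V (1 - x)) :=
        (lintegral_union_le _ _ _).trans_eq (by rw [hreflect])
    _ ≤ (∫⁻ x in Ioo 0 (3 * ε), ENNReal.ofReal (1 / V x)) +
          ∫⁻ x in Ioo 0 (3 * ε), ENNReal.ofReal (1 / V (1 - x)) :=
        add_le_add (lintegral_mono_set hsub) (lintegral_mono_set hsub)
    _ ≤ ∫⁻ x in Ioo 0 (3 * ε), (ENNReal.ofReal (1 / V x) + ENNReal.ofReal (1 / V (1 - x))) :=
        le_lintegral_add _ _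
    _ = _ := setLIntegral_congr_fun measurableSet_Ioo fun x hx => by
        have hx₁ : x < 1 := hx.2.trans_le hε'
        exact (ENNReal.ofReal_add (one_div_nonneg.2 (hVnonneg x ⟨hx.1, hx₁⟩)) (one_div_nonneg.2
          (hVnonneg (1 - x) ⟨sub_pos.2 hx₁, sub_lt_self 1 hx.1⟩))).symm

lemma CondV1.exists_setLIntegral_boundaryLayer_le {V : ℝ → ℝ} (hV1 : CondV1 V)
    (hVnonneg : ∀ x ∈ Ioo (0 : ℝ) 1, 0 ≤ V x) : ∃ C : ENNReal, C ≠ ⊤ ∧ ∀ᶠ ε in 𝓝[>] (0 : ℝ),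
      ∫⁻ x in boundaryLayer ε, ENNReal.ofReal (1 / V x) ≤ C * ENNReal.ofReal ε ^ 2 := by
  obtain ⟨C, hlim, hC⟩ := exists_between hV1
  have hthree : Tendsto (fun ε : ℝ => 3 * ε) (𝓝[>] 0) (𝓝[>] 0) := by
    refine tendsto_nhdsWithin_iff.2 ⟨?_, ?_⟩
    · exact ((continuous_const_mul (3 : ℝ)).tendsto' 0 0 (mul_zero 3)).mono_left nhdsWithin_le_nhds
    · filter_upwards [self_mem_nhdsWithin] with ε hε using mul_pos three_pos (mem_Ioi.1 hε)
  refine ⟨9 * C, ENNReal.mul_ne_top ENNReal.ofNat_ne_top hC.ne, ?_⟩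
  filter_upwards [hthree.eventually (eventually_lt_of_limsup_lt hlim),
    Ioo_mem_nhdsGT (show (0 : ℝ) < 1 / 3 by norm_num)] with ε hlt hε
  refine (setLIntegral_boundaryLayer_one_div_le hVnonneg hε.1 (by linarith [hε.2])).trans ?_
  have hcancel : ENNReal.ofReal ((3 * ε) ^ 2) * ENNReal.ofReal (1 / (3 * ε) ^ 2) = 1 := by
    rw [← ENNReal.ofReal_mul (by positivity), mul_one_div_cancel (by have := hε.1; positivity),
      ENNReal.ofReal_one]
  calc _ = ENNReal.ofReal ((3 * ε) ^ 2) * (ENNReal.ofReal (1 / (3 * ε) ^ 2) *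
        ∫⁻ x in Ioo 0 (3 * ε), ENNReal.ofReal (1 / V x + 1 / V (1 - x))) := by
        rw [← mul_assoc, hcancel, one_mul]
    _ ≤ ENNReal.ofReal ((3 * ε) ^ 2) * C := by gcongr
    _ = 9 * C * ENNReal.ofReal ε ^ 2 := by
        rw [mul_pow, ENNReal.ofReal_mul (by norm_num), ENNReal.ofReal_pow hε.1.le,
          mul_right_comm]
        norm_num

lemma setLIntegral_prod_snd (s t : Set ℝ) {f : ℝ → ENNReal}
    (hf : AEMeasurable f (volume.restrict t)) :
    ∫⁻ z in s ×ˢ t, f z.2 = volume s * ∫⁻ x in t, f x := by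
  rw [Measure.volume_eq_prod, ← Measure.prod_restrict]
  simpa using lintegral_prod_mul (μ := volume.restrict s) (f := fun _ => 1) aemeasurable_const hf

lemma tendsto_setLIntegral_prod_boundaryLayer {F : ℝ × ℝ → ENNReal} {T : ℝ}
    (hF : ∫⁻ z in Ioo 0 T ×ˢ Ioo 0 1, F z ≠ ⊤) :
    Tendsto (fun ε => ∫⁻ z in Ioo 0 T ×ˢ boundaryLayer ε, F z) (𝓝[>] 0) (𝓝 0) := by
  have hvol : Tendsto (fun ε => volume.restrict (Ioo 0 T ×ˢ Ioo (0 : ℝ) 1)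
      (Ioo 0 T ×ˢ boundaryLayer ε)) (𝓝[>] 0) (𝓝 0) := by
    have hlim : Tendsto (fun ε => ENNReal.ofReal T * (2 * ENNReal.ofReal ε)) (𝓝[>] 0) (𝓝 0) := by
      refine tendsto_nhdsWithin_of_tendsto_nhds (Continuous.tendsto' ?_ 0 0 (by simp))
      exact ENNReal.continuous_const_mul ENNReal.ofReal_ne_top |>.comp
        (ENNReal.continuous_const_mul ENNReal.ofNat_ne_top |>.comp ENNReal.continuous_ofReal)
    refine tendsto_of_tendsto_of_tendsto_of_le_of_le tendsto_const_nhds hlim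
      (fun _ => zero_le) fun ε => (Measure.restrict_apply_le _ _).trans ?_
    rw [Measure.volume_eq_prod, Measure.prod_prod, Real.volume_Ioo, sub_zero]
    gcongr
    exact volume_boundaryLayer_le ε
  refine (tendsto_setLIntegral_zero hF hvol).congr' ?_
  filter_upwards [Ioo_mem_nhdsGT (show (0 : ℝ) < 1 / 2 by norm_num)] with ε hε
  rw [Measure.restrict_restrict (measurableSet_Ioo.prod (measurableSet_boundaryLayer ε)),
    inter_eq_left.2 (prod_mono_right (boundaryLayer_subset_Ioo hε.1 (by linarith [hε.2])))]

section Uniqueness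

variable {p : ℝ} {V ρ u₀ : ℝ → ℝ} {u₁ u₂ : ℝ × ℝ → ℝ} (hV : ContinuousOn V (Ioo 0 1))
include hV

lemma setLIntegral_mul_sub_sq_lt_top (hρ : ContinuousOn ρ (Ioo 0 1))
    (hVnonneg : ∀ x ∈ Ioo (0 : ℝ) 1, 0 ≤ V x) (hu₁ : Measurable u₁) {T : ℝ}
    (h₁ : ∫⁻ z in Ioo 0 T ×ˢ Ioo 0 1, ENNReal.ofReal (V z.2 * (u₁ z - ρ z.2) ^ 2) < ⊤)
    (h₂ : ∫⁻ z in Ioo 0 T ×ˢ Ioo 0 1, ENNReal.ofReal (V z.2 * (u₂ z - ρ z.2) ^ 2) < ⊤) :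
    ∫⁻ z in Ioo 0 T ×ˢ Ioo 0 1, ENNReal.ofReal (V z.2 * (u₁ z - u₂ z) ^ 2) < ⊤ := by
  have hB : MeasurableSet (Ioo (0 : ℝ) T ×ˢ Ioo (0 : ℝ) 1) :=
    measurableSet_Ioo.prod measurableSet_Ioo
  have aemeasurable_snd {f : ℝ → ℝ} (hf : ContinuousOn f (Ioo 0 1)) :
      AEMeasurable (fun z : ℝ × ℝ => f z.2) (volume.restrict (Ioo 0 T ×ˢ Ioo 0 1)) :=
    (hf.comp continuousOn_snd fun z hz => hz.2).aemeasurable hB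
  have hmeas : AEMeasurable (fun z => ENNReal.ofReal (V z.2 * (u₁ z - ρ z.2) ^ 2))
      (volume.restrict (Ioo 0 T ×ˢ Ioo 0 1)) :=
    ((aemeasurable_snd hV).mul
      ((hu₁.aemeasurable.sub (aemeasurable_snd hρ)).pow_const 2)).ennreal_ofReal
  calc _ ≤ ∫⁻ z in Ioo 0 T ×ˢ Ioo 0 1, 2 * (ENNReal.ofReal (V z.2 * (u₁ z - ρ z.2) ^ 2) +
        ENNReal.ofReal (V z.2 * (u₂ z - ρ z.2) ^ 2)) := by
        refine setLIntegral_mono' hB fun z hz => ?_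
        have hv := hVnonneg z.2 hz.2
        rw [← ENNReal.ofReal_add (by positivity) (by positivity), ← ENNReal.ofReal_ofNat 2,
          ← ENNReal.ofReal_mul zero_le_two]
        refine ENNReal.ofReal_le_ofReal ?_
        nlinarith [mul_nonneg hv (sq_nonneg (u₁ z - ρ z.2 + (u₂ z - ρ z.2)))]
    _ = 2 * (_ + _) := by
        rw [lintegral_const_mul' _ _ ENNReal.ofNat_ne_top, lintegral_add_left' hmeas]
    _ < ⊤ := ENNReal.mul_lt_top ENNReal.ofNat_lt_top (ENNReal.add_lt_top.2 ⟨h₁, h₂⟩)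

variable (hVpos : ∀ x ∈ Ioo (0 : ℝ) 1, 0 < V x)
include hVpos

lemma setLIntegral_boundaryLayer_abs_sub_le (hu₁ : Measurable u₁) (hu₂ : Measurable u₂)
    {K T ε : ℝ} (hK : 0 ≤ K) (hε : ε ∈ Ioo (0 : ℝ) (1 / 2)) {C : ENNReal}
    (hC : ∫⁻ x in boundaryLayer ε, ENNReal.ofReal (1 / V x) ≤ C * ENNReal.ofReal ε ^ 2) :
    ∫⁻ z in Ioo 0 T ×ˢ boundaryLayer ε, ENNReal.ofReal (K * (|u₁ z - u₂ z| / ε)) ≤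
      ENNReal.ofReal K * (ENNReal.ofReal T * C) ^ (1 / 2 : ℝ) *
        (∫⁻ z in Ioo 0 T ×ˢ boundaryLayer ε,
          ENNReal.ofReal (V z.2 * (u₁ z - u₂ z) ^ 2)) ^ (1 / 2 : ℝ) := by
  have hL : MeasurableSet (Ioo 0 T ×ˢ boundaryLayer ε) :=
    measurableSet_Ioo.prod (measurableSet_boundaryLayer ε)
  have hsub := boundaryLayer_subset_Ioo hε.1 (by linarith [hε.2])
  have mV := (hV.mono hsub).aemeasurable (μ := volume) (measurableSet_boundaryLayer ε)
  have mV' : AEMeasurable (fun z : ℝ × ℝ => V z.2)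
      (volume.restrict (Ioo 0 T ×ˢ boundaryLayer ε)) :=
    (hV.comp continuousOn_snd fun z hz => hsub hz.2).aemeasurable hL
  have hε₀ : ENNReal.ofReal ε ≠ 0 := (ENNReal.ofReal_pos.2 hε.1).ne'
  have hCS := setLIntegral_ofReal_abs_le_rpow_mul_rpow (d := fun z => u₁ z - u₂ z) hL mV'
    (fun z hz => hVpos _ (hsub hz.2)) (hu₁.sub hu₂).aemeasurable
  rw [setLIntegral_prod_snd (Ioo 0 T) (boundaryLayer ε) (f := fun x => ENNReal.ofReal (1 / V x))
    (by fun_prop), Real.volume_Ioo, sub_zero] at hCS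
  have hroot : (ENNReal.ofReal T * (C * ENNReal.ofReal ε ^ 2)) ^ (1 / 2 : ℝ) =
      (ENNReal.ofReal T * C) ^ (1 / 2 : ℝ) * ENNReal.ofReal ε := by
    rw [← mul_assoc, ENNReal.mul_rpow_of_nonneg _ _ (by norm_num), ← ENNReal.rpow_natCast_mul]
    norm_num
  set I := (∫⁻ z in Ioo 0 T ×ˢ boundaryLayer ε,
    ENNReal.ofReal (V z.2 * (u₁ z - u₂ z) ^ 2)) ^ (1 / 2 : ℝ)
  calc _ = ENNReal.ofReal K * (ENNReal.ofReal ε)⁻¹ *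
        ∫⁻ z in Ioo 0 T ×ˢ boundaryLayer ε, ENNReal.ofReal |u₁ z - u₂ z| := by
        rw [← lintegral_const_mul' _ _ (ENNReal.mul_ne_top ENNReal.ofReal_ne_top
          (ENNReal.inv_ne_top.2 hε₀))]
        refine lintegral_congr fun z => ?_
        rw [ENNReal.ofReal_mul hK, ENNReal.ofReal_div_of_pos hε.1, div_eq_mul_inv, mul_assoc,
          mul_comm (ENNReal.ofReal ε)⁻¹]
    _ ≤ ENNReal.ofReal K * (ENNReal.ofReal ε)⁻¹ *
        ((ENNReal.ofReal T * (C * ENNReal.ofReal ε ^ 2)) ^ (1 / 2 : ℝ) * I) := by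
        gcongr
        exact hCS.trans (by gcongr)
    _ = ENNReal.ofReal K * (ENNReal.ofReal T * C) ^ (1 / 2 : ℝ) *
        ((ENNReal.ofReal ε)⁻¹ * ENNReal.ofReal ε) * I := by
        rw [hroot]
        ring
    _ = _ := by rw [ENNReal.inv_mul_cancel hε₀ ENNReal.ofReal_ne_top, mul_one]

variable (hρ : ContinuousOn ρ (Ioo 0 1)) (hρ₀ : ρ 0 ∈ Icc (0 : ℝ) 1)
  (hρ₁ : ρ 1 ∈ Icc (0 : ℝ) 1) (hV1 : CondV1 V) (hV2 : CondV2 V ρ) (hu₀ : Measurable u₀)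
  (hu₀_mem : ∀ x, u₀ x ∈ Icc (0 : ℝ) 1) (h₁ : IsEntropySolution p V ρ u₀ u₁)
  (h₂ : IsEntropySolution p V ρ u₀ u₂)
include hρ hρ₀ hρ₁ hV1 hV2 hu₀ hu₀_mem h₁ h₂

lemma IsEntropySolution.setLIntegral_abs_sub_eq_zero (T : ℝ) {a : ℝ} (ha : 0 < a) :
    ∫⁻ z in Ioo 0 T ×ˢ Icc a (1 - a), ENNReal.ofReal |u₁ z - u₂ z| = 0 := by
  have hVnonneg (x : ℝ) (hx : x ∈ Ioo (0 : ℝ) 1) : 0 ≤ V x := (hVpos x hx).le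
  obtain ⟨K, hK, hstab⟩ := h₁.exists_setLIntegral_abs_sub_le hV hρ hVnonneg hu₀ hu₀_mem h₂ T
  obtain ⟨C, hC, hlayer⟩ := hV1.exists_setLIntegral_boundaryLayer_le hVnonneg
  have hfin := setLIntegral_mul_sub_sq_lt_top hV hρ hVnonneg h₁.1
    (h₁.setLIntegral_source_sq_lt_top hu₀ hu₀_mem hV hρ hVnonneg hρ₀ hρ₁ hV2 (T + 1))
    (h₂.setLIntegral_source_sq_lt_top hu₀ hu₀_mem hV hρ hVnonneg hρ₀ hρ₁ hV2 (T + 1))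
  have hlim := ENNReal.Tendsto.const_mul (a := ENNReal.ofReal K *
      (ENNReal.ofReal (T + 1) * C) ^ (1 / 2 : ℝ))
    ((tendsto_setLIntegral_prod_boundaryLayer hfin.ne).ennrpow_const (1 / 2))
    (Or.inr (ENNReal.mul_ne_top ENNReal.ofReal_ne_top (ENNReal.rpow_ne_top_of_nonneg (by norm_num)
      (ENNReal.mul_ne_top ENNReal.ofReal_ne_top hC))))
  rw [ENNReal.zero_rpow_of_pos one_half_pos, mul_zero] at hlim
  refine le_antisymm (ge_of_tendsto hlim ?_) zero_le
  filter_upwards [hlayer, Ioo_mem_nhdsGT (show (0 : ℝ) < 1 / 2 by norm_num),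
    Ioo_mem_nhdsGT (half_pos ha)] with ε hε hε_half hεa
  refine (lintegral_mono_set (prod_mono_right (Icc_subset_Icc ?_ ?_))).trans
    ((hstab ε hε_half.1).trans
      (setLIntegral_boundaryLayer_abs_sub_le hV hVpos h₁.1 h₂.1 hK hε_half hε)) <;>
  linarith [hεa.2]

end Uniqueness

lemma Ioi_prod_Ioo_subset_iUnion : Ioi (0 : ℝ) ×ˢ Ioo (0 : ℝ) 1 ⊆
    ⋃ n : ℕ, Ioo 0 ((n : ℝ) + 1) ×ˢ Icc (1 / ((n : ℝ) + 1)) (1 - 1 / ((n : ℝ) + 1)) := by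
  rintro z ⟨ht, hx⟩
  have htime : ∀ᶠ n : ℕ in atTop, z.1 < n + 1 :=
    (tendsto_natCast_atTop_atTop.atTop_add tendsto_const_nhds).eventually_gt_atTop z.1
  have hspace {y : ℝ} (hy : 0 < y) : ∀ᶠ n : ℕ in atTop, 1 / ((n : ℝ) + 1) < y :=
    tendsto_one_div_add_atTop_nhds_zero_nat.eventually_lt_const hy
  obtain ⟨n, hn, hl, hr⟩ := (htime.and ((hspace hx.1).and (hspace (sub_pos.2 hx.2)))).exists
  exact mem_iUnion.2 ⟨n, ⟨ht, hn⟩, hl.le, by linarith⟩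

theorem entropy_solution_unique_general (p : ℝ) (V ρ : ℝ → ℝ)
    (hV : ContinuousOn V (Ioo 0 1)) (hVpos : ∀ x ∈ Ioo (0 : ℝ) 1, 0 < V x) (hV1 : CondV1 V)
    (hρ : ContinuousOn ρ (Ioo 0 1)) (hρ₀ : ρ 0 ∈ Icc (0 : ℝ) 1) (hρ₁ : ρ 1 ∈ Icc (0 : ℝ) 1)
    (hV2 : CondV2 V ρ) (u₀ : ℝ → ℝ) (hu₀ : Measurable u₀)
    (hu₀_mem : ∀ x, u₀ x ∈ Icc (0 : ℝ) 1) (u₁ u₂ : ℝ × ℝ → ℝ)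
    (h₁ : IsEntropySolution p V ρ u₀ u₁) (h₂ : IsEntropySolution p V ρ u₀ u₂) :
    ∀ᵐ z ∂(volume.restrict (Ioi (0 : ℝ) ×ˢ Ioo (0 : ℝ) 1)), u₁ z = u₂ z := by
  refine ae_restrict_of_ae_restrict_of_subset Ioi_prod_Ioo_subset_iUnion ?_
  rw [ae_restrict_iUnion_iff]
  intro n
  have hmeas : Measurable fun z => ENNReal.ofReal |u₁ z - u₂ z| :=
    (h₁.1.sub h₂.1).abs.ennreal_ofReal
  have hzero := h₁.setLIntegral_abs_sub_eq_zero hV hVpos hρ hρ₀ hρ₁ hV1 hV2 hu₀ hu₀_mem h₂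
    (n + 1) (Nat.one_div_pos_of_nat (n := n))
  filter_upwards [(lintegral_eq_zero_iff hmeas).1 hzero] with z hz
  exact sub_eq_zero.1 (abs_nonpos_iff.1 (ENNReal.ofReal_eq_zero.1 hz))

/-- uniqueness of entropy solutions under (V1) and (V2). -/
theorem entropy_solution_unique (p : ℝ) (hp : p ∈ Ioc (1 / 2 : ℝ) 1)
    (V ρ : ℝ → ℝ)
    (hV : ContDiffOn ℝ 1 V (Ioo 0 1)) (hVpos : ∀ x ∈ Ioo (0 : ℝ) 1, 0 < V x)
    (hV1 : CondV1 V)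
    (hρ : ContDiffOn ℝ 1 ρ (Icc 0 1)) (hρmem : ∀ x ∈ Icc (0 : ℝ) 1, ρ x ∈ Ioo (0 : ℝ) 1)
    (hV2 : CondV2 V ρ)
    (u₀ : ℝ → ℝ) (hu₀ : Measurable u₀) (hu₀mem : ∀ x, u₀ x ∈ Icc (0 : ℝ) 1)
    (u₁ u₂ : ℝ × ℝ → ℝ)
    (h₁ : IsEntropySolution p V ρ u₀ u₁) (h₂ : IsEntropySolution p V ρ u₀ u₂) :
    ∀ᵐ z ∂(volume.restrict (Ioi (0 : ℝ) ×ˢ Ioo (0 : ℝ) 1)), u₁ z = u₂ z := by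
  exact entropy_solution_unique_general p V ρ hV.continuousOn hVpos hV1
    (hρ.continuousOn.mono Ioo_subset_Icc_self) (Ioo_subset_Icc_self (hρmem 0 (by simp)))
    (Ioo_subset_Icc_self (hρmem 1 (by simp))) hV2 u₀ hu₀ hu₀mem u₁ u₂ h₁ h₂
end

section
/- Let T > 0, let V : (0,1) → (0,∞) be continuous with ∫₀^y V(x) dx = ∞ and ∫_{1−y}^1 V(x) dx = ∞ for every y ∈ (0,1), and let ρ : [0,1] → (0,1) be continuous. Suppose u : (0,T)×[0,1] → [0,1] is measurable, x ↦ u(t,x) is continuous on [0,1] for every t ∈ (0,T), and ∫₀^T ∫₀¹ V(x)(u(t,x) − ρ(x))² dx dt < ∞. Then u(t,0) = ρ(0) and u(t,1) = ρ(1) for almost every t ∈ (0,T). -/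
open MeasureTheory Set Filter Topology

/-!
View `V(x) dx` as a measure `ν` on `(0,1)`. By Tonelli, for almost every `t` the function
`f = |u(t,·) - ρ|²` satisfies `∫ f dν < ∞`. At either endpoint `f` has a limit `c`; if `c > 0`, then
`f` exceeds some `ε > 0` near that endpoint, so Markov's inequality gives that neighbourhood finite
`ν`-mass, contradicting the non-integrability of `V` there. Hence `c = 0`.
-/

open scoped ENNReal

section FilterLimits

variable {α X E : Type*} [MeasurableSpace α] [MeasurableSpace X] [NormedAddCommGroup E]
  {μ : Measure α} {ν : Measure X} {l : Filter X}

theorem eq_zero_of_tendsto_of_lintegral_ne_top {f : X → ℝ≥0∞} {c : ℝ≥0∞}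
    (hf : AEMeasurable f ν) (hfin : ∫⁻ x, f x ∂ν ≠ ∞) (hν : ¬ν.FiniteAtFilter l)
    (hlim : Tendsto f l (𝓝 c)) : c = 0 := by
  by_contra hc
  obtain ⟨ε, hε, hεc⟩ := exists_between (pos_iff_ne_zero.2 hc)
  have hmem : {x | ε ≤ f x} ∈ l := hlim.eventually (Ici_mem_nhds hεc)
  have hmass : ν {x | ε ≤ f x} < ∞ :=
    (meas_ge_le_lintegral_div hf hε.ne' (hεc.trans_le le_top).ne).trans_lt
      (ENNReal.div_lt_top hfin hε.ne')
  exact hν ⟨_, hmem, hmass⟩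

theorem ae_aemeasurable_and_lintegral_ne_top [SFinite ν] {f : α × X → ℝ≥0∞}
    (hf : AEMeasurable f (μ.prod ν)) (hfin : ∫⁻ z, f z ∂μ.prod ν ≠ ∞) :
    ∀ᵐ t ∂μ, AEMeasurable (fun x => f (t, x)) ν ∧ ∫⁻ x, f (t, x) ∂ν ≠ ∞ := by
  rw [lintegral_prod _ hf] at hfin
  filter_upwards [hf.aestronglyMeasurable.prodMk_left, ae_lt_top' hf.lintegral_prod_right' hfin]
    with t hmeas hlt using ⟨hmeas.aemeasurable, hlt.ne⟩

theorem ae_forall_tendsto_eq_of_lintegral_ne_top [SFinite ν] {p : ℝ} (hp : 0 < p)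
    {u : α × X → E} {ρ : X → E} {r : E} (hu : AEStronglyMeasurable u (μ.prod ν))
    (hρ : AEStronglyMeasurable ρ ν) (hfin : ∫⁻ z, ‖u z - ρ z.2‖ₑ ^ p ∂μ.prod ν ≠ ∞)
    (hν : ¬ν.FiniteAtFilter l) (hlim : Tendsto ρ l (𝓝 r)) :
    ∀ᵐ t ∂μ, ∀ v, Tendsto (fun x => u (t, x)) l (𝓝 v) → v = r := by
  have hmeas : AEMeasurable (fun z => ‖u z - ρ z.2‖ₑ ^ p) (μ.prod ν) :=
    (hu.sub hρ.comp_snd).enorm.pow_const p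
  filter_upwards [ae_aemeasurable_and_lintegral_ne_top hmeas hfin] with t ⟨htmeas, htfin⟩ v hv
  have hzero : ‖v - r‖ₑ ^ p = 0 :=
    eq_zero_of_tendsto_of_lintegral_ne_top htmeas htfin hν ((hv.sub hlim).enorm.ennrpow_const p)
  exact sub_eq_zero.1 (enorm_eq_zero.1 ((ENNReal.rpow_eq_zero_iff_of_pos hp).1 hzero))

theorem ae_forall_tendsto_eq_of_lintegral_weight_mul_ne_top [SFinite μ] [SFinite ν] {p : ℝ}
    (hp : 0 < p) {w : X → ℝ≥0∞} {u : α × X → E} {ρ : X → E} {r : E} (hw : AEMeasurable w ν)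
    (hu : AEStronglyMeasurable u (μ.prod ν)) (hρ : AEStronglyMeasurable ρ ν)
    (hfin : ∫⁻ z, w z.2 * ‖u z - ρ z.2‖ₑ ^ p ∂μ.prod ν ≠ ∞)
    (hν : ¬(ν.withDensity w).FiniteAtFilter l) (hlim : Tendsto ρ l (𝓝 r)) :
    ∀ᵐ t ∂μ, ∀ v, Tendsto (fun x => u (t, x)) l (𝓝 v) → v = r := by
  have hprod : μ.prod (ν.withDensity w) = (μ.prod ν).withDensity fun z => w z.2 :=
    prod_withDensity_right₀ hw
  have hmeas : AEMeasurable (fun z => ‖u z - ρ z.2‖ₑ ^ p) (μ.prod ν) :=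
    (hu.sub hρ.comp_snd).enorm.pow_const p
  refine ae_forall_tendsto_eq_of_lintegral_ne_top hp ?_
    (hρ.mono_ac (withDensity_absolutelyContinuous _ _)) ?_ hν hlim
  · rw [hprod]
    exact hu.mono_ac (withDensity_absolutelyContinuous _ _)
  · rwa [hprod, lintegral_withDensity_eq_lintegral_mul₀ hw.comp_snd hmeas]

end FilterLimits

theorem withDensity_restrict_apply_of_subset {X : Type*} [MeasurableSpace X] (ν : Measure X)
    (w : X → ℝ≥0∞) {s t : Set X} (hs : MeasurableSet s) (hst : s ⊆ t) :
    (ν.restrict t).withDensity w s = ∫⁻ x in s, w x ∂ν := by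
  rw [withDensity_apply _ hs, Measure.restrict_restrict_of_subset hst]

section Endpoints

variable {R : Type*} [TopologicalSpace R] [LinearOrder R] {a b : R}

theorem tendsto_endpoints_of_continuousOn_Icc [OrderClosedTopology R] {Y : Type*}
    [TopologicalSpace Y] {f : R → Y} (hab : a < b) (hf : ContinuousOn f (Icc a b)) :
    Tendsto f (𝓝[>] a) (𝓝 (f a)) ∧ Tendsto f (𝓝[<] b) (𝓝 (f b)) :=
  ⟨(continuousWithinAt_Ioo_iff_Ioi hab).1
      ((hf a (left_mem_Icc.2 hab.le)).mono Ioo_subset_Icc_self),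
    (continuousWithinAt_Ioo_iff_Iio hab).1
      ((hf b (right_mem_Icc.2 hab.le)).mono Ioo_subset_Icc_self)⟩

variable [OrderTopology R] [DenselyOrdered R] [MeasurableSpace R] {ν : Measure R}

theorem not_finiteAtFilter_nhdsGT (hab : a < b) (h : ∀ y ∈ Ioo a b, ν (Ioo a y) = ∞) :
    ¬ν.FiniteAtFilter (𝓝[>] a) := by
  rintro ⟨s, hs, hfin⟩
  obtain ⟨c, hac, hcb⟩ := exists_between hab
  obtain ⟨y, ⟨hay, hyc⟩, hys⟩ := (mem_nhdsGT_iff_exists_mem_Ioc_Ioo_subset hac).1 hs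
  exact ((measure_mono hys).trans_lt hfin).ne (h y ⟨hay, hyc.trans_lt hcb⟩)

theorem not_finiteAtFilter_nhdsLT (hab : a < b) (h : ∀ y ∈ Ioo a b, ν (Ioo y b) = ∞) :
    ¬ν.FiniteAtFilter (𝓝[<] b) := by
  rintro ⟨s, hs, hfin⟩
  obtain ⟨c, hac, hcb⟩ := exists_between hab
  obtain ⟨y, ⟨hcy, hyb⟩, hys⟩ := (mem_nhdsLT_iff_exists_mem_Ico_Ioo_subset hcb).1 hs
  exact ((measure_mono hys).trans_lt hfin).ne (h y ⟨hac.trans_le hcy, hyb⟩)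

end Endpoints

theorem ofReal_mul_sq (v r : ℝ) :
    ENNReal.ofReal (v * r ^ 2) = ENNReal.ofReal v * ‖r‖ₑ ^ (2 : ℝ) := by
  rw [ENNReal.ofReal_mul' (sq_nonneg r), ENNReal.rpow_two, Real.enorm_eq_ofReal_abs,
    ← ENNReal.ofReal_pow (abs_nonneg r), sq_abs]

theorem boundary_values_attained_general {α E : Type*} [MeasurableSpace α]
    [NormedAddCommGroup E] {μ : Measure α} [SFinite μ] {a b p : ℝ} (hab : a < b) (hp : 0 < p)
    {V : ℝ → ℝ≥0∞} {ρ : ℝ → E} {u : α × ℝ → E}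
    (hV : AEMeasurable V (volume.restrict (Ioo a b)))
    (hVa : ∀ y ∈ Ioo a b, ∫⁻ x in Ioo a y, V x = ∞)
    (hVb : ∀ y ∈ Ioo a b, ∫⁻ x in Ioo y b, V x = ∞)
    (hρ : ContinuousOn ρ (Icc a b))
    (hu : AEStronglyMeasurable u (μ.prod (volume.restrict (Ioo a b))))
    (hucont : ∀ᵐ t ∂μ, ContinuousOn (fun x => u (t, x)) (Icc a b))
    (henergy : ∫⁻ z, V z.2 * ‖u z - ρ z.2‖ₑ ^ p ∂μ.prod (volume.restrict (Ioo a b)) ≠ ∞) :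
    ∀ᵐ t ∂μ, u (t, a) = ρ a ∧ u (t, b) = ρ b := by
  have hνa : ¬((volume.restrict (Ioo a b)).withDensity V).FiniteAtFilter (𝓝[>] a) :=
    not_finiteAtFilter_nhdsGT hab fun y hy => (withDensity_restrict_apply_of_subset _ _
      measurableSet_Ioo (Ioo_subset_Ioo_right hy.2.le)).trans (hVa y hy)
  have hνb : ¬((volume.restrict (Ioo a b)).withDensity V).FiniteAtFilter (𝓝[<] b) :=
    not_finiteAtFilter_nhdsLT hab fun y hy => (withDensity_restrict_apply_of_subset _ _
      measurableSet_Ioo (Ioo_subset_Ioo_left hy.1.le)).trans (hVb y hy)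
  have hρmeas : AEStronglyMeasurable ρ (volume.restrict (Ioo a b)) :=
    (hρ.mono Ioo_subset_Icc_self).aestronglyMeasurable measurableSet_Ioo
  obtain ⟨hρa, hρb⟩ := tendsto_endpoints_of_continuousOn_Icc hab hρ
  filter_upwards [hucont,
    ae_forall_tendsto_eq_of_lintegral_weight_mul_ne_top hp hV hu hρmeas henergy hνa hρa,
    ae_forall_tendsto_eq_of_lintegral_weight_mul_ne_top hp hV hu hρmeas henergy hνb hρb]
    with t hcont ha hb
  obtain ⟨hua, hub⟩ := tendsto_endpoints_of_continuousOn_Icc hab hcont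
  exact ⟨ha _ hua, hb _ hub⟩

/-- if `V` is non-integrable near both endpoints and `u` is spatially
continuous with finite energy `∬ V(x)(u−ρ)² < ∞`, then `u(t,0) = ρ(0)` and
`u(t,1) = ρ(1)` for almost every `t ∈ (0,T)`. -/
theorem boundary_values_attained (T : ℝ) (hT : 0 < T) (V ρ : ℝ → ℝ)
    (hVcont : ContinuousOn V (Ioo 0 1)) (hVpos : ∀ x ∈ Ioo (0 : ℝ) 1, 0 < V x)
    (hVnonint : ∀ y ∈ Ioo (0 : ℝ) 1,
      (∫⁻ x in Ioo (0 : ℝ) y, ENNReal.ofReal (V x)) = ⊤ ∧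
      (∫⁻ x in Ioo (1 - y) (1 : ℝ), ENNReal.ofReal (V x)) = ⊤)
    (hρcont : ContinuousOn ρ (Icc 0 1)) (hρmem : ∀ x ∈ Icc (0 : ℝ) 1, ρ x ∈ Ioo (0 : ℝ) 1)
    (u : ℝ × ℝ → ℝ) (humeas : Measurable u) (humem : ∀ z : ℝ × ℝ, u z ∈ Icc (0 : ℝ) 1)
    (hucont : ∀ t ∈ Ioo (0 : ℝ) T, ContinuousOn (fun x => u (t, x)) (Icc 0 1))
    (henergy : (∫⁻ z in Ioo (0 : ℝ) T ×ˢ Ioo (0 : ℝ) 1,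
      ENNReal.ofReal (V z.2 * (u z - ρ z.2) ^ 2)) < ⊤) :
    ∀ᵐ t ∂(volume.restrict (Ioo (0 : ℝ) T)), u (t, 0) = ρ 0 ∧ u (t, 1) = ρ 1 := by
  simp only [ofReal_mul_sq, Measure.volume_eq_prod, ← Measure.prod_restrict] at henergy
  exact boundary_values_attained_general one_pos two_pos
    (hVcont.aemeasurable measurableSet_Ioo).ennreal_ofReal (fun y hy => (hVnonint y hy).1)
    (fun y hy => by simpa using (hVnonint (1 - y) ⟨by linarith [hy.2], by linarith [hy.1]⟩).2)
    hρcont humeas.aestronglyMeasurable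
    (ae_restrict_of_forall_mem measurableSet_Ioo hucont) henergy.ne
end
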